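/- Let Ω be a non-convex quadrilateral with reflex interior angle β ∈ (π, 2π), and let d(x) = dist(x, ∂Ω). Then for every u ∈ C_c^∞(Ω) one has ∫_Ω |∇u(x)|² dx ≥ c_β ∫_Ω u(x)²/d(x)² dx. -/

import Mathlib

open Real MeasureTheory Set

noncomputable abbrev E2 := EuclideanSpace ℝ (Fin 2)

/-- `c` solves the Hardy-constant equation for the angle `β`. -/
def hardyEq (c β : ℝ) : Prop :=
  Real.sqrt c * Real.tan (Real.sqrt c * ((β - Real.pi) / 2)) =
    2 * (Real.Gamma ((3 + Real.sqrt (1 - 4 * c)) / 4) /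
         Real.Gamma ((1 + Real.sqrt (1 - 4 * c)) / 4)) ^ 2

/-- `βcr` is the critical angle: the unique angle in `(π, 2π)` with
`tan((βcr − π)/4) = 4 (Γ(3/4)/Γ(1/4))²`. -/
def isBetaCr (βcr : ℝ) : Prop :=
  βcr ∈ Set.Ioo Real.pi (2 * Real.pi) ∧
    Real.tan ((βcr - Real.pi) / 4) = 4 * (Real.Gamma (3 / 4) / Real.Gamma (1 / 4)) ^ 2

/-- `c = c_β`: for `β ≤ βcr`, `c = 1/4`; for `β > βcr`, `c` is the unique solution in
`(0, 1/4]` of the Hardy-constant equation for `β`. -/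
def isHardyConst (βcr β c : ℝ) : Prop :=
  (β ≤ βcr ∧ c = 1 / 4) ∨ (βcr < β ∧ c ∈ Set.Ioc (0 : ℝ) (1 / 4) ∧ hardyEq c β)

/-- The closed convex wedge with vertex `v` spanned by the directions towards `a` and `b`. -/
def wedge (v a b : E2) : Set E2 :=
  {p | ∃ s t : ℝ, 0 ≤ s ∧ 0 ≤ t ∧ p = v + s • (a - v) + t • (b - v)}

/-- `Ω` is a non-convex quadrilateral with reflex interior angle `β ∈ (π, 2π)`:
a bounded nonempty open set whose boundary is a simple closed polygon with four
vertices `v 0, v 1, v 2, v 3`, exactly one of whose interior angles equals `β` and is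
reflex (near the reflex vertex `Ω` coincides with the complement of the wedge of the two
adjacent edges, so the interior angle there is `2π` minus the unsigned angle between the
edges), while at every other vertex `Ω` coincides locally with the interior of the wedge
(a convex vertex, with interior angle `< π`). -/
def IsNonconvexQuadrilateral (Ω : Set E2) (β : ℝ) : Prop :=
  IsOpen Ω ∧ Bornology.IsBounded Ω ∧ Ω.Nonempty ∧
  Real.pi < β ∧ β < 2 * Real.pi ∧
  ∃ v : Fin 4 → E2, Function.Injective v ∧
    frontier Ω = ⋃ i, segment ℝ (v i) (v (i + 1)) ∧
    (∀ i, segment ℝ (v i) (v (i + 1)) ∩ segment ℝ (v (i + 1)) (v (i + 2)) = {v (i + 1)}) ∧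
    (∀ i, segment ℝ (v i) (v (i + 1)) ∩ segment ℝ (v (i + 2)) (v (i + 3)) = ∅) ∧
    ∃ i₀ : Fin 4,
      (EuclideanGeometry.angle (v (i₀ - 1)) (v i₀) (v (i₀ + 1)) = 2 * Real.pi - β ∧
        ∃ ε > 0, Metric.ball (v i₀) ε ∩ Ω =
          Metric.ball (v i₀) ε \ wedge (v i₀) (v (i₀ - 1)) (v (i₀ + 1))) ∧
      ∀ i ≠ i₀, EuclideanGeometry.angle (v (i - 1)) (v i) (v (i + 1)) < Real.pi ∧
        ∃ ε > 0, Metric.ball (v i) ε ∩ Ω =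
          Metric.ball (v i) ε ∩ interior (wedge (v i) (v (i - 1)) (v (i + 1)))


section
namespace HQ

/-- The basic integral `∫ (cosh t + x)^(-a) dt`. -/
noncomputable def W (a x : ℝ) : ℝ := ∫ t : ℝ, (Real.cosh t + x) ^ (-a)

lemma cosh_rpow_le (a : ℝ) (ha : 0 < a) (t : ℝ) :
    (Real.cosh t) ^ (-a) ≤ 2 ^ a * Real.exp (-(a * |t|)) := by
  have h1 : Real.exp |t| / 2 ≤ Real.cosh t := by
    rw [← Real.cosh_abs, Real.cosh_eq]
    have := Real.exp_pos (-|t|)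
    linarith
  have h2 : (Real.cosh t) ^ (-a) ≤ (Real.exp |t| / 2) ^ (-a) :=
    Real.rpow_le_rpow_of_nonpos (by positivity) h1 (by linarith)
  refine h2.trans (le_of_eq ?_)
  rw [Real.div_rpow (Real.exp_pos _).le (by norm_num), ← Real.exp_mul, Real.rpow_neg (by norm_num)]
  rw [div_inv_eq_mul, mul_comm]
  congr 2
  ring

lemma integrable_exp_abs (a : ℝ) (ha : 0 < a) :
    Integrable (fun t : ℝ => Real.exp (-(a * |t|))) := by
  have h1 : IntegrableOn (fun t : ℝ => Real.exp (-(a * |t|))) (Ioi 0) := by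
    have := integrableOn_exp_mul_Ioi (a := -a) (by linarith) 0
    refine this.congr_fun (fun t ht => ?_) measurableSet_Ioi
    simp only [abs_of_pos (show (0:ℝ) < t from ht)]
    congr 1; ring
  have h2 : IntegrableOn (fun t : ℝ => Real.exp (-(a * |t|))) (Iic 0) := by
    have := integrableOn_exp_mul_Iic (a := a) ha 0
    refine this.congr_fun (fun t ht => ?_) measurableSet_Iic
    simp only [abs_of_nonpos (show t ≤ 0 from ht)]
    congr 1; ring
  have := h2.union h1
  rwa [Iic_union_Ioi, integrableOn_univ] at this

lemma base_lower {x r : ℝ} (hx : |x| ≤ r) (t : ℝ) :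
    (1 - r) * Real.cosh t ≤ Real.cosh t + x := by
  have := Real.one_le_cosh t
  have h2 := neg_abs_le x
  have h3 := abs_nonneg x
  nlinarith

lemma base_pos {x : ℝ} (hx : |x| < 1) (t : ℝ) : 0 < Real.cosh t + x := by
  have := Real.one_le_cosh t
  have h2 := neg_abs_le x
  linarith

lemma W_bound {a x r : ℝ} (ha : 0 < a) (hx : |x| ≤ r) (hr : r < 1) (t : ℝ) :
    (Real.cosh t + x) ^ (-a) ≤ (1 - r) ^ (-a) * (2 ^ a * Real.exp (-(a * |t|))) := by
  have h1 : (Real.cosh t + x) ^ (-a) ≤ ((1 - r) * Real.cosh t) ^ (-a) :=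
    Real.rpow_le_rpow_of_nonpos (mul_pos (by linarith) (Real.cosh_pos t)) (base_lower hx t)
      (by linarith)
  rw [Real.mul_rpow (by linarith) (Real.cosh_pos t).le] at h1
  exact h1.trans (mul_le_mul_of_nonneg_left (cosh_rpow_le a ha t)
    (Real.rpow_nonneg (by linarith) _))

lemma W_cont {a x : ℝ} (hx : |x| < 1) :
    Continuous (fun t : ℝ => (Real.cosh t + x) ^ (-a)) :=
  (Real.continuous_cosh.add continuous_const).rpow_const
    (fun t => Or.inl (base_pos hx t).ne')

lemma W_integrable {a x : ℝ} (ha : 0 < a) (hx : |x| < 1) :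
    Integrable (fun t : ℝ => (Real.cosh t + x) ^ (-a)) := by
  refine Integrable.mono' (((integrable_exp_abs a ha).const_mul (2 ^ a)).const_mul
    ((1 - |x|) ^ (-a))) (W_cont hx).aestronglyMeasurable (Filter.Eventually.of_forall fun t => ?_)
  rw [Real.norm_of_nonneg (Real.rpow_nonneg (base_pos hx t).le _)]
  exact W_bound ha le_rfl hx t

lemma W_pos {a x : ℝ} (ha : 0 < a) (hx : |x| < 1) : 0 < W a x := by
  unfold W
  rw [integral_pos_iff_support_of_nonneg
    (fun t => Real.rpow_nonneg (base_pos hx t).le _) (W_integrable ha hx)]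
  have : Function.support (fun t : ℝ => (Real.cosh t + x) ^ (-a)) = univ := by
    ext t
    simp [(Real.rpow_pos_of_pos (base_pos hx t) (-a)).ne']
  rw [this]
  simp

lemma W_hasDerivAt {a x : ℝ} (ha : 0 < a) (hx : |x| < 1) :
    HasDerivAt (W a) (-a * W (a + 1) x) x := by
  obtain ⟨r, hr1, hr2⟩ := exists_between hx
  have hs : Metric.ball (0:ℝ) r ∈ nhds x := by
    apply Metric.isOpen_ball.mem_nhds
    simpa using hr1
  have hmem : ∀ y ∈ Metric.ball (0:ℝ) r, |y| ≤ r ∧ |y| < 1 := by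
    intro y hy
    have : |y| < r := by simpa using hy
    exact ⟨this.le, this.trans hr2⟩
  have key := hasDerivAt_integral_of_dominated_loc_of_deriv_le (μ := volume) (x₀ := x)
    (F := fun y t => (Real.cosh t + y) ^ (-a))
    (F' := fun y t => -a * (Real.cosh t + y) ^ (-(a + 1)))
    (bound := fun t => a * ((1 - r) ^ (-(a + 1)) * (2 ^ (a + 1) * Real.exp (-((a + 1) * |t|)))))
    hs ?_ (W_integrable ha hx) ?_ ?_ ?_ ?_
  · have h := key.2
    rw [integral_const_mul] at h
    exact h
  · filter_upwards [hs] with y hy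
    exact (W_cont (hmem y hy).2).aestronglyMeasurable
  · exact ((W_cont hx).const_mul (-a)).aestronglyMeasurable
  · refine Filter.Eventually.of_forall fun t y hy => ?_
    rw [norm_mul, norm_neg, Real.norm_of_nonneg ha.le,
      Real.norm_of_nonneg (Real.rpow_nonneg (base_pos (hmem y hy).2 t).le _)]
    exact mul_le_mul_of_nonneg_left (W_bound (by linarith) (hmem y hy).1 hr2 t) ha.le
  · exact ((((integrable_exp_abs (a + 1) (by linarith)).const_mul _).const_mul _).const_mul _)
  · refine Filter.Eventually.of_forall fun t y hy => ?_
    have h := ((hasDerivAt_id y).const_add (Real.cosh t)).rpow_const (p := -a)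
      (Or.inl (base_pos (hmem y hy).2 t).ne')
    refine h.congr_deriv ?_
    rw [show -(a + 1) = -a - 1 by ring]
    simp only [id]
    ring

lemma rpow_shift {C : ℝ} (hC : 0 < C) (a : ℝ) :
    C ^ (-a) = C * C ^ (-(a + 1)) := by
  rw [show -a = 1 + (-(a+1)) by ring, Real.rpow_add hC, Real.rpow_one]

lemma W_rec {a x : ℝ} (ha : 0 < a) (hx : |x| < 1) :
    (1 - x ^ 2) * (a + 1) * W (a + 2) x + (2 * a + 1) * x * W (a + 1) x = a * W a x := by
  have hI0 := W_integrable ha hx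
  have hI1 := W_integrable (a := a + 1) (by linarith) hx
  have hI2 := W_integrable (a := a + 2) (by linarith) hx
  have key := integral_eq_zero_of_hasDerivAt_of_integrable
    (f := fun t : ℝ => Real.sinh t * (Real.cosh t + x) ^ (-(a + 1)))
    (f' := fun t : ℝ => (1 - x ^ 2) * (a + 1) * (Real.cosh t + x) ^ (-(a + 2)) +
      (2 * a + 1) * x * (Real.cosh t + x) ^ (-(a + 1)) - a * (Real.cosh t + x) ^ (-a)) ?_ ?_ ?_
  · have hI12 : Integrable (fun t : ℝ => (1 - x ^ 2) * (a + 1) * (Real.cosh t + x) ^ (-(a + 2)) +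
      (2 * a + 1) * x * (Real.cosh t + x) ^ (-(a + 1))) := (hI2.const_mul _).add (hI1.const_mul _)
    rw [integral_sub hI12 (hI0.const_mul _),
      integral_add (hI2.const_mul _) (hI1.const_mul _), integral_const_mul, integral_const_mul,
      integral_const_mul] at key
    unfold W
    linarith
  · intro t
    have hC := base_pos hx t
    have h := (Real.hasDerivAt_sinh t).mul (((Real.hasDerivAt_cosh t).add_const x).rpow_const
      (p := -(a + 1)) (Or.inl hC.ne'))
    refine h.congr_deriv ?_
    rw [rpow_shift hC a, show -(a + 1) - 1 = -(a + 2) by ring]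
    have e1 : (Real.cosh t + x) ^ (-(a + 1)) = (Real.cosh t + x) * (Real.cosh t + x) ^ (-(a + 2)) := by
      rw [rpow_shift hC (a + 1)]; congr 2; ring
    rw [e1]
    have hs : Real.sinh t ^ 2 = Real.cosh t ^ 2 - 1 := Real.sinh_sq t
    linear_combination (-(a + 1) * (Real.cosh t + x) ^ (-(a + 2))) * hs
  · exact ((hI2.const_mul _).add (hI1.const_mul _)).sub (hI0.const_mul _)
  · refine Integrable.mono' (hI0.const_mul (1 / (1 - |x|)))
      (Real.continuous_sinh.mul (W_cont hx)).aestronglyMeasurable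
      (Filter.Eventually.of_forall fun t => ?_)
    have hC := base_pos hx t
    have h1 : 0 < 1 - |x| := by linarith
    rw [norm_mul, Real.norm_of_nonneg (Real.rpow_nonneg hC.le _), rpow_shift hC a, ← mul_assoc]
    refine mul_le_mul_of_nonneg_right ?_ (Real.rpow_nonneg hC.le _)
    rw [Real.norm_eq_abs]
    have h2 := base_lower (le_refl |x|) t
    have h3 : |Real.sinh t| ≤ Real.cosh t := by
      rw [abs_le]
      constructor
      · have := Real.cosh_add_sinh t
        have := Real.exp_pos t
        linarith
      · exact (Real.sinh_lt_cosh t).le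
    rw [div_mul_eq_mul_div, one_mul, le_div_iff₀ h1]
    nlinarith

lemma W_le {a x : ℝ} (ha : 0 < a) (hx : |x| < 1) : (1 + x) * W (a + 1) x ≤ W a x := by
  unfold W
  rw [← integral_const_mul]
  refine integral_mono ((W_integrable (by linarith) hx).const_mul _) (W_integrable ha hx) fun t => ?_
  have hC := base_pos hx t
  simp only
  rw [rpow_shift hC a]
  exact mul_le_mul_of_nonneg_right (by linarith [Real.one_le_cosh t]) (Real.rpow_nonneg hC.le _)

lemma W_zero {a : ℝ} (ha : 0 < a) :
    W a 0 = 2 ^ (a - 1) * (Real.Gamma (a / 2) * Real.Gamma (a / 2) / Real.Gamma a) := by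
  have ha2 : 0 < a / 2 := by linarith
  set f : ℝ → ℝ := fun t => 1 / (1 + Real.exp (-(2 * t))) with hf
  have hp : ∀ t : ℝ, 0 < 1 + Real.exp (-(2 * t)) := fun t => by positivity
  have hderiv : ∀ t, HasDerivAt f (2 * (f t * (1 - f t))) t := by
    intro t
    have h := ((((hasDerivAt_id t).const_mul 2).neg.exp).const_add 1).inv (hp t).ne'
    have h' : HasDerivAt f _ t := h.congr_of_eventuallyEq
      (Filter.Eventually.of_forall fun y => by simp [hf])
    refine h'.congr_deriv ?_
    simp only [hf, id, Pi.neg_apply]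
    have := (hp t).ne'
    field_simp
    ring
  have hf0 : ∀ t, 0 < f t := fun t => by have := hp t; simp only [hf]; positivity
  have hf1 : ∀ t, f t < 1 := fun t => by
    simp only [hf]
    rw [div_lt_one (hp t)]
    linarith [Real.exp_pos (-(2 * t))]
  have hinj : InjOn f univ := by
    intro s _ t _ hst
    simp only [hf] at hst
    have h1 : 1 + Real.exp (-(2 * s)) = 1 + Real.exp (-(2 * t)) := by
      rw [one_div, one_div] at hst
      exact inv_injective hst
    have h2 := Real.exp_injective (add_left_cancel h1)
    linarith
  have himg : f '' univ = Ioo 0 1 := by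
    ext y
    constructor
    · rintro ⟨t, -, rfl⟩
      exact ⟨hf0 t, hf1 t⟩
    · rintro ⟨hy0, hy1⟩
      refine ⟨-(Real.log (1 / y - 1)) / 2, mem_univ _, ?_⟩
      simp only [hf]
      have : 0 < 1 / y - 1 := by rw [sub_pos, lt_div_iff₀ hy0]; linarith
      rw [show -(2 * (-(Real.log (1 / y - 1)) / 2)) = Real.log (1 / y - 1) by ring,
        Real.exp_log this]
      field_simp
      ring
  have hcosh : ∀ t, f t * (1 - f t) = (1 / 4) * (Real.cosh t) ^ (-2 : ℝ) := by
    intro t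
    have e : Real.exp (-(2 * t)) = Real.exp (-t) * Real.exp (-t) := by
      rw [← Real.exp_add]; congr 1; ring
    have e2 : Real.exp t * Real.exp (-t) = 1 := by rw [← Real.exp_add]; simp
    rw [Real.rpow_neg (Real.cosh_pos t).le, show (2:ℝ) = ((2:ℕ):ℝ) by norm_num, Real.rpow_natCast,
      Real.cosh_eq]
    have h1 := hp t
    simp only [hf]
    rw [e] at h1 ⊢
    have h3 : 0 < Real.exp t + Real.exp (-t) := by positivity
    have h4 : Real.exp t + Real.exp (-t) = Real.exp t * (1 + Real.exp (-t) * Real.exp (-t)) := by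
      linear_combination (-Real.exp (-t)) * e2
    rw [h4]
    have h5 := Real.exp_pos t
    field_simp
    linear_combination (4 * (Real.exp t * Real.exp (-t) + 1)) * e2
  have hB : (Real.Gamma (a / 2) * Real.Gamma (a / 2) / Real.Gamma a) =
      ∫ x in Ioo (0:ℝ) 1, (x * (1 - x)) ^ (a / 2 - 1) := by
    have h := ProbabilityTheory.beta_eq_betaIntegralReal (a / 2) (a / 2) ha2 ha2
    unfold ProbabilityTheory.beta at h
    rw [add_halves] at h
    rw [h]
    unfold Complex.betaIntegral
    rw [intervalIntegral.integral_of_le zero_le_one, integral_Ioc_eq_integral_Ioo]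
    have : ∀ x ∈ Ioo (0:ℝ) 1, (x:ℂ) ^ (((a / 2 : ℝ):ℂ) - 1) * (1 - (x:ℂ)) ^ (((a / 2 : ℝ):ℂ) - 1)
        = (((x * (1 - x)) ^ (a / 2 - 1) : ℝ) : ℂ) := by
      intro x hx
      rw [Real.mul_rpow hx.1.le (by linarith [hx.2])]
      push_cast
      rw [Complex.ofReal_cpow hx.1.le, Complex.ofReal_cpow (by linarith [hx.2])]
      push_cast
      rfl
    rw [setIntegral_congr_fun measurableSet_Ioo this, integral_complex_ofReal]
    simp
  rw [hB, ← himg, integral_image_eq_integral_abs_deriv_smul MeasurableSet.univ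
    (fun t _ => (hderiv t).hasDerivWithinAt) hinj, Measure.restrict_univ, ← integral_const_mul]
  unfold W
  congr 1
  ext t
  have hc := Real.cosh_pos t
  have hpos : 0 < f t * (1 - f t) := mul_pos (hf0 t) (by linarith [hf1 t])
  rw [abs_of_pos (by linarith), smul_eq_mul]
  have : 2 * (f t * (1 - f t)) * (f t * (1 - f t)) ^ (a / 2 - 1) = 2 * (f t * (1 - f t)) ^ (a / 2) := by
    rw [mul_assoc]
    congr 1
    rw [Real.rpow_sub_one hpos.ne', mul_div_cancel₀ _ hpos.ne']
  rw [this, hcosh, Real.mul_rpow (by norm_num) (Real.rpow_nonneg hc.le _), ← Real.rpow_mul hc.le,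
    show (1/4 : ℝ) = 2 ^ (-2 : ℝ) by
      rw [Real.rpow_neg (by norm_num)]; norm_num, ← Real.rpow_mul (by norm_num)]
  rw [add_zero, ← mul_assoc, ← mul_assoc, mul_assoc (2 ^ (a - 1)), mul_comm (2:ℝ),
    ← Real.rpow_add_one (by norm_num), ← Real.rpow_add (by norm_num)]
  rw [show a - 1 + (-2 * (a / 2) + 1) = 0 by ring, show -2 * (a / 2) = -a by ring]
  simp

lemma W_ratio {a : ℝ} (ha : 0 < a) :
    a * W (a + 1) 0 = 2 * (Real.Gamma ((a + 1) / 2) / Real.Gamma (a / 2)) ^ 2 * W a 0 := by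
  rw [W_zero ha, W_zero (show 0 < a + 1 by linarith), Real.Gamma_add_one ha.ne',
    show a + 1 - 1 = (a - 1) + 1 by ring, Real.rpow_add_one (by norm_num)]
  have h1 := (Real.Gamma_pos_of_pos ha).ne'
  have h2 := (Real.Gamma_pos_of_pos (show 0 < a / 2 by linarith)).ne'
  field_simp

end HQ
end

section
namespace HQ

/-- The angular profile of the vector field in the region close to one reflex edge. -/
structure HalfProfile (κ α lam ν : ℝ) (g g' : ℝ → ℝ) : Prop where
  κpos : 0 < κ
  κlt : κ < π / 2
  αpos : 0 < α
  lam0 : 0 ≤ lam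
  νpos : 0 < ν
  νle : ν ≤ 1
  νle' : ν ≤ lam + α
  mid : lam ^ 2 + α * (1 - α) ≤ ν ^ 2
  hderiv : ∀ a ∈ Ico 0 (π / 2), HasDerivAt g (g' a) a
  hcont : ContinuousOn g' (Ico 0 (π / 2))
  g0 : g 0 = ν * Real.tan (ν * κ)
  g'0 : g' 0 = ν ^ 2 + (ν * Real.tan (ν * κ)) ^ 2
  ric : ∀ a ∈ Ico 0 (π / 2), g a ^ 2 + lam ^ 2 + α * (1 - α) / Real.cos a ^ 2 ≤ g' a
  jump1 : ∀ a ∈ Ico 0 (π / 2), ∀ h ∈ Ioo κ (π / 2),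
    0 ≤ Real.cos a * (lam * Real.sin (a + h) - g a * Real.cos (a + h)) + α * Real.sin h
  jump2 : ∀ a ∈ Ico 0 (π / 2), ∀ h ∈ Ioo 0 (π / 2 - κ),
    0 ≤ Real.cos a * (lam * Real.sin (h - a) + g a * Real.cos (h - a)) + α * Real.sin h

lemma tan_mul_le {e x : ℝ} (he0 : 0 ≤ e) (he1 : e ≤ 1) (hx0 : 0 ≤ x) (hx : x < π / 2) :
    Real.tan (e * x) ≤ e * Real.tan x := by
  have hpi := Real.pi_pos
  have hmem : ∀ y ∈ Ico 0 (π / 2), 0 < Real.cos y := fun y hy =>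
    Real.cos_pos_of_mem_Ioo ⟨by linarith [hy.1], hy.2⟩
  have hmem2 : ∀ y ∈ Ico 0 (π / 2), e * y ∈ Ico 0 (π / 2) ∧ e * y ≤ y := fun y hy =>
    ⟨⟨mul_nonneg he0 hy.1, lt_of_le_of_lt (mul_le_of_le_one_left hy.1 he1) hy.2⟩,
      mul_le_of_le_one_left hy.1 he1⟩
  have hd : ∀ y ∈ Ico 0 (π / 2), HasDerivAt (fun y => e * Real.tan y - Real.tan (e * y))
      (e * (1 / Real.cos y ^ 2) - 1 / Real.cos (e * y) ^ 2 * e) y := by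
    intro y hy
    have h1 := (Real.hasDerivAt_tan (hmem y hy).ne').const_mul e
    have h2 := (Real.hasDerivAt_tan (hmem _ (hmem2 y hy).1).ne').comp y
      ((hasDerivAt_id y).const_mul e)
    refine (h1.sub h2).congr_deriv ?_
    simp
  have hmono : MonotoneOn (fun y => e * Real.tan y - Real.tan (e * y)) (Ico 0 (π / 2)) := by
    refine monotoneOn_of_hasDerivWithinAt_nonneg (convex_Ico _ _)
      (fun y hy => (hd y hy).continuousAt.continuousWithinAt)
      (fun y hy => (hd y (interior_subset hy)).hasDerivWithinAt) (fun y hy => ?_)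
    have hy := interior_subset hy
    have h1 := hmem y hy
    have h2 : Real.cos y ≤ Real.cos (e * y) :=
      Real.cos_le_cos_of_nonneg_of_le_pi (hmem2 y hy).1.1 (by linarith [hy.2]) (hmem2 y hy).2
    have h3 : 1 / Real.cos (e * y) ^ 2 ≤ 1 / Real.cos y ^ 2 := by gcongr
    nlinarith
  have := hmono (⟨le_rfl, by linarith⟩ : (0:ℝ) ∈ Ico 0 (π / 2)) ⟨hx0, hx⟩ hx0
  simp at this
  exact this

lemma poly_aux {q p : ℝ} (hq : q ^ 2 + 2 * q = 1) (hq0 : 0 < q) (hp0 : 0 ≤ p) (hp1 : p ≤ 1) :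
    q ^ 2 * (1 - p) * (1 + 1.36 * p ^ 2) ^ 2 + 2 * q * (1 + 1.36 * p ^ 2) ≤ 1 + p := by
  have hq1 : q ≤ 0.4143 := by nlinarith
  have hq2 : 0.4142 ≤ q := by nlinarith
  have e : q ^ 2 = 1 - 2 * q := by linarith
  rw [e]
  have h1 : 0 ≤ p * (1 - p) := mul_nonneg hp0 (by linarith)
  have key : (1 - 2 * q) * ((1 - p) * (1 + 1.36 * p ^ 2) ^ 2) + 2 * q * (1 + 1.36 * p ^ 2)
      = (1 - p) * (1 + 1.36 * p ^ 2) ^ 2 + 2 * q * ((1 + 1.36 * p ^ 2) - (1 - p) * (1 + 1.36 * p ^ 2) ^ 2) := by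
    ring
  have hpos : 0 ≤ (1 + 1.36 * p ^ 2) - (1 - p) * (1 + 1.36 * p ^ 2) ^ 2 := by
    have : (1 + 1.36 * p ^ 2) - (1 - p) * (1 + 1.36 * p ^ 2) ^ 2
      = (1 + 1.36 * p ^ 2) * (p * (1 - 1.36 * p + 1.36 * p ^ 2)) := by ring
    rw [this]
    have : 0 ≤ 1 - 1.36 * p + 1.36 * p ^ 2 := by nlinarith [sq_nonneg (p - 1/2)]
    positivity
  have hqb : 2 * q * ((1 + 1.36 * p ^ 2) - (1 - p) * (1 + 1.36 * p ^ 2) ^ 2) ≤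
      0.8286 * ((1 + 1.36 * p ^ 2) - (1 - p) * (1 + 1.36 * p ^ 2) ^ 2) :=
    mul_le_mul_of_nonneg_right (by linarith) hpos
  have fin : (1 - p) * (1 + 1.36 * p ^ 2) ^ 2 + 0.8286 * ((1 + 1.36 * p ^ 2) - (1 - p) * (1 + 1.36 * p ^ 2) ^ 2) ≤ 1 + p := by
    have e2 : 1 + p - ((1 - p) * (1 + 1.36 * p ^ 2) ^ 2 + 0.8286 * ((1 + 1.36 * p ^ 2) - (1 - p) * (1 + 1.36 * p ^ 2) ^ 2))
      = p * ( 1.1714 - 1.593104 * p + 0.466208 * p ^ 2 - 0.31702144 * p ^ 3 + 0.31702144 * p ^ 4) := by ring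
    have h3 : 0 ≤ 1.1714 - 1.593104 * p + 0.466208 * p ^ 2 - 0.31702144 * p ^ 3 + 0.31702144 * p ^ 4 := by
      nlinarith [sq_nonneg (p - 1), mul_nonneg hp0 (sub_nonneg.2 hp1), mul_nonneg (mul_nonneg hp0 hp0) (sub_nonneg.2 hp1), mul_nonneg (mul_nonneg (mul_nonneg hp0 hp0) hp0) (sub_nonneg.2 hp1)]
    have := mul_nonneg hp0 h3
    linarith
  linarith

lemma bound_aux {y p M e : ℝ} (hy0 : 0 < y) (hy1 : y ^ 2 + 2 * y < 1)
    (hp : p * (1 + 2 * y - y ^ 2) = 1 - 2 * y - y ^ 2) (he0 : 0 ≤ e)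
    (he : (1 + e) ^ 2 = 1 + p ^ 2)
    (hM0 : 0 ≤ M) (hM : M * (1 - e * y ^ 2) ≤ (1 + e) ^ 2 * y) : M ^ 2 + 2 * M ≤ 1 - p ^ 2 := by
  have hy2 : y < 1 / 2 := by nlinarith
  have hD : 0 < 1 + 2 * y - y ^ 2 := by nlinarith
  have hp0 : 0 ≤ p := by
    by_contra h
    push Not at h
    nlinarith [mul_neg_of_neg_of_pos h hD]
  have hp1 : p ≤ 1 := by
    by_contra h
    push Not at h
    nlinarith [mul_lt_mul_of_pos_right h hD]
  set q := √2 - 1 with hqdef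
  have hs2 : √2 ^ 2 = 2 := Real.sq_sqrt (by norm_num)
  have hq : q ^ 2 + 2 * q = 1 := by rw [hqdef]; nlinarith
  have hq0 : 0 < q := by
    have : (1:ℝ) < √2 := by rw [Real.lt_sqrt (by norm_num)]; norm_num
    linarith
  have hyq : y ≤ q := by
    by_contra h
    push Not at h
    nlinarith
  have hyp : y ≤ q * (1 - p) := by
    have h1 : (1 - p) * (1 + 2 * y - y ^ 2) = 4 * y := by linarith
    have h2 : 1 + 2 * y - y ^ 2 ≤ 4 * q := by nlinarith
    have h3 : y * (1 + 2 * y - y ^ 2) ≤ q * (1 - p) * (1 + 2 * y - y ^ 2) := by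
      rw [mul_assoc, h1]; nlinarith
    exact le_of_mul_le_mul_right h3 hD
  have hep : e ≤ p ^ 2 / 2 := by nlinarith [sq_nonneg e]
  have hy18 : y ^ 2 ≤ 0.18 := by
    have : q ≤ 0.4143 := by nlinarith
    nlinarith
  have hMy : M ≤ (1 + 1.36 * p ^ 2) * y := by
    have hz : e * y ^ 2 ≤ p ^ 2 * 0.09 := by
      have := mul_le_mul hep hy18 (by positivity) (by positivity)
      linarith
    have hpp : p ^ 2 ≤ 1 := by nlinarith
    have h1 : 0 < 1 - e * y ^ 2 := by linarith
    have h2 : (1 + e) ^ 2 * y ≤ (1 + 1.36 * p ^ 2) * y * (1 - e * y ^ 2) := by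
      rw [he]
      have : (1 + p ^ 2) ≤ (1 + 1.36 * p ^ 2) * (1 - e * y ^ 2) := by
        nlinarith [sq_nonneg p]
      nlinarith
    exact le_of_mul_le_mul_right (hM.trans h2) h1
  have hMq : M ≤ (1 + 1.36 * p ^ 2) * (q * (1 - p)) :=
    hMy.trans (mul_le_mul_of_nonneg_left hyp (by positivity))
  have hpol := poly_aux hq hq0 hp0 hp1
  have h5 := mul_le_mul_of_nonneg_left hpol (show 0 ≤ 1 - p by linarith)
  have hMsq := pow_le_pow_left₀ hM0 hMq 2
  calc M ^ 2 + 2 * M ≤ ((1 + 1.36 * p ^ 2) * (q * (1 - p))) ^ 2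
        + 2 * ((1 + 1.36 * p ^ 2) * (q * (1 - p))) := by linarith
    _ = (1 - p) * (q ^ 2 * (1 - p) * (1 + 1.36 * p ^ 2) ^ 2 + 2 * q * (1 + 1.36 * p ^ 2)) := by ring
    _ ≤ (1 - p) * (1 + p) := h5
    _ = 1 - p ^ 2 := by ring

lemma tan_add_aux {x y : ℝ} (hx : Real.cos x ≠ 0) (hy : Real.cos y ≠ 0)
    (hxy : Real.cos (x + y) ≠ 0) :
    Real.tan (x + y) * (1 - Real.tan x * Real.tan y) = Real.tan x + Real.tan y := by
  rw [Real.tan_eq_sin_div_cos, Real.tan_eq_sin_div_cos, Real.tan_eq_sin_div_cos,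
        Real.sin_add]
  rw [Real.cos_add] at hxy ⊢
  generalize Real.cos x = c1 at *
  generalize Real.cos y = c2 at *
  generalize Real.sin x = s1 at *
  generalize Real.sin y = s2 at *
  have hxy' : c2 * c1 - s1 * s2 ≠ 0 := by rwa [mul_comm c2 c1]
  field_simp

lemma nu_low {κ p e y : ℝ} (h0 : 0 < κ) (h1 : κ < π / 4) (hy : y = Real.tan (κ / 2))
    (hy0 : 0 < y) (hy1 : y ^ 2 + 2 * y < 1)
    (hpy : p * (1 + 2 * y - y ^ 2) = 1 - 2 * y - y ^ 2)
    (he0 : 0 ≤ e) (he1 : e ≤ 1) (he : (1 + e) ^ 2 = 1 + p ^ 2) (ν₀ : ℝ) (hν₀ : 2 * ν₀ = 1 + e) :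
    ν₀ * Real.tan (ν₀ * κ) + (ν₀ * Real.tan (ν₀ * κ)) ^ 2 + ν₀ ^ 2 ≤ 1 / 2 := by
  have hpi := Real.pi_pos
  have hek : e * (κ / 2) ≤ κ / 2 := mul_le_of_le_one_left (by linarith) he1
  have hek0 : 0 ≤ e * (κ / 2) := mul_nonneg he0 (by linarith)
  have ht := tan_mul_le he0 he1 (show 0 ≤ κ / 2 by linarith) (by linarith)
  have e1 : ν₀ * κ = κ / 2 + e * (κ / 2) := by linear_combination κ / 2 * hν₀
  have hadd : Real.tan (ν₀ * κ) * (1 - y * Real.tan (e * (κ / 2))) = y + Real.tan (e * (κ / 2)) := by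
    rw [e1, hy]
    exact tan_add_aux (Real.cos_pos_of_mem_Ioo ⟨by linarith, by linarith⟩).ne'
      (Real.cos_pos_of_mem_Ioo ⟨by linarith, by linarith⟩).ne'
      (Real.cos_pos_of_mem_Ioo ⟨by linarith, by linarith⟩).ne'
  have ht0 : 0 ≤ Real.tan (ν₀ * κ) :=
    Real.tan_nonneg_of_nonneg_of_le_pi_div_two (by linarith) (by linarith)
  rw [← hy] at ht
  generalize Real.tan (ν₀ * κ) = t at *
  generalize Real.tan (e * (κ / 2)) = x at *
  have hM1 : (2 * (ν₀ * t)) * (1 - e * y ^ 2) ≤ (1 + e) ^ 2 * y := by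
    have h2 : t * (1 - e * y ^ 2) ≤ t * (1 - y * x) := by
      refine mul_le_mul_of_nonneg_left ?_ ht0
      have := mul_le_mul_of_nonneg_left ht hy0.le
      linarith
    rw [hadd] at h2
    have h3 : t * (1 - e * y ^ 2) ≤ (1 + e) * y := by linarith
    have h4 := mul_le_mul_of_nonneg_left h3 (show 0 ≤ 1 + e by linarith)
    calc (2 * (ν₀ * t)) * (1 - e * y ^ 2) = (1 + e) * (t * (1 - e * y ^ 2)) := by rw [← hν₀]; ring
      _ ≤ _ := h4
      _ = _ := by ring
  have hν0 : 0 ≤ ν₀ := by linarith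
  have hM := bound_aux (M := 2 * (ν₀ * t)) (e := e) hy0 hy1 hpy he0 he (by positivity) hM1
  have e3 : ν₀ ^ 2 = (1 + p ^ 2) / 4 := by rw [← he, ← hν₀]; ring
  rw [e3]
  linarith

set_option maxHeartbeats 1000000 in
lemma exists_nu {κ : ℝ} (h0 : 0 < κ) (h1 : κ < π / 4) :
    ∃ ν lam : ℝ, 0 < ν ∧ ν ≤ 1 ∧ 0 ≤ lam ∧ ν ^ 2 = 1 / 4 + lam ^ 2 ∧
      ν * Real.tan (ν * κ) + (ν * Real.tan (ν * κ)) ^ 2 = 1 / 4 - lam ^ 2 ∧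
      (1 / 2 - lam) * Real.cos κ ≤ (1 / 2 + lam) * Real.sin κ := by
  have hpi := Real.pi_pos
  set C := Real.cos (κ / 2) with hC
  set S := Real.sin (κ / 2) with hS
  have hCpos : 0 < C := Real.cos_pos_of_mem_Ioo ⟨by linarith, by linarith⟩
  have hSpos : 0 < S := Real.sin_pos_of_pos_of_lt_pi (by linarith) (by linarith)
  have hcosκ : 0 < Real.cos κ := Real.cos_pos_of_mem_Ioo ⟨by linarith, by linarith⟩
  have hsinκ : 0 < Real.sin κ := Real.sin_pos_of_pos_of_lt_pi (by linarith) (by linarith)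
  have hlt : Real.sin κ < Real.cos κ := by
    rw [← Real.cos_pi_div_two_sub]
    exact Real.cos_lt_cos_of_nonneg_of_le_pi (by linarith) (by linarith) (by linarith)
  set p := (Real.cos κ - Real.sin κ) / (Real.cos κ + Real.sin κ) with hp
  have hp0 : 0 < p := div_pos (by linarith) (by linarith)
  have hp1 : p < 1 := by rw [hp, div_lt_one (by linarith)]; linarith
  have hcd : Real.cos κ = C ^ 2 - S ^ 2 := by
    rw [hC, hS, ← Real.cos_two_mul']; congr 1; ring
  have hsd : Real.sin κ = 2 * S * C := by
    rw [hC, hS, ← Real.sin_two_mul]; congr 1; ring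
  set y := Real.tan (κ / 2) with hy
  have hyC : S = y * C := by rw [hy, Real.tan_mul_cos hCpos.ne']
  have hy0 : 0 < y := Real.tan_pos_of_pos_of_lt_pi_div_two (by linarith) (by linarith)
  have hy1 : y ^ 2 + 2 * y < 1 := by
    rw [hcd, hsd, hyC] at hlt
    have : 0 < C ^ 2 := by positivity
    nlinarith
  have hpy : p * (1 + 2 * y - y ^ 2) = 1 - 2 * y - y ^ 2 := by
    rw [hp, div_mul_eq_mul_div, div_eq_iff (by linarith), hcd, hsd, hyC]
    ring
  set ν₀ := √(1 + p ^ 2) / 2 with hν₀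
  have hsq : √(1 + p ^ 2) ^ 2 = 1 + p ^ 2 := Real.sq_sqrt (by positivity)
  have hs1 : 1 ≤ √(1 + p ^ 2) := by rw [Real.one_le_sqrt]; nlinarith
  set ν₁ := √(1 / 2 : ℝ) with hν₁
  have hν₁sq : ν₁ ^ 2 = 1 / 2 := Real.sq_sqrt (by norm_num)
  have hν₁0 : 0 ≤ ν₁ := Real.sqrt_nonneg _
  have hν₁1 : ν₁ ≤ 1 := by nlinarith
  have hle : ν₀ ≤ ν₁ := by
    have : ν₀ ^ 2 ≤ ν₁ ^ 2 := by rw [hν₁sq, hν₀, div_pow, hsq]; nlinarith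
    exact le_of_sq_le_sq this hν₁0
  have hν₀pos : 0 < ν₀ := by rw [hν₀]; linarith
  have hcont : ContinuousOn (fun ν : ℝ => ν * Real.tan (ν * κ) + (ν * Real.tan (ν * κ)) ^ 2 + ν ^ 2)
      (Icc ν₀ ν₁) := by
    have ht : ContinuousOn (fun ν : ℝ => Real.tan (ν * κ)) (Icc ν₀ ν₁) := by
      intro ν hν
      have h3 : ν * κ ≤ κ := mul_le_of_le_one_left h0.le (hν.2.trans hν₁1)
      have h4 : 0 < ν * κ := mul_pos (hν₀pos.trans_le hν.1) h0
      have : Real.cos (ν * κ) ≠ 0 :=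
        (Real.cos_pos_of_mem_Ioo ⟨by linarith, by linarith⟩).ne'
      have hc2 : ContinuousAt (fun ν : ℝ => ν * κ) ν := by fun_prop
      exact (ContinuousAt.comp (f := fun ν : ℝ => ν * κ) (g := Real.tan)
        (Real.continuousAt_tan.2 this) hc2).continuousWithinAt
    fun_prop
  have hlow : ν₀ * Real.tan (ν₀ * κ) + (ν₀ * Real.tan (ν₀ * κ)) ^ 2 + ν₀ ^ 2 ≤ 1 / 2 := by
    refine nu_low (p := p) (e := √(1 + p ^ 2) - 1) h0 h1 hy hy0 hy1 hpy (by linarith) (by nlinarith) ?_ ν₀ ?_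
    · linear_combination hsq
    · rw [hν₀]; ring
  have hhigh : 1 / 2 ≤ ν₁ * Real.tan (ν₁ * κ) + (ν₁ * Real.tan (ν₁ * κ)) ^ 2 + ν₁ ^ 2 := by
    have ht0 : 0 ≤ Real.tan (ν₁ * κ) := by
      refine Real.tan_nonneg_of_nonneg_of_le_pi_div_two (by positivity) ?_
      have : ν₁ * κ ≤ κ := mul_le_of_le_one_left h0.le hν₁1
      linarith
    rw [hν₁sq]
    have := mul_nonneg hν₁0 ht0
    nlinarith
  obtain ⟨ν, hν, hνeq⟩ := intermediate_value_Icc hle hcont ⟨hlow, hhigh⟩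
  simp only at hνeq
  have hνsq : (1 + p ^ 2) / 4 ≤ ν ^ 2 := by
    have e3 : ν₀ ^ 2 = (1 + p ^ 2) / 4 := by rw [hν₀, div_pow, hsq]; norm_num
    rw [← e3]
    exact pow_le_pow_left₀ hν₀pos.le hν.1 2
  have hl : √(ν ^ 2 - 1 / 4) ^ 2 = ν ^ 2 - 1 / 4 := Real.sq_sqrt (by nlinarith)
  refine ⟨ν, √(ν ^ 2 - 1 / 4), hν₀pos.trans_le hν.1, hν.2.trans hν₁1, Real.sqrt_nonneg _, ?_, ?_, ?_⟩
  · linarith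
  · linarith
  · have hlp : p / 2 ≤ √(ν ^ 2 - 1 / 4) := by
      apply Real.le_sqrt_of_sq_le
      linarith
    have h6 : p * (Real.cos κ + Real.sin κ) = Real.cos κ - Real.sin κ := by
      rw [hp]; field_simp
    have h7 := mul_le_mul_of_nonneg_right hlp (show 0 ≤ Real.cos κ + Real.sin κ by linarith)
    linarith

theorem halfProfile_small {κ : ℝ} (h0 : 0 < κ) (h1 : κ < π / 4) :
    ∃ lam ν g g', HalfProfile κ (1 / 2) lam ν g g' := by
  obtain ⟨ν, lam, hν0, hν1, hl0, hνl, hm, hlam⟩ := exists_nu h0 h1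
  have hpi := Real.pi_pos
  set m := ν * Real.tan (ν * κ) with hmdef
  have hm0 : 0 ≤ m := by
    have : ν * κ ≤ κ := mul_le_of_le_one_left h0.le hν1
    exact mul_nonneg hν0.le (Real.tan_nonneg_of_nonneg_of_le_pi_div_two (by positivity) (by linarith))
  have hlhalf : lam ≤ 1 / 2 := by nlinarith
  have hmle : m ≤ 1 / 2 - lam := by nlinarith
  have hcos : ∀ a ∈ Ico 0 (π / 2), 0 < Real.cos a := fun a ha =>
    Real.cos_pos_of_mem_Ioo ⟨by linarith [ha.1], ha.2⟩
  have hsin : ∀ a ∈ Ico 0 (π / 2), 0 ≤ Real.sin a := fun a ha =>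
    Real.sin_nonneg_of_nonneg_of_le_pi ha.1 (by linarith [ha.2])
  have hGcos : ∀ a ∈ Ico 0 (π / 2), Real.cos a * ((1 / 2 * Real.sin a + m * (1 - Real.sin a)) / Real.cos a)
      = 1 / 2 * Real.sin a + m * (1 - Real.sin a) := fun a ha => by
    have := (hcos a ha).ne'
    field_simp
  refine ⟨lam, ν, fun a => (1 / 2 * Real.sin a + m * (1 - Real.sin a)) / Real.cos a,
    fun a => 1 / 2 / Real.cos a ^ 2 - m / (1 + Real.sin a), ?_⟩
  refine ⟨h0, by linarith, by norm_num, hl0, hν0, hν1, by nlinarith, by linarith, ?_, ?_, ?_, ?_, ?_,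
    ?_, ?_⟩
  · intro a ha
    have hc := (hcos a ha).ne'
    have hs := hsin a ha
    have hd := (((Real.hasDerivAt_sin a).const_mul (1 / 2)).add
      (((Real.hasDerivAt_sin a).const_sub 1).const_mul m)).div (Real.hasDerivAt_cos a) hc
    refine hd.congr_deriv ?_
    have h3 : 1 + Real.sin a ≠ 0 := by linarith
    simp only [Pi.add_apply]
    rw [div_sub_div _ _ (by positivity) h3, div_eq_div_iff (by positivity) (by positivity)]
    have hcs := Real.cos_sq' a
    have h4 : Real.cos a ^ 4 = (1 - Real.sin a ^ 2) ^ 2 := by rw [← hcs]; ring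
    ring_nf
    rw [h4, hcs]
    ring
  · intro a ha
    have hc := (hcos a ha).ne'
    have h3 : 1 + Real.sin a ≠ 0 := by linarith [hsin a ha]
    have : ContinuousAt (fun a => 1 / 2 / Real.cos a ^ 2 - m / (1 + Real.sin a)) a := by
      have := Real.continuous_cos
      have := Real.continuous_sin
      apply ContinuousAt.sub
      · exact continuousAt_const.div (by fun_prop) (by positivity)
      · exact continuousAt_const.div (by fun_prop) h3
    exact this.continuousWithinAt
  · simp [hmdef]
  · simp only [Real.cos_zero, Real.sin_zero]
    linarith
  · intro a ha
    have hc := hcos a ha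
    have hs := hsin a ha
    have hcs := Real.cos_sq' a
    have h3 : 0 < 1 + Real.sin a := by linarith
    have hs1 := Real.sin_le_one a
    have e1 : m / (1 + Real.sin a) = m * (1 - Real.sin a) / Real.cos a ^ 2 := by
      rw [hcs, div_eq_div_iff h3.ne' (by rw [← hcs]; positivity)]
      ring
    rw [e1, div_pow, ← sub_nonneg]
    have e2 : 1 / 2 / Real.cos a ^ 2 - m * (1 - Real.sin a) / Real.cos a ^ 2 -
        ((1 / 2 * Real.sin a + m * (1 - Real.sin a)) ^ 2 / Real.cos a ^ 2 + lam ^ 2 +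
          1 / 2 * (1 - 1 / 2) / Real.cos a ^ 2) =
        (2 * m ^ 2 * Real.sin a * (1 - Real.sin a)) / Real.cos a ^ 2 := by
      have e3 : lam ^ 2 = 1 / 4 - m - m ^ 2 := by linarith
      rw [e3]
      field_simp
      rw [hcs]
      ring
    rw [e2]
    have : 0 ≤ 1 - Real.sin a := by linarith
    positivity
  · intro a ha h hh
    have hc := hcos a ha
    have hs := hsin a ha
    have hs1 := Real.sin_le_one a
    have hsinh : 0 < Real.sin h := Real.sin_pos_of_pos_of_lt_pi (by linarith [hh.1]) (by linarith [hh.2])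
    have hcosh : 0 < Real.cos h := Real.cos_pos_of_mem_Ioo ⟨by linarith [hh.1], hh.2⟩
    rw [mul_sub, ← mul_assoc (Real.cos a) _ (Real.cos (a + h)), hGcos a ha]
    have hid : Real.cos a * Real.sin (a + h) = Real.sin h + Real.sin a * Real.cos (a + h) := by
      rw [Real.sin_add, Real.cos_add]
      linear_combination Real.sin h * Real.sin_sq_add_cos_sq a
    have hrw : Real.cos a * (lam * Real.sin (a + h)) = lam * (Real.sin h + Real.sin a * Real.cos (a + h)) := by
      rw [← hid]; ring
    rw [hrw]
    rcases le_or_gt (Real.cos (a + h)) 0 with hn | hn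
    · have h5 : 0 ≤ Real.cos a * Real.sin (a + h) := mul_nonneg hc.le
        (Real.sin_nonneg_of_nonneg_of_le_pi (by linarith [ha.1, hh.1]) (by linarith [ha.2, hh.2]))
      rw [hid] at h5
      have h6 : 0 ≤ 1 / 2 * Real.sin a + m * (1 - Real.sin a) := by
        have : 0 ≤ 1 - Real.sin a := by linarith
        positivity
      nlinarith [mul_nonneg hl0 h5]
    · have h7 : Real.cos (a + h) ≤ Real.cos h :=
        Real.cos_le_cos_of_nonneg_of_le_pi (by linarith [hh.1]) (by linarith [ha.2, hh.2]) (by linarith [ha.1])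
      have h8 : (1 / 2 - lam) * Real.cos h ≤ (1 / 2 + lam) * Real.sin h := by
        have h9 : Real.cos h ≤ Real.cos κ :=
          Real.cos_le_cos_of_nonneg_of_le_pi h0.le (by linarith [hh.2]) hh.1.le
        have h10 : Real.sin κ ≤ Real.sin h :=
          Real.sin_le_sin_of_le_of_le_pi_div_two (by linarith) hh.2.le hh.1.le
        nlinarith
      have h11 : (1 / 2 - lam) * Real.sin a + m * (1 - Real.sin a) ≤ 1 / 2 - lam := by nlinarith
      have h12 := mul_le_mul_of_nonneg_right h11 hn.le
      nlinarith
  · intro a ha h hh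
    have hc := hcos a ha
    have hs := hsin a ha
    have hs1 := Real.sin_le_one a
    have hsinh : 0 < Real.sin h := Real.sin_pos_of_pos_of_lt_pi (by linarith [hh.1]) (by linarith [hh.2])
    have hn : 0 < Real.cos (h - a) := Real.cos_pos_of_mem_Ioo ⟨by linarith [hh.1, ha.2], by linarith [hh.2, ha.1]⟩
    rw [mul_add, ← mul_assoc (Real.cos a) _ (Real.cos (h - a)), hGcos a ha]
    have hid : Real.sin h = Real.cos a * Real.sin (h - a) + Real.sin a * Real.cos (h - a) := by
      have : Real.sin h = Real.sin ((h - a) + a) := by congr 1; ring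
      rw [this, Real.sin_add]; ring
    have hm1 : 0 ≤ m * (1 - Real.sin a) * Real.cos (h - a) := by
      have : 0 ≤ 1 - Real.sin a := by linarith
      positivity
    have hpos : 0 ≤ Real.sin a * Real.cos (h - a) := by positivity
    rcases le_or_gt 0 (Real.cos a * Real.sin (h - a)) with hx | hx
    · nlinarith [mul_nonneg hl0 hx]
    · nlinarith

theorem halfProfile_large {κ c α : ℝ} (h0 : π / 4 ≤ κ) (h1 : κ < π / 2) (hc : 0 < c)
    (hα1 : 1 / 2 ≤ α) (hα2 : α < 1) (hα : α * (1 - α) = c)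
    (hK : √c * Real.tan (√c * κ) ≤ 2 * (Real.Gamma ((α + 1) / 2) / Real.Gamma (α / 2)) ^ 2) :
    ∃ lam ν g g', HalfProfile κ α lam ν g g' := by
  have hpi := Real.pi_pos
  have hκ0 : 0 < κ := by linarith
  have hα0 : 0 < α := by linarith
  have hsc : √c ^ 2 = c := Real.sq_sqrt hc.le
  have hsc0 : 0 < √c := Real.sqrt_pos.2 hc
  have hsc1 : √c ≤ 1 / 2 := by
    apply Real.sqrt_le_iff.2
    constructor
    · norm_num
    · nlinarith [sq_nonneg (α - 1 / 2)]
  set m := √c * Real.tan (√c * κ) with hm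
  have hm0 : 0 < m := by
    apply mul_pos hsc0
    apply Real.tan_pos_of_pos_of_lt_pi_div_two (by positivity)
    nlinarith
  set K := 2 * (Real.Gamma ((α + 1) / 2) / Real.Gamma (α / 2)) ^ 2 with hKdef
  have hKW : α * W (α + 1) 0 = K * W α 0 := W_ratio hα0
  set s := (K - m) / (K + m) with hs
  have hKm : 0 < K + m := by linarith
  have hs0 : 0 ≤ s := div_nonneg (by linarith) hKm.le
  have hs1 : K * (1 - s) = m * (1 + s) := by rw [hs]; field_simp; ring
  set w : ℝ → ℝ := fun x => W α x + s * W α (-x) with hw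
  set w1 : ℝ → ℝ := fun x => -α * (W (α + 1) x - s * W (α + 1) (-x)) with hw1
  set w2 : ℝ → ℝ := fun x => α * (α + 1) * (W (α + 2) x + s * W (α + 2) (-x)) with hw2
  have hneg : ∀ x : ℝ, |x| < 1 → |-x| < 1 := fun x hx => by rwa [abs_neg]
  have hcomp : ∀ (a x : ℝ), 0 < a → |x| < 1 →
      HasDerivAt (fun y => W a (-y)) (a * W (a + 1) (-x)) x := by
    intro a x ha hx
    have := (W_hasDerivAt ha (hneg x hx)).comp x (hasDerivAt_neg x)
    refine this.congr_deriv ?_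
    ring
  have hdw : ∀ x, |x| < 1 → HasDerivAt w (w1 x) x := by
    intro x hx
    refine ((W_hasDerivAt hα0 hx).add ((hcomp α x hα0 hx).const_mul s)).congr_deriv ?_
    simp only [hw1]; ring
  have hdw1 : ∀ x, |x| < 1 → HasDerivAt w1 (w2 x) x := by
    intro x hx
    have hα1' : 0 < α + 1 := by linarith
    refine (((W_hasDerivAt hα1' hx).sub ((hcomp (α + 1) x hα1' hx).const_mul s)).const_mul (-α)).congr_deriv ?_
    simp only [hw2]
    rw [show α + 1 + 1 = α + 2 by ring]
    ring
  have hode : ∀ x, |x| < 1 → (1 - x ^ 2) * w2 x = (1 + 2 * α) * x * w1 x + α ^ 2 * w x := by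
    intro x hx
    have e1 := W_rec hα0 hx
    have e2 := W_rec hα0 (hneg x hx)
    simp only [hw, hw1, hw2]
    linear_combination α * e1 + s * α * e2
  have hwpos : ∀ x, |x| < 1 → 0 < w x := by
    intro x hx
    have e1 := W_pos hα0 hx
    have e2 := W_pos hα0 (hneg x hx)
    simp only [hw]
    positivity
  have hwle : ∀ x, |x| < 1 → -(1 + x) * w1 x ≤ α * w x := by
    intro x hx
    have e1 := W_le hα0 hx
    have e2 := (W_pos hα0 (hneg x hx)).le
    have e3 := (W_pos (show 0 < α + 1 by linarith) (hneg x hx)).le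
    have h1x : 0 ≤ 1 + x := by linarith [(abs_lt.1 hx).1]
    simp only [hw, hw1]
    have e4 : 0 ≤ (1 + x) * (s * W (α + 1) (-x)) := by positivity
    have e5 : 0 ≤ s * W α (-x) := by positivity
    nlinarith
  have hcos : ∀ a ∈ Ico 0 (π / 2), 0 < Real.cos a := fun a ha =>
    Real.cos_pos_of_mem_Ioo ⟨by linarith [ha.1], ha.2⟩
  have hsin : ∀ a ∈ Ico 0 (π / 2), 0 ≤ Real.sin a := fun a ha =>
    Real.sin_nonneg_of_nonneg_of_le_pi ha.1 (by linarith [ha.2])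
  have hsinlt : ∀ a ∈ Ico 0 (π / 2), |Real.sin a| < 1 := fun a ha => by
    rw [abs_of_nonneg (hsin a ha)]
    nlinarith [Real.sin_sq_add_cos_sq a, hcos a ha, hsin a ha]
  set g : ℝ → ℝ := fun a => α * Real.tan a - Real.cos a * (w1 (Real.sin a) / w (Real.sin a)) with hg
  have hdg : ∀ a ∈ Ico 0 (π / 2), HasDerivAt g (g a ^ 2 + α * (1 - α) / Real.cos a ^ 2) a := by
    intro a ha
    have hca := hcos a ha
    have hx := hsinlt a ha
    have hwp := hwpos _ hx
    have d1 := (hdw _ hx).comp a (Real.hasDerivAt_sin a)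
    have d2 := (hdw1 _ hx).comp a (Real.hasDerivAt_sin a)
    have d := ((Real.hasDerivAt_tan hca.ne').const_mul α).sub
      ((Real.hasDerivAt_cos a).mul (d2.div d1 hwp.ne'))
    refine d.congr_deriv ?_
    simp only [hg, Function.comp, Pi.div_apply]
    have ho := hode _ hx
    have hcs := Real.cos_sq' a
    rw [← hcs] at ho
    have hw2e : w2 (Real.sin a) = ((1 + 2 * α) * Real.sin a * w1 (Real.sin a) + α ^ 2 * w (Real.sin a)) / Real.cos a ^ 2 := by
      rw [eq_div_iff (by positivity)]; linarith
    rw [hw2e, Real.tan_eq_sin_div_cos]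
    generalize w1 (Real.sin a) = v1 at *
    generalize w (Real.sin a) = v0 at *
    have := hca.ne'
    have := hwp.ne'
    have hcs4 : Real.sin a ^ 2 = 1 - Real.cos a ^ 2 := by linarith
    field_simp
    ring_nf
    rw [hcs4]
    ring
  have hg0 : g 0 = m := by
    simp only [hg, Real.tan_zero, Real.cos_zero, Real.sin_zero]
    have hwp := hwpos 0 (by simp)
    have e : w1 0 = - m * w 0 := by
      simp only [hw1, hw, neg_zero]
      linear_combination (-(1 - s)) * hKW - W α 0 * hs1
    rw [e]
    field_simp
    ring
  have hgmono : MonotoneOn g (Ico 0 (π / 2)) := by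
    refine monotoneOn_of_hasDerivWithinAt_nonneg (convex_Ico _ _)
      (fun y hy => (hdg y hy).continuousAt.continuousWithinAt)
      (fun y hy => (hdg y (interior_subset hy)).hasDerivWithinAt) (fun y hy => ?_)
    rw [hα]
    positivity
  have hgpos : ∀ a ∈ Ico 0 (π / 2), 0 ≤ g a := by
    intro a ha
    have := hgmono (⟨le_rfl, by linarith⟩ : (0:ℝ) ∈ Ico 0 (π / 2)) ha ha.1
    linarith
  have hG : ∀ a ∈ Ico 0 (π / 2), Real.cos a * g a ≤ α := by
    intro a ha
    have hca := hcos a ha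
    have hx := hsinlt a ha
    have hwp := hwpos _ hx
    have hle := hwle _ hx
    have h1 : Real.cos a * g a = α * Real.sin a - Real.cos a ^ 2 * w1 (Real.sin a) / w (Real.sin a) := by
      simp only [hg]
      rw [Real.tan_eq_sin_div_cos]
      field_simp
    rw [h1, Real.cos_sq']
    have h2 : -((1 - Real.sin a ^ 2) * w1 (Real.sin a) / w (Real.sin a)) ≤ α * (1 - Real.sin a) := by
      rw [← neg_div, div_le_iff₀ hwp]
      have h3 : 0 ≤ 1 - Real.sin a := by linarith [Real.sin_le_one a]
      nlinarith [mul_le_mul_of_nonneg_left hle h3]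
    linarith
  refine ⟨0, √c, g, fun a => g a ^ 2 + α * (1 - α) / Real.cos a ^ 2, ?_⟩
  refine ⟨hκ0, h1, hα0, le_rfl, hsc0, by linarith, by linarith, ?_, hdg, ?_, hg0, ?_, ?_, ?_, ?_⟩
  · rw [hsc, hα]; norm_num
  · intro a ha
    have hca := (hcos a ha).ne'
    exact (((hdg a ha).continuousAt.pow 2).add (continuousAt_const.div
      (Real.continuous_cos.continuousAt.pow 2) (pow_ne_zero 2 hca))).continuousWithinAt
  · simp only [hg0, Real.cos_zero, hsc, hα]
    rw [← hm]; ring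
  · intro a ha
    simp
  · intro a ha h hh
    have hca := hcos a ha
    have hsinh : 0 < Real.sin h := Real.sin_pos_of_pos_of_lt_pi (by linarith [hh.1]) (by linarith [hh.2])
    have h7 : Real.cos (a + h) ≤ Real.cos h :=
      Real.cos_le_cos_of_nonneg_of_le_pi (by linarith [hh.1]) (by linarith [ha.2, hh.2]) (by linarith [ha.1])
    have h8 : Real.cos h ≤ Real.sin h := by
      rw [← Real.cos_pi_div_two_sub]
      exact Real.cos_le_cos_of_nonneg_of_le_pi (by linarith [hh.2]) (by linarith [hh.2]) (by linarith [hh.1])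
    have h9 := hG a ha
    have h10 : 0 ≤ Real.cos a * g a := mul_nonneg hca.le (hgpos a ha)
    nlinarith [mul_le_mul_of_nonneg_left (h7.trans h8) h10, mul_le_mul_of_nonneg_right h9 hsinh.le]
  · intro a ha h hh
    have hca := hcos a ha
    have hsinh : 0 < Real.sin h := Real.sin_pos_of_pos_of_lt_pi (by linarith [hh.1]) (by linarith [hh.2])
    have hn : 0 < Real.cos (h - a) := Real.cos_pos_of_mem_Ioo ⟨by linarith [hh.1, ha.2], by linarith [hh.2, ha.1]⟩
    have := hgpos a ha
    rw [zero_mul, zero_add]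
    positivity

end HQ
end

section
namespace HQ

lemma cont_mul_of_tsupport {v w P : ℂ → ℝ} {U : Set ℂ} (hU : IsOpen U) (hv : Continuous v)
    (hw : Continuous w) (hvU : tsupport v ⊆ U) (hP : ContinuousOn P U) :
    Continuous (fun z => v z * (w z * P z)) := by
  apply continuous_of_tsupport
  intro z hz
  have hzU : z ∈ U := hvU (tsupport_mul_subset_left hz)
  have h1 : ContinuousAt P z := hP.continuousAt (hU.mem_nhds hzU)
  exact hv.continuousAt.mul (hw.continuousAt.mul h1)

lemma integrable_mul_of_tsupport {v w P : ℂ → ℝ} {U : Set ℂ} (hU : IsOpen U) (hv : Continuous v)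
    (hw : Continuous w) (hvU : tsupport v ⊆ U) (hP : ContinuousOn P U) (hcs : HasCompactSupport v) :
    Integrable (fun z => v z * (w z * P z)) :=
  (cont_mul_of_tsupport hU hv hw hvU hP).integrable_of_hasCompactSupport hcs.mul_right

lemma ibp {v P P' : ℂ → ℝ} {U : Set ℂ} {e : ℂ} (hU : IsOpen U) (hv : ContDiff ℝ 1 v)
    (hcs : HasCompactSupport v) (hvU : tsupport v ⊆ U) (hP : ContinuousOn P U)
    (hP' : ContinuousOn P' U) (hd : ∀ z ∈ U, HasLineDerivAt ℝ P (P' z) z e) :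
    Integrable (fun z => v z * (2 * fderiv ℝ v z e * P z + v z * P' z)) ∧
    ∫ z, v z * (2 * fderiv ℝ v z e * P z + v z * P' z) = 0 := by
  have hvc := hv.continuous
  have hfd : Continuous (fun z => 2 * fderiv ℝ v z e) :=
    continuous_const.mul ((hv.continuous_fderiv (by norm_num)).clm_apply continuous_const)
  have i1 := integrable_mul_of_tsupport hU hvc hfd hvU hP hcs
  have i2 := integrable_mul_of_tsupport hU hvc hvc hvU hP' hcs
  have i3 := integrable_mul_of_tsupport hU hvc hvc hvU hP hcs
  have key := integral_bilinear_hasLineDerivAt_right_eq_neg_left_of_integrable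
    (μ := (volume : Measure ℂ)) (f := fun z => v z * v z)
    (f' := fun z => v z * (2 * fderiv ℝ v z e)) (g := P) (g' := P') (v := e)
    (B := ContinuousLinearMap.mul ℝ ℝ) (by simpa [mul_assoc] using i1) (by simpa [mul_assoc] using i2)
    (by simpa [mul_assoc] using i3)
    (fun x _ => by
      have h := ((hv.differentiable (by norm_num)) x).hasFDerivAt
      have h2 := (h.mul h).hasLineDerivAt e
      have e2 : (v x • fderiv ℝ v x + v x • fderiv ℝ v x) e = v x * (2 * fderiv ℝ v x e) := by
        simp only [ContinuousLinearMap.add_apply, ContinuousLinearMap.smul_apply, smul_eq_mul]; ring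
      rw [e2] at h2
      exact h2)
    (fun x hx => hd x (hvU (tsupport_mul_subset_left hx)))
  have hsum : (fun z => v z * (2 * fderiv ℝ v z e * P z + v z * P' z)) =
      fun z => v z * (2 * fderiv ℝ v z e * P z) + v z * (v z * P' z) := by
    ext z; ring
  rw [hsum]
  refine ⟨i1.add i2, ?_⟩
  rw [integral_add i1 i2]
  simp only [ContinuousLinearMap.mul_apply', mul_assoc] at key ⊢
  rw [key]; simp

/-- Soft-min weights. -/
noncomputable def wt (N : ℝ) (b : Fin 3 → ℝ) (f : Fin 3 → ℂ → ℝ) (i : Fin 3) (z : ℂ) : ℝ :=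
  Real.exp (-N * (f i z - b i)) / ∑ j, Real.exp (-N * (f j z - b j))

lemma wt_den_pos (N : ℝ) (b : Fin 3 → ℝ) (f : Fin 3 → ℂ → ℝ) (z : ℂ) :
    0 < ∑ j, Real.exp (-N * (f j z - b j)) :=
  Finset.sum_pos (fun _ _ => Real.exp_pos _) ⟨0, Finset.mem_univ _⟩

lemma wt_pos (N : ℝ) (b : Fin 3 → ℝ) (f : Fin 3 → ℂ → ℝ) (i : Fin 3) (z : ℂ) : 0 < wt N b f i z :=
  div_pos (Real.exp_pos _) (wt_den_pos N b f z)

lemma wt_sum (N : ℝ) (b : Fin 3 → ℝ) (f : Fin 3 → ℂ → ℝ) (z : ℂ) : ∑ i, wt N b f i z = 1 := by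
  unfold wt
  rw [← Finset.sum_div, div_self (wt_den_pos N b f z).ne']

lemma wt_le_one (N : ℝ) (b : Fin 3 → ℝ) (f : Fin 3 → ℂ → ℝ) (i : Fin 3) (z : ℂ) :
    wt N b f i z ≤ 1 := by
  rw [← wt_sum N b f z]
  exact Finset.single_le_sum (f := fun i => wt N b f i z) (fun j _ => (wt_pos N b f j z).le) (Finset.mem_univ i)

lemma wt_small {N s : ℝ} {b : Fin 3 → ℝ} {f : Fin 3 → ℂ → ℝ} {i j : Fin 3} {z : ℂ} (hN : 0 ≤ N)
    (h : f j z - b j + s ≤ f i z - b i) : wt N b f i z ≤ Real.exp (-N * s) := by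
  unfold wt
  rw [div_le_iff₀ (wt_den_pos N b f z)]
  have h1 : Real.exp (-N * (f j z - b j)) ≤ ∑ j, Real.exp (-N * (f j z - b j)) :=
    Finset.single_le_sum (f := fun j => Real.exp (-N * (f j z - b j)))
      (fun j _ => (Real.exp_pos _).le) (Finset.mem_univ j)
  calc Real.exp (-N * (f i z - b i)) ≤ Real.exp (-N * s) * Real.exp (-N * (f j z - b j)) := by
        rw [← Real.exp_add, Real.exp_le_exp]
        nlinarith
    _ ≤ _ := by gcongr

lemma wt_contOn {N : ℝ} {b : Fin 3 → ℝ} {f : Fin 3 → ℂ → ℝ} {U : Set ℂ}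
    (hf : ∀ i, ContinuousOn (f i) U) (i : Fin 3) : ContinuousOn (wt N b f i) U := by
  unfold wt
  refine ContinuousOn.div ?_ ?_ (fun z _ => (wt_den_pos N b f z).ne')
  · have := hf i
    fun_prop
  · fun_prop

lemma wt_deriv {N : ℝ} {b : Fin 3 → ℝ} {f f' : Fin 3 → ℂ → ℝ} {z e : ℂ}
    (hf : ∀ i, HasLineDerivAt ℝ (f i) (f' i z) z e) (i : Fin 3) :
    HasLineDerivAt ℝ (wt N b f i)
      (-N * wt N b f i z * (f' i z - ∑ j, wt N b f j z * f' j z)) z e := by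
  have hE : ∀ j, HasDerivAt (fun t : ℝ => Real.exp (-N * (f j (z + t • e) - b j)))
      (Real.exp (-N * (f j z - b j)) * (-N * f' j z)) 0 := by
    intro j
    have h : HasDerivAt (fun t : ℝ => f j (z + t • e)) (f' j z) 0 := hf j
    have := ((h.sub_const (b j)).const_mul (-N)).exp
    simpa using this
  have hS : HasDerivAt (fun t : ℝ => ∑ j, Real.exp (-N * (f j (z + t • e) - b j)))
      (∑ j, Real.exp (-N * (f j z - b j)) * (-N * f' j z)) 0 :=
    HasDerivAt.fun_sum (fun j _ => hE j)
  have hne := (wt_den_pos N b f z).ne'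
  have := (hE i).div hS (by simpa using hne)
  unfold HasLineDerivAt
  refine this.congr_deriv ?_
  unfold wt
  simp only [zero_smul, add_zero]
  have hs : ∑ j, Real.exp (-N * (f j z - b j)) / (∑ j, Real.exp (-N * (f j z - b j))) * f' j z
     = (∑ j, Real.exp (-N * (f j z - b j)) * f' j z) / (∑ j, Real.exp (-N * (f j z - b j))) := by
    rw [Finset.sum_div]
    exact Finset.sum_congr rfl fun j _ => by ring
  have hs2 : ∑ j, Real.exp (-N * (f j z - b j)) * (-N * f' j z) = -N * ∑ j, Real.exp (-N * (f j z - b j)) * f' j z := by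
    rw [Finset.mul_sum]
    exact Finset.sum_congr rfl fun j _ => by ring
  rw [hs, hs2]
  generalize (∑ j, Real.exp (-N * (f j z - b j)) * f' j z) = A
  generalize (∑ j, Real.exp (-N * (f j z - b j))) = S at *
  field_simp
  ring

/-- the mixed component and its derivative -/
noncomputable def mixd (χ : Fin 3 → ℝ) (N : ℝ) (f' P P' : Fin 3 → ℝ) : ℝ :=
  ∑ i, (-N * χ i * (f' i - ∑ j, χ j * f' j) * P i + χ i * P' i)

lemma mix_deriv {N : ℝ} {b : Fin 3 → ℝ} {f f' P P' : Fin 3 → ℂ → ℝ} {z e : ℂ}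
    (hf : ∀ i, HasLineDerivAt ℝ (f i) (f' i z) z e)
    (hP : ∀ i, HasLineDerivAt ℝ (P i) (P' i z) z e) :
    HasLineDerivAt ℝ (fun z => ∑ i, wt N b f i z * P i z)
      (mixd (fun i => wt N b f i z) N (fun i => f' i z) (fun i => P i z) (fun i => P' i z)) z e := by
  unfold HasLineDerivAt mixd
  refine HasDerivAt.fun_sum (fun i _ => ?_)
  have h1 : HasDerivAt (fun t : ℝ => wt N b f i (z + t • e)) _ 0 := wt_deriv hf i
  have h2 : HasDerivAt (fun t : ℝ => P i (z + t • e)) _ 0 := hP i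
  have := h1.fun_mul h2
  simpa using this

lemma mix_algebra (χ : Fin 3 → ℝ) (N : ℝ) (fx fy P Q Px Qy : Fin 3 → ℝ) (hχ : ∀ i, 0 ≤ χ i)
    (hsum : ∑ i, χ i = 1) (v vx vy : ℝ) :
    v * (2 * vx * (∑ i, χ i * P i) + v * mixd χ N fx P Px) +
    v * (2 * vy * (∑ i, χ i * Q i) + v * mixd χ N fy Q Qy) +
    v ^ 2 * ((∑ i, χ i * (-Px i - Qy i - P i ^ 2 - Q i ^ 2)) + N *
      (χ 0 * χ 1 * ((P 0 - P 1) * (fx 0 - fx 1) + (Q 0 - Q 1) * (fy 0 - fy 1)) +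
       χ 0 * χ 2 * ((P 0 - P 2) * (fx 0 - fx 2) + (Q 0 - Q 2) * (fy 0 - fy 2)) +
       χ 1 * χ 2 * ((P 1 - P 2) * (fx 1 - fx 2) + (Q 1 - Q 2) * (fy 1 - fy 2))))
     ≤ vx ^ 2 + vy ^ 2 := by
  unfold mixd
  simp only [Fin.sum_univ_three] at *
  have h0 := hχ 0
  have h1 := hχ 1
  have h2 := hχ 2
  have e : χ 0 = 1 - χ 1 - χ 2 := by linarith
  have p : 0 ≤ χ 0 * ((vx - v * P 0) ^ 2 + (vy - v * Q 0) ^ 2) + χ 1 * ((vx - v * P 1) ^ 2 + (vy - v * Q 1) ^ 2) + χ 2 * ((vx - v * P 2) ^ 2 + (vy - v * Q 2) ^ 2) := by positivity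
  rw [← sub_nonneg]
  refine p.trans (le_of_eq ?_)
  rw [e]
  ring

end HQ
end

section
namespace HQ

/-- Data of three distance-like functions and three vector fields on an open set. -/
structure MixData (U : Set ℂ) (c : ℝ) (f fx fy P Q Px Qy : Fin 3 → ℂ → ℝ) : Prop where
  hU : IsOpen U
  c0 : 0 ≤ c
  cf : ∀ i, ContinuousOn (f i) U
  cfx : ∀ i, ContinuousOn (fx i) U
  cfy : ∀ i, ContinuousOn (fy i) U
  cP : ∀ i, ContinuousOn (P i) U
  cQ : ∀ i, ContinuousOn (Q i) U
  cPx : ∀ i, ContinuousOn (Px i) U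
  cQy : ∀ i, ContinuousOn (Qy i) U
  dfx : ∀ i, ∀ z ∈ U, HasLineDerivAt ℝ (f i) (fx i z) z 1
  dfy : ∀ i, ∀ z ∈ U, HasLineDerivAt ℝ (f i) (fy i z) z Complex.I
  dP : ∀ i, ∀ z ∈ U, HasLineDerivAt ℝ (P i) (Px i z) z 1
  dQ : ∀ i, ∀ z ∈ U, HasLineDerivAt ℝ (Q i) (Qy i z) z Complex.I
  fpos : ∀ i, ∀ z ∈ U, 0 < f i z
  ric : ∀ i, ∀ z ∈ U, c / f i z ^ 2 ≤ -Px i z - Qy i z - P i z ^ 2 - Q i z ^ 2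
  j1 : ∀ z ∈ U, f 1 z ≤ f 0 z →
    0 ≤ (P 0 z - P 1 z) * (fx 0 z - fx 1 z) + (Q 0 z - Q 1 z) * (fy 0 z - fy 1 z)
  j2 : ∀ z ∈ U, f 2 z ≤ f 0 z →
    0 ≤ (P 0 z - P 2 z) * (fx 0 z - fx 2 z) + (Q 0 z - Q 2 z) * (fy 0 z - fy 2 z)
  j12 : ∀ z ∈ U, 0 ≤ (P 1 z - P 2 z) * (fx 1 z - fx 2 z) + (Q 1 z - Q 2 z) * (fy 1 z - fy 2 z)

lemma sum_bound {N s : ℝ} (hN : 0 ≤ N) (hs : 0 < s) (f : Fin 3 → ℂ → ℝ) (z : ℂ) {ρ m : ℝ}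
    (hρ : 0 < ρ) (hρm : ρ ≤ m) (hm : ∀ i, m ≤ f i z) {j : Fin 3} (hj : f j z = m) :
    1 / (m ^ 2 * (1 + 2 * s / ρ) ^ 2) - 3 * Real.exp (-N * s) / ρ ^ 2 ≤
      ∑ i, wt N ![s, 0, 0] f i z * (1 / f i z ^ 2) := by
  set ε := Real.exp (-N * s) with hε
  have hε0 : 0 < ε := Real.exp_pos _
  have hm0 : 0 < m := hρ.trans_le hρm
  set b : Fin 3 → ℝ := ![s, 0, 0] with hb
  have hb0 : ∀ i, 0 ≤ b i := by intro i; fin_cases i <;> simp [hb, hs.le]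
  have hbs : ∀ i, b i ≤ s := by intro i; fin_cases i <;> simp [hb, hs.le]
  have key : ∀ i, (wt N b f i z - ε) / (m + 2 * s) ^ 2 ≤ wt N b f i z * (1 / f i z ^ 2) := by
    intro i
    have hw := wt_pos N b f i z
    have hfi : 0 < f i z := hm0.trans_le (hm i)
    rcases le_or_gt (f i z) (m + 2 * s) with h | h
    · calc (wt N b f i z - ε) / (m + 2 * s) ^ 2 ≤ wt N b f i z / (m + 2 * s) ^ 2 := by
            gcongr; linarith
        _ ≤ wt N b f i z / f i z ^ 2 := by gcongr
        _ = _ := by ring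
    · have h1 : wt N b f i z ≤ ε := wt_small (j := j) hN (by linarith [hb0 j, hbs i])
      have : (wt N b f i z - ε) / (m + 2 * s) ^ 2 ≤ 0 :=
        div_nonpos_of_nonpos_of_nonneg (by linarith) (by positivity)
      exact this.trans (by positivity)
  have hsum : ∑ i, (wt N b f i z - ε) / (m + 2 * s) ^ 2 = (1 - 3 * ε) / (m + 2 * s) ^ 2 := by
    rw [← Finset.sum_div, Finset.sum_sub_distrib, wt_sum]
    simp
  refine le_trans ?_ (hsum ▸ Finset.sum_le_sum fun i _ => key i)
  rw [sub_div]
  have h2 : m + 2 * s ≤ m * (1 + 2 * s / ρ) := by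
    have : 2 * s ≤ m * (2 * s / ρ) := by
      rw [mul_div_assoc', le_div_iff₀ hρ]; nlinarith
    linarith
  have h3 : 1 / (m ^ 2 * (1 + 2 * s / ρ) ^ 2) ≤ 1 / (m + 2 * s) ^ 2 := by
    rw [← mul_pow]
    gcongr
  have h4 : 3 * ε / (m + 2 * s) ^ 2 ≤ 3 * ε / ρ ^ 2 := by
    gcongr
    linarith
  linarith

lemma jump_bound {N s C J w w' ε : ℝ} (hN : 0 ≤ N) (hw : 0 ≤ w) (hw' : 0 ≤ w') (hw1 : w ≤ 1)
    (hC : |J| ≤ C) (hε : 0 ≤ ε) (h : 0 ≤ J ∨ w' ≤ ε) : -(N * C * ε) ≤ N * (w * w' * J) := by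
  have hC0 : 0 ≤ C := (abs_nonneg J).trans hC
  rcases h with h | h
  · have : 0 ≤ N * (w * w' * J) := by positivity
    have : 0 ≤ N * C * ε := by positivity
    linarith
  · have h1 : -C ≤ J := (abs_le.1 hC).1
    have h2 : w * w' ≤ ε := by nlinarith
    have h3 : -(C * ε) ≤ w * w' * J := by nlinarith [mul_nonneg hw hw']
    nlinarith

/-- minimum of the three functions -/
noncomputable def mn (f : Fin 3 → ℂ → ℝ) (z : ℂ) : ℝ := min (f 0 z) (min (f 1 z) (f 2 z))

lemma mn_le (f : Fin 3 → ℂ → ℝ) (z : ℂ) (i : Fin 3) : mn f z ≤ f i z := by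
  unfold mn; fin_cases i <;> simp

lemma mn_eq (f : Fin 3 → ℂ → ℝ) (z : ℂ) : ∃ i, f i z = mn f z := by
  unfold mn
  rcases min_choice (f 1 z) (f 2 z) with h | h <;> rcases min_choice (f 0 z) (min (f 1 z) (f 2 z)) with h' | h'
  · exact ⟨0, h'.symm⟩
  · exact ⟨1, by rw [h', h]⟩
  · exact ⟨0, h'.symm⟩
  · exact ⟨2, by rw [h', h]⟩

theorem mix_step {U : Set ℂ} {c : ℝ} {f fx fy P Q Px Qy : Fin 3 → ℂ → ℝ}
    (D : MixData U c f fx fy P Q Px Qy) {v : ℂ → ℝ} (hv : ContDiff ℝ 1 v)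
    (hcs : HasCompactSupport v) (hvU : tsupport v ⊆ U) {ρ C : ℝ} (hρ : 0 < ρ)
    (hρm : ∀ z ∈ tsupport v, ρ ≤ mn f z)
    (hC1 : ∀ z ∈ tsupport v, |(P 0 z - P 1 z) * (fx 0 z - fx 1 z) + (Q 0 z - Q 1 z) * (fy 0 z - fy 1 z)| ≤ C)
    (hC2 : ∀ z ∈ tsupport v, |(P 0 z - P 2 z) * (fx 0 z - fx 2 z) + (Q 0 z - Q 2 z) * (fy 0 z - fy 2 z)| ≤ C)
    {N s : ℝ} (hN : 0 ≤ N) (hs : 0 < s) :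
    c / (1 + 2 * s / ρ) ^ 2 * (∫ z, v z ^ 2 / mn f z ^ 2)
      - (3 * c / ρ ^ 2 * Real.exp (-N * s) + 2 * C * (N * Real.exp (-N * s))) * ∫ z, v z ^ 2 ≤
      ∫ z, (fderiv ℝ v z 1 ^ 2 + fderiv ℝ v z Complex.I ^ 2) := by
  set b : Fin 3 → ℝ := ![s, 0, 0] with hb
  set ε := Real.exp (-N * s) with hε
  have hε0 : 0 < ε := Real.exp_pos _
  have hvc := hv.continuous
  have cw : ∀ i, ContinuousOn (wt N b f i) U := wt_contOn D.cf
  have cfx := D.cfx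
  have cfy := D.cfy
  have cP := D.cP
  have cQ := D.cQ
  have cPx := D.cPx
  have cQy := D.cQy
  obtain ⟨i1, e1⟩ := ibp (P := fun z => ∑ i, wt N b f i z * P i z)
    (P' := fun z => mixd (fun i => wt N b f i z) N (fun i => fx i z) (fun i => P i z) (fun i => Px i z))
    (e := 1) D.hU hv hcs hvU (by fun_prop) (by unfold mixd; fun_prop)
    (fun z hz => mix_deriv (fun i => D.dfx i z hz) (fun i => D.dP i z hz))
  obtain ⟨i2, e2⟩ := ibp (P := fun z => ∑ i, wt N b f i z * Q i z)
    (P' := fun z => mixd (fun i => wt N b f i z) N (fun i => fy i z) (fun i => Q i z) (fun i => Qy i z))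
    (e := Complex.I) D.hU hv hcs hvU (by fun_prop) (by unfold mixd; fun_prop)
    (fun z hz => mix_deriv (fun i => D.dfy i z hz) (fun i => D.dQ i z hz))
  have cmn : ContinuousOn (mn f) U := by
    unfold mn
    exact (D.cf 0).inf ((D.cf 1).inf (D.cf 2))
  have mnpos : ∀ z ∈ U, 0 < mn f z := fun z hz => by
    obtain ⟨i, hi⟩ := mn_eq f z
    rw [← hi]; exact D.fpos i z hz
  have i3 : Integrable (fun z => v z ^ 2 / mn f z ^ 2) := by
    have := integrable_mul_of_tsupport (P := fun z => 1 / mn f z ^ 2) D.hU hvc hvc hvU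
      (continuousOn_const.div (cmn.pow 2) (fun z hz => (pow_pos (mnpos z hz) 2).ne')) hcs
    refine this.congr (Filter.Eventually.of_forall fun z => ?_)
    simp only; ring
  have i4 : Integrable (fun z => v z ^ 2) := by
    have := integrable_mul_of_tsupport (P := fun _ => 1) D.hU hvc hvc hvU continuousOn_const hcs
    refine this.congr (Filter.Eventually.of_forall fun z => ?_)
    simp only; ring
  have i5 : ∀ e : ℂ, Integrable (fun z => fderiv ℝ v z e ^ 2) := by
    intro e
    have hc : Continuous (fun z => fderiv ℝ v z e) :=
      (hv.continuous_fderiv (by norm_num)).clm_apply continuous_const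
    have hcs' : HasCompactSupport (fun z => fderiv ℝ v z e) := hcs.fderiv_apply ℝ e
    have := (hc.mul hc).integrable_of_hasCompactSupport (μ := volume) (hcs'.mul_right)
    refine this.congr (Filter.Eventually.of_forall fun z => ?_)
    simp only [Pi.mul_apply]; ring
  have hz : ∀ z ∉ tsupport v, v z = 0 := fun z hz => image_eq_zero_of_notMem_tsupport hz
  set A := c / (1 + 2 * s / ρ) ^ 2 with hA
  set B := 3 * c / ρ ^ 2 * ε + 2 * C * (N * ε) with hB
  set g1 : ℂ → ℝ := fun z => v z * (2 * fderiv ℝ v z 1 * (∑ i, wt N b f i z * P i z) + v z *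
    mixd (fun i => wt N b f i z) N (fun i => fx i z) (fun i => P i z) (fun i => Px i z)) with hg1
  set g2 : ℂ → ℝ := fun z => v z * (2 * fderiv ℝ v z Complex.I * (∑ i, wt N b f i z * Q i z) + v z *
    mixd (fun i => wt N b f i z) N (fun i => fy i z) (fun i => Q i z) (fun i => Qy i z)) with hg2
  have hpt : ∀ z, g1 z + g2 z + (A * (v z ^ 2 / mn f z ^ 2) - B * v z ^ 2) ≤
      fderiv ℝ v z 1 ^ 2 + fderiv ℝ v z Complex.I ^ 2 := by
    intro z
    by_cases hzt : z ∈ tsupport v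
    swap
    · simp only [hg1, hg2, hz z hzt]
      simp only [zero_mul, add_zero, ne_eq, OfNat.ofNat_ne_zero, not_false_eq_true, zero_pow,
        zero_div, mul_zero, sub_zero]
      positivity
    have hzU := hvU hzt
    have halg := mix_algebra (fun i => wt N b f i z) N (fun i => fx i z) (fun i => fy i z)
      (fun i => P i z) (fun i => Q i z) (fun i => Px i z) (fun i => Qy i z)
      (fun i => (wt_pos N b f i z).le) (wt_sum N b f z) (v z) (fderiv ℝ v z 1) (fderiv ℝ v z Complex.I)
    refine le_trans ?_ halg
    have hq : A * (1 / mn f z ^ 2) - B ≤ (∑ i, wt N b f i z * (-Px i z - Qy i z - P i z ^ 2 - Q i z ^ 2)) + N *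
      (wt N b f 0 z * wt N b f 1 z * ((P 0 z - P 1 z) * (fx 0 z - fx 1 z) + (Q 0 z - Q 1 z) * (fy 0 z - fy 1 z)) +
       wt N b f 0 z * wt N b f 2 z * ((P 0 z - P 2 z) * (fx 0 z - fx 2 z) + (Q 0 z - Q 2 z) * (fy 0 z - fy 2 z)) +
       wt N b f 1 z * wt N b f 2 z * ((P 1 z - P 2 z) * (fx 1 z - fx 2 z) + (Q 1 z - Q 2 z) * (fy 1 z - fy 2 z))) := by
      obtain ⟨j, hj⟩ := mn_eq f z
      have q1 := sum_bound hN hs f z hρ (hρm z hzt) (mn_le f z) hj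
      have q2 : ∑ i, c * (wt N b f i z * (1 / f i z ^ 2)) ≤
          ∑ i, wt N b f i z * (-Px i z - Qy i z - P i z ^ 2 - Q i z ^ 2) := by
        refine Finset.sum_le_sum fun i _ => ?_
        have := mul_le_mul_of_nonneg_left (D.ric i z hzU) (wt_pos N b f i z).le
        refine le_trans (le_of_eq ?_) this
        ring
      rw [← Finset.mul_sum] at q2
      have q3 := mul_le_mul_of_nonneg_left q1 D.c0
      have q4 := jump_bound (s := s) (C := C) hN (wt_pos N b f 0 z).le (wt_pos N b f 1 z).le
        (wt_le_one N b f 0 z) (hC1 z hzt) hε0.le (by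
          rcases le_or_gt (f 1 z) (f 0 z) with h | h
          · exact Or.inl (D.j1 z hzU h)
          · refine Or.inr (wt_small (j := 0) hN ?_)
            simp [hb]; linarith)
      have q5 := jump_bound (s := s) (C := C) hN (wt_pos N b f 0 z).le (wt_pos N b f 2 z).le
        (wt_le_one N b f 0 z) (hC2 z hzt) hε0.le (by
          rcases le_or_gt (f 2 z) (f 0 z) with h | h
          · exact Or.inl (D.j2 z hzU h)
          · refine Or.inr (wt_small (j := 0) hN ?_)
            simp [hb]; linarith)
      have q6 : 0 ≤ N * (wt N b f 1 z * wt N b f 2 z *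
          ((P 1 z - P 2 z) * (fx 1 z - fx 2 z) + (Q 1 z - Q 2 z) * (fy 1 z - fy 2 z))) :=
        mul_nonneg hN (mul_nonneg (mul_nonneg (wt_pos N b f 1 z).le (wt_pos N b f 2 z).le) (D.j12 z hzU))
      have hmn := (mnpos z hzU).ne'
      have q7 : A * (1 / mn f z ^ 2) - B =
          c * (1 / (mn f z ^ 2 * (1 + 2 * s / ρ) ^ 2) - 3 * ε / ρ ^ 2) - N * C * ε - N * C * ε := by
        rw [hA, hB, mul_sub, div_mul_div_comm, mul_one, mul_one_div, mul_comm (mn f z ^ 2)]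
        ring
      rw [q7]
      linarith
    have := mul_le_mul_of_nonneg_left hq (sq_nonneg (v z))
    simp only [hg1, hg2]
    have e : A * (v z ^ 2 / mn f z ^ 2) - B * v z ^ 2 = v z ^ 2 * (A * (1 / mn f z ^ 2) - B) := by ring
    rw [e]
    linarith
  have hmono := integral_mono (μ := volume) ((i1.add i2).add ((i3.const_mul A).sub (i4.const_mul B)))
    ((i5 1).add (i5 Complex.I)) hpt
  have ee : ∫ z, (g1 + g2 + ((fun z => A * (v z ^ 2 / mn f z ^ 2)) - fun z => B * v z ^ 2)) z
     = A * (∫ z, v z ^ 2 / mn f z ^ 2) - B * ∫ z, v z ^ 2 := by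
    rw [integral_add' (i1.add i2) ((i3.const_mul A).sub (i4.const_mul B)), integral_add' i1 i2,
      integral_sub' (i3.const_mul A) (i4.const_mul B), e1, e2, integral_const_mul, integral_const_mul]
    ring
  calc _ = _ := ee.symm
    _ ≤ _ := hmono

theorem mix {U : Set ℂ} {c : ℝ} {f fx fy P Q Px Qy : Fin 3 → ℂ → ℝ}
    (D : MixData U c f fx fy P Q Px Qy) {v : ℂ → ℝ} (hv : ContDiff ℝ 1 v)
    (hcs : HasCompactSupport v) (hvU : tsupport v ⊆ U) :
    c * (∫ z, v z ^ 2 / mn f z ^ 2) ≤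
      ∫ z, (fderiv ℝ v z 1 ^ 2 + fderiv ℝ v z Complex.I ^ 2) := by
  have cmn : ContinuousOn (mn f) U := by
    unfold mn
    exact (D.cf 0).inf ((D.cf 1).inf (D.cf 2))
  have mnpos : ∀ z ∈ U, 0 < mn f z := fun z hz => by
    obtain ⟨i, hi⟩ := mn_eq f z
    rw [← hi]; exact D.fpos i z hz
  have hK : IsCompact (tsupport v) := hcs
  obtain ⟨ρ, hρ, hρm⟩ : ∃ ρ > 0, ∀ z ∈ tsupport v, ρ ≤ mn f z := by
    rcases (tsupport v).eq_empty_or_nonempty with h | h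
    · exact ⟨1, one_pos, by simp [h]⟩
    · obtain ⟨z0, hz0, hmin⟩ := hK.exists_isMinOn h (cmn.mono hvU)
      exact ⟨mn f z0, mnpos z0 (hvU hz0), fun z hz => hmin hz⟩
  have cfx := D.cfx
  have cfy := D.cfy
  have cP := D.cP
  have cQ := D.cQ
  obtain ⟨C1, hC1⟩ := hK.exists_bound_of_continuousOn
    (f := fun z => (P 0 z - P 1 z) * (fx 0 z - fx 1 z) + (Q 0 z - Q 1 z) * (fy 0 z - fy 1 z))
    (ContinuousOn.mono (by fun_prop) hvU)
  obtain ⟨C2, hC2⟩ := hK.exists_bound_of_continuousOn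
    (f := fun z => (P 0 z - P 2 z) * (fx 0 z - fx 2 z) + (Q 0 z - Q 2 z) * (fy 0 z - fy 2 z))
    (ContinuousOn.mono (by fun_prop) hvU)
  simp only [Real.norm_eq_abs] at hC1 hC2
  have step := fun {N s : ℝ} (hN : 0 ≤ N) (hs : 0 < s) => mix_step D hv hcs hvU (C := max C1 C2) hρ hρm
    (fun z hz => (hC1 z hz).trans (le_max_left _ _))
    (fun z hz => (hC2 z hz).trans (le_max_right _ _)) hN hs
  have step2 : ∀ s : ℝ, 0 < s → c / (1 + 2 * s / ρ) ^ 2 * (∫ z, v z ^ 2 / mn f z ^ 2) ≤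
      ∫ z, (fderiv ℝ v z 1 ^ 2 + fderiv ℝ v z Complex.I ^ 2) := by
    intro s hs
    have t0 : Filter.Tendsto (fun N : ℝ => N * s) Filter.atTop Filter.atTop :=
      Filter.tendsto_id.atTop_mul_const hs
    have t1 : Filter.Tendsto (fun N : ℝ => Real.exp (-N * s)) Filter.atTop (nhds 0) := by
      have := Real.tendsto_exp_neg_atTop_nhds_zero.comp t0
      refine this.congr fun N => ?_
      simp
    have t2 : Filter.Tendsto (fun N : ℝ => N * Real.exp (-N * s)) Filter.atTop (nhds 0) := by
      have := ((Real.tendsto_pow_mul_exp_neg_atTop_nhds_zero 1).comp t0).const_mul (1 / s)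
      simp only [mul_zero] at this
      refine this.congr fun N => ?_
      simp
      field_simp
    have t3 := (((t1.const_mul (3 * c / ρ ^ 2)).add (t2.const_mul (2 * max C1 C2))).mul_const
      (∫ z, v z ^ 2)).const_sub (c / (1 + 2 * s / ρ) ^ 2 * (∫ z, v z ^ 2 / mn f z ^ 2))
    simp only [mul_zero, add_zero, zero_mul, sub_zero] at t3
    refine le_of_tendsto t3 ?_
    filter_upwards [Filter.eventually_ge_atTop 0] with N hN
    exact step hN hs
  have t4 : Filter.Tendsto (fun s : ℝ => c / (1 + 2 * s / ρ) ^ 2 * (∫ z, v z ^ 2 / mn f z ^ 2))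
      (nhdsWithin 0 (Ioi 0)) (nhds (c / (1 + 2 * 0 / ρ) ^ 2 * (∫ z, v z ^ 2 / mn f z ^ 2))) := by
    refine Filter.Tendsto.mono_left ?_ nhdsWithin_le_nhds
    have : ContinuousAt (fun s : ℝ => c / (1 + 2 * s / ρ) ^ 2 * (∫ z, v z ^ 2 / mn f z ^ 2)) 0 := by
      refine ContinuousAt.mul (continuousAt_const.div (by fun_prop) (by simp)) continuousAt_const
    exact this
  have : (c / (1 + 2 * 0 / ρ) ^ 2 * (∫ z, v z ^ 2 / mn f z ^ 2)) = c * (∫ z, v z ^ 2 / mn f z ^ 2) := by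
    simp
  rw [← this]
  refine le_of_tendsto t4 ?_
  filter_upwards [self_mem_nhdsWithin] with s hs
  exact step2 s hs

end HQ
end

section
namespace HQ

lemma glue_deriv {f f1 f2 : ℝ → ℝ} {d a : ℝ} (h1 : HasDerivAt f1 d a) (h2 : HasDerivAt f2 d a)
    (e1 : ∀ x ≤ a, f x = f1 x) (e2 : ∀ x ≥ a, f x = f2 x) : HasDerivAt f d a := by
  have i1 : HasDerivWithinAt f d (Iic a) a :=
    h1.hasDerivWithinAt.congr (fun x hx => e1 x hx) (e1 a le_rfl)
  have i2 : HasDerivWithinAt f d (Ici a) a :=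
    h2.hasDerivWithinAt.congr (fun x hx => e2 x hx) (e2 a le_rfl)
  have := i1.union i2
  rwa [Iic_union_Ici, hasDerivWithinAt_univ] at this

/-- deviation angle from the cone of normals -/
noncomputable def aa (κ σ : ℝ) : ℝ := max (σ - κ) 0 - max (-σ - κ) 0

lemma aa_right {κ σ : ℝ} (h0 : 0 < κ) (h : κ ≤ σ) : aa κ σ = σ - κ := by
  unfold aa; rw [max_eq_left (by linarith), max_eq_right (by linarith), sub_zero]

lemma aa_left {κ σ : ℝ} (h0 : 0 < κ) (h : σ ≤ -κ) : aa κ σ = σ + κ := by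
  unfold aa; rw [max_eq_right (by linarith), max_eq_left (by linarith)]; ring

lemma aa_mid {κ σ : ℝ} (h1 : -κ ≤ σ) (h2 : σ ≤ κ) : aa κ σ = 0 := by
  unfold aa; rw [max_eq_right (by linarith), max_eq_right (by linarith)]; ring

lemma aa_neg (κ σ : ℝ) : aa κ (-σ) = - aa κ σ := by
  unfold aa; rw [neg_neg]; ring

lemma aa_cont (κ : ℝ) : Continuous (aa κ) := by unfold aa; fun_prop

lemma aa_mem {κ σ : ℝ} (h0 : 0 < κ) (h : σ ∈ Ioo (-(π / 2 + κ)) (π / 2 + κ)) :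
    aa κ σ ∈ Ioo (-(π / 2)) (π / 2) := by
  have hpi := Real.pi_pos
  rcases le_or_gt κ σ with h1 | h1
  · rw [aa_right h0 h1]; constructor <;> linarith [h.1, h.2]
  rcases le_or_gt σ (-κ) with h2 | h2
  · rw [aa_left h0 h2]; constructor <;> linarith [h.1, h.2]
  rw [aa_mid h2.le h1.le]; constructor <;> linarith

lemma cos_max_deriv (x : ℝ) : HasDerivAt (fun x => Real.cos (max x 0)) (-Real.sin (max x 0)) x := by
  rcases lt_trichotomy x 0 with h | h | h
  · rw [max_eq_right h.le]
    have : HasDerivAt (fun _ : ℝ => Real.cos 0) (-Real.sin 0) x := by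
      simpa using hasDerivAt_const x (1 : ℝ)
    refine this.congr_of_eventuallyEq ?_
    filter_upwards [Iio_mem_nhds h] with y hy
    rw [max_eq_right (le_of_lt hy)]
  · subst h
    refine glue_deriv (f1 := fun _ => 1) (f2 := Real.cos) ?_ ?_ ?_ ?_
    · simpa using hasDerivAt_const (0:ℝ) (1 : ℝ)
    · simpa using Real.hasDerivAt_cos 0
    · intro x hx; simp [max_eq_right hx]
    · intro x hx; rw [max_eq_left hx]
  · rw [max_eq_left h.le]
    refine (Real.hasDerivAt_cos x).congr_of_eventuallyEq ?_
    filter_upwards [Ioi_mem_nhds h] with y hy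
    rw [max_eq_left (le_of_lt hy)]

lemma cos_aa_deriv {κ : ℝ} (h0 : 0 < κ) (σ : ℝ) :
    HasDerivAt (fun σ => Real.cos (aa κ σ)) (-Real.sin (aa κ σ)) σ := by
  have hs : ∀ σ, Real.sin (max (σ - κ) 0) * Real.sin (max (-σ - κ) 0) = 0 := by
    intro σ
    rcases le_or_gt σ κ with h | h
    · rw [max_eq_right (a := σ - κ) (by linarith)]; simp
    · rw [max_eq_right (a := -σ - κ) (by linarith)]; simp
  have e : (fun σ => Real.cos (aa κ σ)) =
      fun σ => Real.cos (max (σ - κ) 0) * Real.cos (max (-σ - κ) 0) := by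
    ext σ; unfold aa; rw [Real.cos_sub, hs, add_zero]
  rw [e]
  have h1 := (cos_max_deriv (σ - κ)).comp σ ((hasDerivAt_id σ).sub_const κ)
  have h2 := (cos_max_deriv (-σ - κ)).comp σ ((hasDerivAt_neg σ).sub_const κ)
  refine (h1.mul h2).congr_deriv ?_
  unfold aa
  rw [Real.sin_sub]
  simp only [Function.comp, id]
  ring

/-- half profile glued with the middle part -/
noncomputable def K0 (κ ν : ℝ) (g : ℝ → ℝ) (σ : ℝ) : ℝ :=
  if σ ≤ κ then ν * Real.tan (ν * σ) else g (σ - κ)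

noncomputable def K0' (κ ν : ℝ) (g' : ℝ → ℝ) (σ : ℝ) : ℝ :=
  if σ ≤ κ then ν ^ 2 + (ν * Real.tan (ν * σ)) ^ 2 else g' (σ - κ)

variable {κ α lam ν : ℝ} {g g' : ℝ → ℝ}

lemma mid_cos (H : HalfProfile κ α lam ν g g') {σ : ℝ} (h : -(π/2) < σ) (h' : σ < π/2) :
    0 < Real.cos (ν * σ) := by
  have h1 := H.νpos
  have h2 := H.νle
  apply Real.cos_pos_of_mem_Ioo
  have hpi := Real.pi_pos
  constructor <;> nlinarith

lemma mid_deriv (H : HalfProfile κ α lam ν g g') {σ : ℝ} (h : -(π/2) < σ) (h' : σ < π/2) :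
    HasDerivAt (fun σ => ν * Real.tan (ν * σ)) (ν ^ 2 + (ν * Real.tan (ν * σ)) ^ 2) σ := by
  have hc := mid_cos H h h'
  have h1 := ((Real.hasDerivAt_tan hc.ne').comp σ ((hasDerivAt_id σ).const_mul ν)).const_mul ν
  refine h1.congr_deriv ?_
  have : 1 / Real.cos (ν * σ) ^ 2 = 1 + Real.tan (ν * σ) ^ 2 := by
    rw [Real.tan_eq_sin_div_cos]
    field_simp
    linarith [Real.sin_sq_add_cos_sq (ν * σ)]
  simp only [id, this]
  ring

lemma K0_deriv (H : HalfProfile κ α lam ν g g') {σ : ℝ} (h : σ ∈ Ioo (-κ) (π / 2 + κ)) :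
    HasDerivAt (K0 κ ν g) (K0' κ ν g' σ) σ := by
  have hκ := H.κpos
  have hκ' := H.κlt
  rcases lt_trichotomy σ κ with h1 | h1 | h1
  · have := mid_deriv H (σ := σ) (by linarith [h.1]) (by linarith)
    unfold K0'
    rw [if_pos h1.le]
    refine this.congr_of_eventuallyEq ?_
    filter_upwards [Iio_mem_nhds h1] with y hy
    unfold K0
    rw [if_pos (le_of_lt hy)]
  · subst h1
    have d1 := mid_deriv H (σ := σ) (by linarith) (by linarith)
    have d2 : HasDerivAt (fun y => g (y - σ)) (g' 0) σ := by
      have d3 : HasDerivAt g (g' 0) (σ - σ) := by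
        rw [sub_self]; exact H.hderiv 0 ⟨le_rfl, by linarith⟩
      exact HasDerivAt.comp_sub_const σ σ d3
    unfold K0'
    rw [if_pos le_rfl]
    rw [H.g'0] at d2
    refine glue_deriv d1 d2 ?_ ?_
    · intro x hx; unfold K0; rw [if_pos hx]
    · intro x hx; unfold K0
      rcases eq_or_lt_of_le hx with h2 | h2
      · rw [← h2, if_pos le_rfl, sub_self, H.g0]
      · rw [if_neg (not_le.2 h2)]
  · have d3 : HasDerivAt g (g' (σ - κ)) (σ - κ) := H.hderiv _ ⟨by linarith, by linarith [h.2]⟩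
    have d2 : HasDerivAt (fun y => g (y - κ)) (g' (σ - κ)) σ := by
      exact HasDerivAt.comp_sub_const σ κ d3
    unfold K0'
    rw [if_neg (not_le.2 h1)]
    refine d2.congr_of_eventuallyEq ?_
    filter_upwards [Ioi_mem_nhds h1] with y hy
    unfold K0
    rw [if_neg (not_le.2 hy)]

lemma K0'_cont (H : HalfProfile κ α lam ν g g') :
    ContinuousOn (K0' κ ν g') (Ioo (-κ) (π / 2 + κ)) := by
  have hκ := H.κpos
  have hκ' := H.κlt
  unfold K0'
  refine ContinuousOn.if ?_ ?_ ?_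
  · intro a ha
    have : a = κ := by
      have := ha.2
      rw [show {a : ℝ | a ≤ κ} = Iic κ from rfl, frontier_Iic] at this
      exact this
    rw [this, sub_self, H.g'0]
  · intro a ha
    have h2 : a ≤ κ := by
      have := ha.2
      rw [show {a : ℝ | a ≤ κ} = Iic κ from rfl, closure_Iic] at this
      exact this
    have := mid_deriv H (σ := a) (by linarith [ha.1.1]) (by linarith)
    exact (continuousAt_const.add (this.continuousAt.pow 2)).continuousWithinAt
  · have : ContinuousOn (fun a => g' (a - κ)) (Ico κ (π / 2 + κ)) :=
      H.hcont.comp (by fun_prop) (fun x hx => ⟨by linarith [hx.1], by linarith [hx.2]⟩)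
    refine this.mono ?_
    intro a ha
    have h2 : κ ≤ a := by
      have := ha.2
      rw [show {a : ℝ | ¬ a ≤ κ} = Ioi κ by ext; simp, closure_Ioi] at this
      exact this
    exact ⟨h2, ha.1.2⟩

/-- the full profile -/
noncomputable def kk (κ ν : ℝ) (g : ℝ → ℝ) (σ : ℝ) : ℝ :=
  if 0 ≤ σ then - K0 κ ν g σ else K0 κ ν g (-σ)

noncomputable def kk' (κ ν : ℝ) (g' : ℝ → ℝ) (σ : ℝ) : ℝ := - K0' κ ν g' |σ|

lemma kk_right (h0 : 0 < κ) {σ : ℝ} (h : -κ ≤ σ) : kk κ ν g σ = - K0 κ ν g σ := by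
  unfold kk
  split_ifs with h1
  · rfl
  · unfold K0
    rw [if_pos (by linarith), if_pos (by linarith)]
    rw [mul_neg, Real.tan_neg]; ring

lemma kk_left (h0 : 0 < κ) {σ : ℝ} (h : σ < κ) : kk κ ν g σ = K0 κ ν g (-σ) := by
  unfold kk
  split_ifs with h1
  · unfold K0
    rw [if_pos (by linarith), if_pos (by linarith)]
    rw [mul_neg, Real.tan_neg]; ring
  · rfl

lemma kk_neg (h0 : 0 < κ) (σ : ℝ) : kk κ ν g (-σ) = - kk κ ν g σ := by
  rcases le_or_gt 0 σ with h | h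
  · rw [kk_left h0 (by linarith), kk_right h0 (by linarith), neg_neg, neg_neg]
  · rw [kk_left h0 (show σ < κ by linarith), kk_right h0 (by linarith)]

lemma kk_deriv (H : HalfProfile κ α lam ν g g') {σ : ℝ} (h : σ ∈ Ioo (-(π / 2 + κ)) (π / 2 + κ)) :
    HasDerivAt (kk κ ν g) (kk' κ ν g' σ) σ := by
  have h0 := H.κpos
  unfold kk'
  rcases le_or_gt 0 σ with h1 | h1
  · rw [abs_of_nonneg h1]
    have := (K0_deriv H (σ := σ) ⟨by linarith, h.2⟩).neg
    refine this.congr_of_eventuallyEq ?_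
    filter_upwards [Ioi_mem_nhds (show -κ < σ by linarith)] with y hy
    exact kk_right h0 (le_of_lt hy)
  · rw [abs_of_neg h1]
    have := (K0_deriv H (σ := -σ) ⟨by linarith, by linarith [h.1]⟩).comp σ (hasDerivAt_neg σ)
    have h3 : HasDerivAt (fun y => K0 κ ν g (-y)) (-K0' κ ν g' (-σ)) σ :=
      this.congr_deriv (by ring)
    refine h3.congr_of_eventuallyEq ?_
    filter_upwards [Iio_mem_nhds (show σ < κ by linarith)] with y hy
    exact kk_left h0 hy

lemma kk'_cont (H : HalfProfile κ α lam ν g g') :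
    ContinuousOn (kk' κ ν g') (Ioo (-(π / 2 + κ)) (π / 2 + κ)) := by
  have h0 := H.κpos
  unfold kk'
  refine ((K0'_cont H).comp continuous_abs.continuousOn ?_).neg
  intro x hx
  exact ⟨by linarith [abs_nonneg x], abs_lt.2 hx⟩

lemma kk_ric (H : HalfProfile κ α lam ν g g') {σ : ℝ} (h : σ ∈ Ioo (-(π / 2 + κ)) (π / 2 + κ)) :
    α * (1 - α) / Real.cos (aa κ σ) ^ 2 ≤ -kk' κ ν g' σ - kk κ ν g σ ^ 2 - lam ^ 2 := by
  have h0 := H.κpos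
  wlog hσ : 0 ≤ σ with hw
  · have := hw H (σ := -σ) ⟨by linarith [h.2], by linarith [h.1]⟩ h0 (by linarith)
    rw [aa_neg, Real.cos_neg, kk_neg h0] at this
    unfold kk' at this ⊢
    rw [abs_neg] at this
    linarith
  rw [kk_right h0 (by linarith)]
  unfold kk' K0 K0'
  rw [abs_of_nonneg hσ]
  split_ifs with h1
  · rw [aa_mid (by linarith) h1, Real.cos_zero]
    have := H.mid
    rw [one_pow, div_one]
    linarith
  · rw [aa_right h0 (by linarith)]
    have := H.ric (σ - κ) ⟨by linarith, by linarith [h.2]⟩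
    linarith

lemma kk_jump_aux (H : HalfProfile κ α lam ν g g') {σ ω : ℝ}
    (h : σ ∈ Ioo (-(π / 2 + κ)) (π / 2 + κ)) (hω : ω ∈ Ioo (κ - π) (-κ)) :
    0 ≤ Real.sin ((σ - aa κ σ - ω) / 2) *
      (Real.cos (aa κ σ) * (lam * Real.sin (aa κ σ + (σ - aa κ σ - ω) / 2)
        + kk κ ν g σ * Real.cos (aa κ σ + (σ - aa κ σ - ω) / 2))
        + α * Real.sin ((σ - aa κ σ - ω) / 2)) := by
  have h0 := H.κpos
  have h0' := H.κlt
  have hpi := Real.pi_pos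
  rcases lt_or_ge κ σ with h1 | h1
  · rw [aa_right h0 h1.le, kk_right h0 (by linarith)]
    unfold K0
    rw [if_neg (not_le.2 h1)]
    rw [show σ - (σ - κ) - ω = κ - ω by ring]
    have hj := H.jump1 (σ - κ) ⟨by linarith, by linarith [h.2]⟩ ((κ - ω) / 2)
      ⟨by linarith [hω.2], by linarith [hω.1]⟩
    have hs : 0 < Real.sin ((κ - ω) / 2) :=
      Real.sin_pos_of_pos_of_lt_pi (by linarith [hω.2]) (by linarith [hω.1])
    refine mul_nonneg hs.le ?_
    refine hj.trans (le_of_eq ?_)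
    ring
  rcases lt_or_ge σ (-κ) with h2 | h2
  · rw [aa_left h0 h2.le, kk_left h0 (by linarith)]
    unfold K0
    rw [if_neg (by linarith)]
    rw [show σ - (σ + κ) - ω = -κ - ω by ring]
    have hj := H.jump2 (-σ - κ) ⟨by linarith, by linarith [h.1]⟩ ((-κ - ω) / 2)
      ⟨by linarith [hω.2], by linarith [hω.1]⟩
    have hs : 0 < Real.sin ((-κ - ω) / 2) :=
      Real.sin_pos_of_pos_of_lt_pi (by linarith [hω.2]) (by linarith [hω.1])
    refine mul_nonneg hs.le ?_
    rw [show σ + κ = -(-σ - κ) by ring, Real.cos_neg]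
    rw [show -(-σ - κ) + (-κ - ω) / 2 = (-κ - ω) / 2 - (-σ - κ) by ring]
    exact hj
  · rw [aa_mid h2 h1, kk_right h0 h2]
    unfold K0
    rw [if_pos h1, sub_zero, zero_add, Real.cos_zero, one_mul]
    set η := (σ - ω) / 2 with hη
    have hη0 : 0 < η := by linarith [hω.2]
    have hησ : σ ≤ η := by linarith [hω.2]
    have hη2 : η < π / 2 := by linarith [hω.1]
    have hs : 0 < Real.sin η := Real.sin_pos_of_pos_of_lt_pi hη0 (by linarith)
    have hc : 0 < Real.cos η := Real.cos_pos_of_mem_Ioo ⟨by linarith, hη2⟩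
    refine mul_nonneg hs.le ?_
    have hν := H.νpos
    have hν1 := H.νle
    have htan : Real.tan (ν * σ) ≤ Real.tan η := by
      rcases le_or_gt σ 0 with h3 | h3
      · have i1 : Real.tan (ν * σ) ≤ 0 := by
          apply Real.tan_nonpos_of_nonpos_of_neg_pi_div_two_le <;> nlinarith
        have i2 : 0 ≤ Real.tan η := Real.tan_nonneg_of_nonneg_of_le_pi_div_two hη0.le hη2.le
        linarith
      · have i0 : ν * σ ≤ σ := mul_le_of_le_one_left h3.le hν1
        rcases eq_or_lt_of_le (i0.trans hησ) with i | i
        · rw [i]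
        · exact (Real.tan_lt_tan_of_lt_of_lt_pi_div_two (by nlinarith) hη2 i).le
    have htc : Real.tan η * Real.cos η = Real.sin η := Real.tan_mul_cos hc.ne'
    have i3 : ν * Real.tan (ν * σ) * Real.cos η ≤ ν * Real.sin η := by
      rw [← htc, mul_assoc]
      gcongr
    have i4 := mul_le_mul_of_nonneg_right H.νle' hs.le
    linarith

lemma kk_jump (H : HalfProfile κ α lam ν g g') {σ ω : ℝ}
    (h : σ ∈ Ioo (-(π / 2 + κ)) (π / 2 + κ)) (hω : ω ∈ Ioo (κ - π) (-κ) ∨ ω ∈ Ioo κ (π - κ)) :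
    0 ≤ Real.sin ((σ - aa κ σ - ω) / 2) *
      (Real.cos (aa κ σ) * (lam * Real.sin (aa κ σ + (σ - aa κ σ - ω) / 2)
        + kk κ ν g σ * Real.cos (aa κ σ + (σ - aa κ σ - ω) / 2))
        + α * Real.sin ((σ - aa κ σ - ω) / 2)) := by
  rcases hω with hω | hω
  · exact kk_jump_aux H h hω
  · have := kk_jump_aux H (σ := -σ) (ω := -ω) ⟨by linarith [h.2], by linarith [h.1]⟩
      ⟨by linarith [hω.2], by linarith [hω.1]⟩
    rw [aa_neg, kk_neg H.κpos] at this
    rw [show (-σ - -aa κ σ - -ω) / 2 = -((σ - aa κ σ - ω) / 2) by ring] at this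
    rw [← neg_add, Real.cos_neg, Real.cos_neg, Real.sin_neg, Real.sin_neg] at this
    linarith

end HQ
end

section
namespace HQ

lemma forall3 {p : Fin 3 → Prop} (h0 : p 0) (h1 : p 1) (h2 : p 2) : ∀ i, p i := by
  intro i; fin_cases i
  · exact h0
  · exact h1
  · exact h2

lemma re_line (z e : ℂ) : HasDerivAt (fun t : ℝ => (z + t • e).re) e.re 0 := by
  have h : HasDerivAt (fun t : ℝ => z.re + t * e.re) (1 * e.re) 0 :=
    ((hasDerivAt_id (0:ℝ)).mul_const e.re).const_add z.re
  simpa using h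

lemma im_line (z e : ℂ) : HasDerivAt (fun t : ℝ => (z + t • e).im) e.im 0 := by
  have h : HasDerivAt (fun t : ℝ => z.im + t * e.im) (1 * e.im) 0 :=
    ((hasDerivAt_id (0:ℝ)).mul_const e.im).const_add z.im
  simpa using h

lemma arg_line {z : ℂ} (hz : z ∈ Complex.slitPlane) (e : ℂ) :
    HasDerivAt (fun t : ℝ => (z + t • e).arg) ((e / z).im) 0 := by
  have h1 : HasDerivAt (fun t : ℝ => z + t • e) e 0 := by
    simpa using ((hasDerivAt_id (0:ℝ)).smul_const e).const_add z
  have h2 := h1.clog_real (by simpa using hz)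
  have h3 := Complex.imCLM.hasFDerivAt.comp_hasDerivAt (0:ℝ) h2
  simpa [Function.comp_def, Complex.log_im] using h3

lemma norm_line {z : ℂ} (hz : z ≠ 0) (e : ℂ) :
    HasDerivAt (fun t : ℝ => ‖z + t • e‖) ((z.re * e.re + z.im * e.im) / ‖z‖) 0 := by
  have hn : 0 < ‖z‖ := norm_pos_iff.2 hz
  have h1 := ((re_line z e).fun_mul (re_line z e)).add ((im_line z e).fun_mul (im_line z e))
  have e1 : ∀ w : ℂ, w.re * w.re + w.im * w.im = ‖w‖ ^ 2 := fun w => by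
    rw [← Complex.normSq_apply, Complex.normSq_eq_norm_sq]
  have h2 := h1.sqrt (by
    simp only [zero_smul, add_zero, Pi.add_apply]; rw [e1]; positivity)
  have e2 : ∀ w : ℂ, √(w.re * w.re + w.im * w.im) = ‖w‖ := fun w => by
    rw [e1, Real.sqrt_sq (norm_nonneg _)]
  simp only [Pi.add_apply, e2, zero_smul, add_zero] at h2
  refine h2.congr_deriv ?_
  field_simp
  ring

/-- the sector -/
def sec (κ : ℝ) : Set ℂ := {z | z ∈ Complex.slitPlane ∧ z.arg ∈ Ioo (-(π / 2 + κ)) (π / 2 + κ)}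

lemma arg_contOn : ContinuousOn Complex.arg Complex.slitPlane := fun _ hz =>
  (Complex.continuousAt_arg hz).continuousWithinAt

lemma sec_open (κ : ℝ) : IsOpen (sec κ) :=
  arg_contOn.isOpen_inter_preimage Complex.isOpen_slitPlane isOpen_Ioo

/-- distance-like function to the reflex corner -/
noncomputable def dl (κ : ℝ) (z : ℂ) : ℝ := ‖z‖ * Real.cos (aa κ z.arg)

/-- affine function -/
noncomputable def ll (ω h : ℝ) (z : ℂ) : ℝ := Real.cos ω * z.re + Real.sin ω * z.im + h

lemma dl_line {κ : ℝ} (h0 : 0 < κ) {z : ℂ} (hz : z ∈ Complex.slitPlane) (e : ℂ) :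
    HasLineDerivAt ℝ (dl κ) (Real.cos (z.arg - aa κ z.arg) * e.re + Real.sin (z.arg - aa κ z.arg) * e.im) z e := by
  have hz0 := Complex.slitPlane_ne_zero hz
  have hn : 0 < ‖z‖ := norm_pos_iff.2 hz0
  have h1 := norm_line hz0 e
  have hA : HasDerivAt (fun σ => Real.cos (aa κ σ)) (-Real.sin (aa κ (z + (0:ℝ) • e).arg)) (z + (0:ℝ) • e).arg :=
    cos_aa_deriv h0 _
  have h2 := HasDerivAt.comp (h := fun t : ℝ => (z + t • e).arg) (0:ℝ) hA (arg_line hz e)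
  have h3 := h1.fun_mul h2
  unfold HasLineDerivAt dl
  refine h3.congr_deriv ?_
  simp only [zero_smul, add_zero, Function.comp]
  rw [Real.cos_sub, Real.sin_sub]
  have er : z.re = ‖z‖ * Real.cos z.arg := (Complex.norm_mul_cos_arg z).symm
  have ei : z.im = ‖z‖ * Real.sin z.arg := (Complex.norm_mul_sin_arg z).symm
  have eN : Complex.normSq z = ‖z‖ ^ 2 := Complex.normSq_eq_norm_sq z
  rw [Complex.div_im, eN]
  rw [er, ei]
  generalize Real.cos z.arg = c at *
  generalize Real.sin z.arg = s at *
  field_simp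
  ring

lemma ll_line (ω h : ℝ) (z e : ℂ) :
    HasLineDerivAt ℝ (ll ω h) (Real.cos ω * e.re + Real.sin ω * e.im) z e := by
  unfold HasLineDerivAt ll
  exact (((re_line z e).const_mul _).add ((im_line z e).const_mul _)).add_const h

/-- components of the corner field, with derivatives -/
noncomputable def P0 (lam : ℝ) (k : ℝ → ℝ) (z : ℂ) : ℝ := (lam * z.re - k z.arg * z.im) / ‖z‖ ^ 2
noncomputable def Q0 (lam : ℝ) (k : ℝ → ℝ) (z : ℂ) : ℝ := (lam * z.im + k z.arg * z.re) / ‖z‖ ^ 2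
noncomputable def P0x (lam : ℝ) (k k' : ℝ → ℝ) (z : ℂ) : ℝ :=
  (lam + k' z.arg * (z.im / ‖z‖ ^ 2) * z.im) / ‖z‖ ^ 2
    - (lam * z.re - k z.arg * z.im) * (2 * z.re) / ‖z‖ ^ 4
noncomputable def Q0y (lam : ℝ) (k k' : ℝ → ℝ) (z : ℂ) : ℝ :=
  (lam + k' z.arg * (z.re / ‖z‖ ^ 2) * z.re) / ‖z‖ ^ 2
    - (lam * z.im + k z.arg * z.re) * (2 * z.im) / ‖z‖ ^ 4

lemma P0_line {lam : ℝ} {k k' : ℝ → ℝ} {z : ℂ} (hz : z ∈ Complex.slitPlane)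
    (hk : HasDerivAt k (k' z.arg) z.arg) : HasLineDerivAt ℝ (P0 lam k) (P0x lam k k' z) z 1 := by
  have hz0 := Complex.slitPlane_ne_zero hz
  have hn : ‖z‖ ≠ 0 := norm_ne_zero_iff.2 hz0
  have hk' : HasDerivAt k (k' z.arg) (z + (0:ℝ) • (1:ℂ)).arg := by simpa using hk
  have h2 := HasDerivAt.comp (h := fun t : ℝ => (z + t • (1:ℂ)).arg) (0:ℝ) hk' (arg_line hz 1)
  have h3 := (((re_line z 1).const_mul lam).sub (h2.fun_mul (im_line z 1))).div
    ((norm_line hz0 1).fun_pow 2) (by simpa using hn)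
  unfold HasLineDerivAt P0
  refine h3.congr_deriv ?_
  unfold P0x
  simp only [zero_smul, add_zero, Function.comp, Complex.one_re, Complex.one_im, Complex.div_im,
    Complex.normSq_eq_norm_sq, Pi.sub_apply]
  generalize ‖z‖ = r at *
  field_simp
  simp
  ring

lemma Q0_line {lam : ℝ} {k k' : ℝ → ℝ} {z : ℂ} (hz : z ∈ Complex.slitPlane)
    (hk : HasDerivAt k (k' z.arg) z.arg) : HasLineDerivAt ℝ (Q0 lam k) (Q0y lam k k' z) z Complex.I := by
  have hz0 := Complex.slitPlane_ne_zero hz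
  have hn : ‖z‖ ≠ 0 := norm_ne_zero_iff.2 hz0
  have hk' : HasDerivAt k (k' z.arg) (z + (0:ℝ) • Complex.I).arg := by simpa using hk
  have h2 := HasDerivAt.comp (h := fun t : ℝ => (z + t • Complex.I).arg) (0:ℝ) hk' (arg_line hz Complex.I)
  have h3 := (((im_line z Complex.I).const_mul lam).add (h2.fun_mul (re_line z Complex.I))).div
    ((norm_line hz0 Complex.I).fun_pow 2) (by simpa using hn)
  unfold HasLineDerivAt Q0
  refine h3.congr_deriv ?_
  unfold Q0y
  simp only [zero_smul, add_zero, Function.comp, Complex.I_re, Complex.I_im, Complex.div_im,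
    Complex.normSq_eq_norm_sq, Pi.add_apply]
  generalize ‖z‖ = r at *
  field_simp
  simp
  ring

lemma inv_line {α b ω h : ℝ} {z e : ℂ} (hl : ll ω h z ≠ 0) :
    HasLineDerivAt ℝ (fun z => α * b / ll ω h z)
      (-(α * b * (Real.cos ω * e.re + Real.sin ω * e.im)) / ll ω h z ^ 2) z e := by
  have h1 : HasDerivAt (fun t : ℝ => ll ω h (z + t • e)) _ 0 := ll_line ω h z e
  have h2 := (hasDerivAt_const (0:ℝ) (α * b)).div h1 (by simpa using hl)
  unfold HasLineDerivAt
  refine h2.congr_deriv ?_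
  simp

lemma ll_cont (ω h : ℝ) : Continuous (ll ω h) := by
  unfold ll
  have := Complex.continuous_re
  have := Complex.continuous_im
  fun_prop

lemma dl_pos {κ : ℝ} (h0 : 0 < κ) {z : ℂ} (hz : z ∈ sec κ) : 0 < dl κ z := by
  have h1 : 0 < ‖z‖ := norm_pos_iff.2 (Complex.slitPlane_ne_zero hz.1)
  have h2 := Real.cos_pos_of_mem_Ioo (aa_mem h0 hz.2)
  exact mul_pos h1 h2

variable {κ α lam ν : ℝ} {g g' : ℝ → ℝ}

lemma jump_final (H : HalfProfile κ α lam ν g g') {ω h : ℝ}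
    (hω : ω ∈ Ioo (κ - π) (-κ) ∨ ω ∈ Ioo κ (π - κ)) {z : ℂ} (hz : z ∈ sec κ)
    (hl : 0 < ll ω h z) (hle : ll ω h z ≤ dl κ z) :
    0 ≤ (P0 lam (kk κ ν g) z - α * Real.cos ω / ll ω h z) * (Real.cos (z.arg - aa κ z.arg) - Real.cos ω) +
      (Q0 lam (kk κ ν g) z - α * Real.sin ω / ll ω h z) * (Real.sin (z.arg - aa κ z.arg) - Real.sin ω) := by
  have hj := kk_jump H hz.2 hω
  have hd := dl_pos H.κpos hz
  have hα := H.αpos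
  have hn : 0 < ‖z‖ := norm_pos_iff.2 (Complex.slitPlane_ne_zero hz.1)
  have hca := Real.cos_pos_of_mem_Ioo (aa_mem H.κpos hz.2)
  have er : z.re = ‖z‖ * Real.cos z.arg := (Complex.norm_mul_cos_arg z).symm
  have ei : z.im = ‖z‖ * Real.sin z.arg := (Complex.norm_mul_sin_arg z).symm
  set σ := z.arg with hσ
  set a := aa κ σ with ha
  set k := kk κ ν g σ with hk
  set L := ll ω h z with hL
  set η := (σ - a - ω) / 2 with hη
  have eP : P0 lam (kk κ ν g) z = (lam * Real.cos σ - k * Real.sin σ) / ‖z‖ := by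
    unfold P0; rw [← hσ, ← hk, er, ei]; field_simp
  have eQ : Q0 lam (kk κ ν g) z = (lam * Real.sin σ + k * Real.cos σ) / ‖z‖ := by
    unfold Q0; rw [← hσ, ← hk, er, ei]; field_simp
  rw [eP, eQ]
  have hτ : σ - a = ω + 2 * η := by rw [hη]; ring
  have hσ' : σ = ω + 2 * η + a := by linarith
  have t1 : Real.cos (σ - a) * Real.cos ω + Real.sin (σ - a) * Real.sin ω = 1 - 2 * Real.sin η ^ 2 := by
    rw [← Real.cos_sub, hτ, show ω + 2 * η - ω = 2 * η by ring, Real.cos_two_mul, Real.cos_sq']; ring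
  have t2 : Real.cos σ * (Real.cos (σ - a) - Real.cos ω) + Real.sin σ * (Real.sin (σ - a) - Real.sin ω)
      = 2 * Real.sin η * Real.sin (a + η) := by
    have : Real.cos σ * (Real.cos (σ - a) - Real.cos ω) + Real.sin σ * (Real.sin (σ - a) - Real.sin ω)
      = (Real.cos σ * Real.cos (σ - a) + Real.sin σ * Real.sin (σ - a)) - (Real.cos σ * Real.cos ω + Real.sin σ * Real.sin ω) := by ring
    rw [this, ← Real.cos_sub, ← Real.cos_sub, show σ - (σ - a) = (a + η) - η by ring,
      show σ - ω = (a + η) + η by rw [hη]; ring, Real.cos_sub, Real.cos_add (a + η) η]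
    ring
  have t3 : -Real.sin σ * (Real.cos (σ - a) - Real.cos ω) + Real.cos σ * (Real.sin (σ - a) - Real.sin ω)
      = 2 * Real.sin η * Real.cos (a + η) := by
    have : -Real.sin σ * (Real.cos (σ - a) - Real.cos ω) + Real.cos σ * (Real.sin (σ - a) - Real.sin ω)
      = -(Real.sin σ * Real.cos (σ - a) - Real.cos σ * Real.sin (σ - a)) + (Real.sin σ * Real.cos ω - Real.cos σ * Real.sin ω) := by ring
    rw [this, ← Real.sin_sub, ← Real.sin_sub, show σ - (σ - a) = (a + η) - η by ring,
      show σ - ω = (a + η) + η by rw [hη]; ring, Real.sin_sub, Real.sin_add (a + η) η]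
    ring
  have u1 := Real.sin_sq_add_cos_sq (σ - a)
  have u2 := Real.sin_sq_add_cos_sq ω
  have key : ((lam * Real.cos σ - k * Real.sin σ) / ‖z‖ - α * Real.cos ω / L) * (Real.cos (σ - a) - Real.cos ω) +
      ((lam * Real.sin σ + k * Real.cos σ) / ‖z‖ - α * Real.sin ω / L) * (Real.sin (σ - a) - Real.sin ω)
      = 2 * Real.sin η * (lam * Real.sin (a + η) + k * Real.cos (a + η)) / ‖z‖
        + α * (2 * Real.sin η ^ 2) / L := by
    have : ((lam * Real.cos σ - k * Real.sin σ) / ‖z‖ - α * Real.cos ω / L) * (Real.cos (σ - a) - Real.cos ω) +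
      ((lam * Real.sin σ + k * Real.cos σ) / ‖z‖ - α * Real.sin ω / L) * (Real.sin (σ - a) - Real.sin ω)
      = (lam * (Real.cos σ * (Real.cos (σ - a) - Real.cos ω) + Real.sin σ * (Real.sin (σ - a) - Real.sin ω))
        + k * (-Real.sin σ * (Real.cos (σ - a) - Real.cos ω) + Real.cos σ * (Real.sin (σ - a) - Real.sin ω))) / ‖z‖
        + α * ((Real.sin ω ^ 2 + Real.cos ω ^ 2) - (Real.cos (σ - a) * Real.cos ω + Real.sin (σ - a) * Real.sin ω)) / L := by ring
    rw [this, t1, t2, t3, u2]; ring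
  rw [key]
  have hdl : dl κ z = ‖z‖ * Real.cos a := rfl
  have h5 : α * (2 * Real.sin η ^ 2) / (‖z‖ * Real.cos a) ≤ α * (2 * Real.sin η ^ 2) / L := by
    rw [← hdl]
    gcongr
  have h6 : 0 ≤ 2 * Real.sin η * (lam * Real.sin (a + η) + k * Real.cos (a + η)) / ‖z‖
        + α * (2 * Real.sin η ^ 2) / (‖z‖ * Real.cos a) := by
    have : 2 * Real.sin η * (lam * Real.sin (a + η) + k * Real.cos (a + η)) / ‖z‖
        + α * (2 * Real.sin η ^ 2) / (‖z‖ * Real.cos a) =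
        2 * (Real.sin η * (Real.cos a * (lam * Real.sin (a + η) + k * Real.cos (a + η)) + α * Real.sin η)) / (‖z‖ * Real.cos a) := by
      field_simp
    rw [this]
    positivity
  linarith

end HQ
end

section
namespace HQ

variable {κ α lam ν : ℝ} {g g' : ℝ → ℝ}

/-- the working domain -/
def dom (κ ω₁ h₁ ω₂ h₂ : ℝ) : Set ℂ := {z | z ∈ sec κ ∧ 0 < ll ω₁ h₁ z ∧ 0 < ll ω₂ h₂ z}

theorem mixData_corner (H : HalfProfile κ α lam ν g g') (hα1 : α ≤ 1) {ω₁ ω₂ h₁ h₂ : ℝ}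
    (hω₁ : ω₁ ∈ Ioo (κ - π) (-κ)) (hω₂ : ω₂ ∈ Ioo κ (π - κ)) :
    MixData (dom κ ω₁ h₁ ω₂ h₂) (α * (1 - α)) ![dl κ, ll ω₁ h₁, ll ω₂ h₂]
      ![fun z => Real.cos (z.arg - aa κ z.arg), fun _ => Real.cos ω₁, fun _ => Real.cos ω₂]
      ![fun z => Real.sin (z.arg - aa κ z.arg), fun _ => Real.sin ω₁, fun _ => Real.sin ω₂]
      ![P0 lam (kk κ ν g), fun z => α * Real.cos ω₁ / ll ω₁ h₁ z, fun z => α * Real.cos ω₂ / ll ω₂ h₂ z]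
      ![Q0 lam (kk κ ν g), fun z => α * Real.sin ω₁ / ll ω₁ h₁ z, fun z => α * Real.sin ω₂ / ll ω₂ h₂ z]
      ![P0x lam (kk κ ν g) (kk' κ ν g'),
        fun z => -(α * Real.cos ω₁ * Real.cos ω₁) / ll ω₁ h₁ z ^ 2,
        fun z => -(α * Real.cos ω₂ * Real.cos ω₂) / ll ω₂ h₂ z ^ 2]
      ![Q0y lam (kk κ ν g) (kk' κ ν g'),
        fun z => -(α * Real.sin ω₁ * Real.sin ω₁) / ll ω₁ h₁ z ^ 2,
        fun z => -(α * Real.sin ω₂ * Real.sin ω₂) / ll ω₂ h₂ z ^ 2] := by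
  have h0 := H.κpos
  have hα := H.αpos
  set U := dom κ ω₁ h₁ ω₂ h₂ with hUdef
  have hsec : ∀ z ∈ U, z ∈ sec κ := fun z hz => hz.1
  have hslit : ∀ z ∈ U, z ∈ Complex.slitPlane := fun z hz => hz.1.1
  have hnz : ∀ z ∈ U, ‖z‖ ≠ 0 := fun z hz => norm_ne_zero_iff.2 (Complex.slitPlane_ne_zero hz.1.1)
  have hl1 : ∀ z ∈ U, 0 < ll ω₁ h₁ z := fun z hz => hz.2.1
  have hl2 : ∀ z ∈ U, 0 < ll ω₂ h₂ z := fun z hz => hz.2.2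
  have carg : ContinuousOn Complex.arg U := arg_contOn.mono hslit
  have caa : ContinuousOn (fun z : ℂ => aa κ z.arg) U := (aa_cont κ).comp_continuousOn carg
  have ck : ContinuousOn (fun z : ℂ => kk κ ν g z.arg) U := fun z hz =>
    (ContinuousAt.comp_continuousWithinAt (f := Complex.arg) (g := kk κ ν g)
      (kk_deriv H (hsec z hz).2).continuousAt (carg z hz))
  have ck' : ContinuousOn (fun z : ℂ => kk' κ ν g' z.arg) U :=
    (kk'_cont H).comp carg (fun z hz => (hsec z hz).2)
  have cre := Complex.continuous_re
  have cim := Complex.continuous_im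
  have cl1 := ll_cont ω₁ h₁
  have cl2 := ll_cont ω₂ h₂
  have hn2 : ∀ z ∈ U, ‖z‖ ^ 2 ≠ 0 := fun z hz => pow_ne_zero 2 (hnz z hz)
  have hn4 : ∀ z ∈ U, ‖z‖ ^ 4 ≠ 0 := fun z hz => pow_ne_zero 4 (hnz z hz)
  have cn2 : ContinuousOn (fun z : ℂ => ‖z‖ ^ 2) U := by fun_prop
  have cn4 : ContinuousOn (fun z : ℂ => ‖z‖ ^ 4) U := by fun_prop
  have cinv : ∀ (b : ℝ) (n : ℕ), ContinuousOn (fun z => b / ll ω₁ h₁ z ^ n) U ∧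
      ContinuousOn (fun z => b / ll ω₂ h₂ z ^ n) U := fun b n =>
    ⟨continuousOn_const.div (by fun_prop) (fun z hz => pow_ne_zero n (hl1 z hz).ne'),
      continuousOn_const.div (by fun_prop) (fun z hz => pow_ne_zero n (hl2 z hz).ne')⟩
  constructor
  · have e : U = sec κ ∩ (ll ω₁ h₁ ⁻¹' Ioi 0 ∩ ll ω₂ h₂ ⁻¹' Ioi 0) := rfl
    rw [e]
    exact (sec_open κ).inter ((isOpen_Ioi.preimage cl1).inter (isOpen_Ioi.preimage cl2))
  · exact mul_nonneg hα.le (by linarith)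
  · refine forall3 ?_ cl1.continuousOn cl2.continuousOn
    exact (continuous_norm.continuousOn).mul (Real.continuous_cos.comp_continuousOn caa)
  · refine forall3 ?_ continuousOn_const continuousOn_const
    exact Real.continuous_cos.comp_continuousOn (carg.sub caa)
  · refine forall3 ?_ continuousOn_const continuousOn_const
    exact Real.continuous_sin.comp_continuousOn (carg.sub caa)
  · refine forall3 ?_ (by simpa using (cinv (α * Real.cos ω₁) 1).1) (by simpa using (cinv (α * Real.cos ω₂) 1).2)
    exact ContinuousOn.div (by fun_prop) cn2 hn2
  · refine forall3 ?_ (by simpa using (cinv (α * Real.sin ω₁) 1).1) (by simpa using (cinv (α * Real.sin ω₂) 1).2)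
    exact ContinuousOn.div (by fun_prop) cn2 hn2
  · refine forall3 ?_ (cinv _ 2).1 (cinv _ 2).2
    have : ContinuousOn (fun z : ℂ => z.im / ‖z‖ ^ 2) U := ContinuousOn.div (by fun_prop) cn2 hn2
    exact (ContinuousOn.div (by fun_prop) cn2 hn2).sub (ContinuousOn.div (by fun_prop) cn4 hn4)
  · refine forall3 ?_ (cinv _ 2).1 (cinv _ 2).2
    have : ContinuousOn (fun z : ℂ => z.re / ‖z‖ ^ 2) U := ContinuousOn.div (by fun_prop) cn2 hn2
    exact (ContinuousOn.div (by fun_prop) cn2 hn2).sub (ContinuousOn.div (by fun_prop) cn4 hn4)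
  · refine forall3 ?_ ?_ ?_ <;> intro z hz
    · simpa using dl_line h0 (hslit z hz) 1
    · simpa using ll_line ω₁ h₁ z 1
    · simpa using ll_line ω₂ h₂ z 1
  · refine forall3 ?_ ?_ ?_ <;> intro z hz
    · simpa using dl_line h0 (hslit z hz) Complex.I
    · simpa using ll_line ω₁ h₁ z Complex.I
    · simpa using ll_line ω₂ h₂ z Complex.I
  · refine forall3 ?_ ?_ ?_ <;> intro z hz
    · exact P0_line (hslit z hz) (kk_deriv H (hsec z hz).2)
    · simpa using inv_line (α := α) (b := Real.cos ω₁) (e := 1) (hl1 z hz).ne'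
    · simpa using inv_line (α := α) (b := Real.cos ω₂) (e := 1) (hl2 z hz).ne'
  · refine forall3 ?_ ?_ ?_ <;> intro z hz
    · exact Q0_line (hslit z hz) (kk_deriv H (hsec z hz).2)
    · simpa using inv_line (α := α) (b := Real.sin ω₁) (e := Complex.I) (hl1 z hz).ne'
    · simpa using inv_line (α := α) (b := Real.sin ω₂) (e := Complex.I) (hl2 z hz).ne'
  · exact forall3 (fun z hz => dl_pos h0 (hsec z hz)) hl1 hl2
  · have hlin : ∀ ω L : ℝ, 0 < L → α * (1 - α) / L ^ 2 ≤ -(-(α * Real.cos ω * Real.cos ω) / L ^ 2) -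
        (-(α * Real.sin ω * Real.sin ω) / L ^ 2) - (α * Real.cos ω / L) ^ 2 - (α * Real.sin ω / L) ^ 2 := by
      intro ω L hL
      have e : -(-(α * Real.cos ω * Real.cos ω) / L ^ 2) -
        (-(α * Real.sin ω * Real.sin ω) / L ^ 2) - (α * Real.cos ω / L) ^ 2 - (α * Real.sin ω / L) ^ 2
        = (α - α ^ 2) * (Real.sin ω ^ 2 + Real.cos ω ^ 2) / L ^ 2 := by ring
      rw [e, Real.sin_sq_add_cos_sq]
      apply le_of_eq; ring
    refine forall3 ?_ (fun z hz => hlin ω₁ _ (hl1 z hz)) (fun z hz => hlin ω₂ _ (hl2 z hz))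
    intro z hz
    have hr := kk_ric H (hsec z hz).2
    have hn := hnz z hz
    have hca := Real.cos_pos_of_mem_Ioo (aa_mem h0 (hsec z hz).2)
    have eN : z.re ^ 2 + z.im ^ 2 = ‖z‖ ^ 2 := by
      rw [← Complex.normSq_eq_norm_sq, Complex.normSq_apply]; ring
    show α * (1 - α) / dl κ z ^ 2 ≤ -P0x lam (kk κ ν g) (kk' κ ν g') z - Q0y lam (kk κ ν g) (kk' κ ν g') z
      - P0 lam (kk κ ν g) z ^ 2 - Q0 lam (kk κ ν g) z ^ 2
    have e1 : -P0x lam (kk κ ν g) (kk' κ ν g') z - Q0y lam (kk κ ν g) (kk' κ ν g') z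
      - P0 lam (kk κ ν g) z ^ 2 - Q0 lam (kk κ ν g) z ^ 2 =
      (-kk' κ ν g' z.arg - kk κ ν g z.arg ^ 2 - lam ^ 2) / ‖z‖ ^ 2 := by
      unfold P0x Q0y P0 Q0
      generalize kk' κ ν g' z.arg = k'
      generalize kk κ ν g z.arg = k
      generalize ‖z‖ = r at *
      have : -((lam + k' * (z.im / r ^ 2) * z.im) / r ^ 2 - (lam * z.re - k * z.im) * (2 * z.re) / r ^ 4) -
        ((lam + k' * (z.re / r ^ 2) * z.re) / r ^ 2 - (lam * z.im + k * z.re) * (2 * z.im) / r ^ 4) -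
        ((lam * z.re - k * z.im) / r ^ 2) ^ 2 - ((lam * z.im + k * z.re) / r ^ 2) ^ 2
        = -2 * lam / r ^ 2 + (-k' + 2 * lam - lam ^ 2 - k ^ 2) * (z.re ^ 2 + z.im ^ 2) / r ^ 4 := by
        field_simp
        ring
      rw [this, eN]
      field_simp
      ring
    rw [e1]
    unfold dl
    rw [mul_pow, mul_comm (‖z‖ ^ 2), ← div_div]
    gcongr
  · intro z hz hle
    exact jump_final H (Or.inl hω₁) (hsec z hz) (hl1 z hz) hle
  · intro z hz hle
    exact jump_final H (Or.inr hω₂) (hsec z hz) (hl2 z hz) hle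
  · intro z hz
    have p1 := hl1 z hz
    have p2 := hl2 z hz
    show 0 ≤ (α * Real.cos ω₁ / ll ω₁ h₁ z - α * Real.cos ω₂ / ll ω₂ h₂ z) * (Real.cos ω₁ - Real.cos ω₂) +
      (α * Real.sin ω₁ / ll ω₁ h₁ z - α * Real.sin ω₂ / ll ω₂ h₂ z) * (Real.sin ω₁ - Real.sin ω₂)
    generalize ll ω₁ h₁ z = L1 at *
    generalize ll ω₂ h₂ z = L2 at *
    have u1 := Real.sin_sq_add_cos_sq ω₁
    have u2 := Real.sin_sq_add_cos_sq ω₂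
    have e : (α * Real.cos ω₁ / L1 - α * Real.cos ω₂ / L2) * (Real.cos ω₁ - Real.cos ω₂) +
      (α * Real.sin ω₁ / L1 - α * Real.sin ω₂ / L2) * (Real.sin ω₁ - Real.sin ω₂)
      = α / L1 * ((Real.sin ω₁ ^ 2 + Real.cos ω₁ ^ 2) - Real.cos (ω₁ - ω₂)) +
        α / L2 * ((Real.sin ω₂ ^ 2 + Real.cos ω₂ ^ 2) - Real.cos (ω₁ - ω₂)) := by
      rw [Real.cos_sub]; ring
    rw [e, u1, u2]
    have : 0 ≤ 1 - Real.cos (ω₁ - ω₂) := by linarith [Real.cos_le_one (ω₁ - ω₂)]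
    positivity

theorem hardy_corner (H : HalfProfile κ α lam ν g g') (hα1 : α ≤ 1) {ω₁ ω₂ h₁ h₂ : ℝ}
    (hω₁ : ω₁ ∈ Ioo (κ - π) (-κ)) (hω₂ : ω₂ ∈ Ioo κ (π - κ)) {v : ℂ → ℝ} (hv : ContDiff ℝ 1 v)
    (hcs : HasCompactSupport v) (hvU : tsupport v ⊆ dom κ ω₁ h₁ ω₂ h₂) :
    α * (1 - α) * (∫ z, v z ^ 2 / min (dl κ z) (min (ll ω₁ h₁ z) (ll ω₂ h₂ z)) ^ 2) ≤
      ∫ z, (fderiv ℝ v z 1 ^ 2 + fderiv ℝ v z Complex.I ^ 2) :=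
  mix (mixData_corner H hα1 hω₁ hω₂) hv hcs hvU

end HQ
end

section
namespace HQ

lemma lin_max {W : Set ℂ} (hW : IsOpen W) (hb : Bornology.IsBounded W) {p q M : ℝ} (hpq : 0 < p ^ 2 + q ^ 2)
    (hM : ∀ w ∈ frontier W, p * w.re + q * w.im ≤ M) {z : ℂ} (hz : z ∈ W) : p * z.re + q * z.im < M := by
  have hcont : Continuous (fun w : ℂ => p * w.re + q * w.im) := by fun_prop
  have step : ∀ w ∈ W, ∃ w' ∈ W, p * w.re + q * w.im < p * w'.re + q * w'.im := by
    intro w hw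
    have hc : Continuous (fun t : ℝ => w + t * (⟨p, q⟩ : ℂ)) := by fun_prop
    have h1 : ∀ᶠ t : ℝ in nhds (0:ℝ), w + (t : ℂ) * (⟨p, q⟩ : ℂ) ∈ W :=
      hc.continuousAt.preimage_mem_nhds (by simpa using hW.mem_nhds hw)
    obtain ⟨δ, hδ, hd⟩ := Metric.eventually_nhds_iff.1 h1
    refine ⟨w + (δ / 2 : ℝ) * (⟨p, q⟩ : ℂ), hd (by rw [Real.dist_eq, sub_zero, abs_of_pos (by positivity)]; linarith), ?_⟩
    simp only [Complex.add_re, Complex.add_im, Complex.re_ofReal_mul, Complex.im_ofReal_mul]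
    nlinarith
  have hK : IsCompact (closure W) := hb.isCompact_closure
  obtain ⟨m, hm, hmax⟩ := hK.exists_isMaxOn ⟨z, subset_closure hz⟩ hcont.continuousOn
  have hmW : m ∉ W := by
    intro h
    obtain ⟨w', hw', hlt⟩ := step m h
    exact absurd (hmax (subset_closure hw')) (not_le.2 hlt)
  have hmf : m ∈ frontier W := by rw [hW.frontier_eq]; exact ⟨hm, hmW⟩
  obtain ⟨w', hw', hlt⟩ := step z hz
  exact hlt.trans_le ((hmax (subset_closure hw')).trans (hM m hmf))

lemma seg_lin {X Y w : ℂ} (hw : w ∈ segment ℝ X Y) {p q M : ℝ} (hX : p * X.re + q * X.im ≤ M)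
    (hY : p * Y.re + q * Y.im ≤ M) : p * w.re + q * w.im ≤ M := by
  obtain ⟨s, t, hs, ht, hst, rfl⟩ := hw
  simp only [Complex.add_re, Complex.add_im, Complex.real_smul, Complex.re_ofReal_mul, Complex.im_ofReal_mul]
  have hs' : s = 1 - t := by linarith
  subst hs'
  nlinarith [mul_le_mul_of_nonneg_left hX hs, mul_le_mul_of_nonneg_left hY ht]

lemma dir_le (τ : ℝ) (z : ℂ) : Real.cos τ * z.re + Real.sin τ * z.im ≤ ‖z‖ := by
  have h := Real.sin_sq_add_cos_sq τ
  refine le_of_sq_le_sq ?_ (norm_nonneg z)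
  rw [← Complex.normSq_eq_norm_sq, Complex.normSq_apply]
  nlinarith [sq_nonneg (Real.cos τ * z.im - Real.sin τ * z.re)]

/-- the line through `A` and `C` -/
lemma line_exists {κ a x y : ℝ} (h0 : 0 < κ) (h1 : κ < π / 2) (ha : 0 < a)
    (hp : 0 < Real.cos κ * x + Real.sin κ * y) (hm : 0 < Real.cos κ * x - Real.sin κ * y) :
    ∃ ω h ρ : ℝ, 0 < ρ ∧ ω ∈ Ioo (κ - π) (-κ) ∧ ∀ z : ℂ, ll ω h z * ρ =
      (y - a * Real.cos κ) * z.re - (x + a * Real.sin κ) * z.im + a * (Real.sin κ * y + Real.cos κ * x) := by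
  have hpi := Real.pi_pos
  have hc : 0 < Real.cos κ := Real.cos_pos_of_mem_Ioo ⟨by linarith, h1⟩
  have hs : 0 < Real.sin κ := Real.sin_pos_of_pos_of_lt_pi h0 (by linarith)
  have hx : 0 < x := by
    have : 0 < Real.cos κ * x := by linarith
    exact pos_of_mul_pos_right this hc.le
  have hX : 0 < x + a * Real.sin κ := by positivity
  set n : ℂ := ⟨y - a * Real.cos κ, -(x + a * Real.sin κ)⟩ with hn
  have hn0 : n ≠ 0 := by
    intro h
    have := congrArg Complex.im h
    simp [hn] at this
    linarith
  have hρ : 0 < ‖n‖ := norm_pos_iff.2 hn0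
  have er : ‖n‖ * Real.cos n.arg = y - a * Real.cos κ := Complex.norm_mul_cos_arg n
  have ei : ‖n‖ * Real.sin n.arg = -(x + a * Real.sin κ) := Complex.norm_mul_sin_arg n
  have hneg : n.arg < 0 := Complex.arg_neg_iff.2 (by simp [hn]; linarith)
  have hgt := Complex.neg_pi_lt_arg n
  have s1 : Real.sin (n.arg + κ) < 0 := by
    have : ‖n‖ * Real.sin (n.arg + κ) < 0 := by
      rw [Real.sin_add, show ‖n‖ * (Real.sin n.arg * Real.cos κ + Real.cos n.arg * Real.sin κ) =
        (‖n‖ * Real.sin n.arg) * Real.cos κ + (‖n‖ * Real.cos n.arg) * Real.sin κ by ring, er, ei]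
      nlinarith [mul_pos (mul_pos ha hs) hc]
    exact (pos_iff_neg_of_mul_neg this).1 hρ
  have s2 : Real.sin (n.arg - κ) < 0 := by
    have : ‖n‖ * Real.sin (n.arg - κ) < 0 := by
      rw [Real.sin_sub, show ‖n‖ * (Real.sin n.arg * Real.cos κ - Real.cos n.arg * Real.sin κ) =
        (‖n‖ * Real.sin n.arg) * Real.cos κ - (‖n‖ * Real.cos n.arg) * Real.sin κ by ring, er, ei]
      nlinarith
    exact (pos_iff_neg_of_mul_neg this).1 hρ
  refine ⟨n.arg, a * (Real.sin κ * y + Real.cos κ * x) / ‖n‖, ‖n‖, hρ, ⟨?_, ?_⟩, ?_⟩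
  · by_contra hcon
    push Not at hcon
    have := Real.sin_nonneg_of_nonneg_of_le_pi (x := n.arg - κ + 2 * π) (by linarith) (by linarith)
    rw [Real.sin_add_two_pi] at this
    linarith
  · by_contra hcon
    push Not at hcon
    have := Real.sin_nonneg_of_nonneg_of_le_pi (x := n.arg + κ) (by linarith) (by linarith)
    linarith
  · intro z
    unfold ll
    rw [add_mul, div_mul_cancel₀ _ hρ.ne']
    linear_combination z.re * er + z.im * ei

lemma ll_conj (ω h : ℝ) (z : ℂ) : ll (-ω) h z = ll ω h ((starRingEnd ℂ) z) := by
  unfold ll; simp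

set_option maxHeartbeats 2000000 in
theorem geo {κ a b : ℝ} (h0 : 0 < κ) (h1 : κ < π / 2) (ha : 0 < a) (hb : 0 < b) {A B C : ℂ}
    (hA : A = ⟨-(a * Real.sin κ), a * Real.cos κ⟩) (hB : B = ⟨-(b * Real.sin κ), -(b * Real.cos κ)⟩)
    {W : Set ℂ} (hW : IsOpen W) (hbd : Bornology.IsBounded W)
    (hf : ∀ w ∈ frontier W, w ∈ segment ℝ 0 A ∨ w ∈ segment ℝ 0 B ∨ w ∈ segment ℝ A C ∨ w ∈ segment ℝ B C)
    (hpos : ∃ r : ℝ, 0 < r ∧ (r : ℂ) ∈ W) (hneg : ∃ r : ℝ, 0 < r ∧ (-r : ℂ) ∉ W) :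
    ∃ ω₁ h₁ ω₂ h₂, ω₁ ∈ Ioo (κ - π) (-κ) ∧ ω₂ ∈ Ioo κ (π - κ) ∧ W ⊆ dom κ ω₁ h₁ ω₂ h₂ ∧
      ∀ z ∈ W, ∀ w ∈ frontier W, min (dl κ z) (min (ll ω₁ h₁ z) (ll ω₂ h₂ z)) ≤ dist z w := by
  have hpi := Real.pi_pos
  have hc : 0 < Real.cos κ := Real.cos_pos_of_mem_Ioo ⟨by linarith, h1⟩
  have hs : 0 < Real.sin κ := Real.sin_pos_of_pos_of_lt_pi h0 (by linarith)
  have hsc := mul_pos hs hc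
  obtain ⟨r, hr, hrW⟩ := hpos
  have hAr : A.re = -(a * Real.sin κ) := by rw [hA]
  have hAi : A.im = a * Real.cos κ := by rw [hA]
  have hBr : B.re = -(b * Real.sin κ) := by rw [hB]
  have hBi : B.im = -(b * Real.cos κ) := by rw [hB]
  have hasc := mul_pos ha hsc
  have hbsc := mul_pos hb hsc
  -- position of C
  have hp : 0 < Real.cos κ * C.re + Real.sin κ * C.im := by
    by_contra hcon
    push Not at hcon
    have := lin_max hW hbd (p := Real.cos κ) (q := Real.sin κ) (M := 0) (by positivity) (by
      intro w hw
      have e1 : Real.cos κ * A.re + Real.sin κ * A.im ≤ 0 := by rw [hAr, hAi]; nlinarith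
      have e2 : Real.cos κ * B.re + Real.sin κ * B.im ≤ 0 := by rw [hBr, hBi]; nlinarith
      rcases hf w hw with h | h | h | h
      · exact seg_lin h (by simp) e1
      · exact seg_lin h (by simp) e2
      · exact seg_lin h e1 hcon
      · exact seg_lin h e2 hcon) hrW
    simp at this
    nlinarith
  have hm : 0 < Real.cos κ * C.re - Real.sin κ * C.im := by
    by_contra hcon
    push Not at hcon
    have hcon : Real.cos κ * C.re + (-Real.sin κ) * C.im ≤ 0 := by linarith
    have := lin_max hW hbd (p := Real.cos κ) (q := -Real.sin κ) (M := 0) (by positivity) (by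
      intro w hw
      have e1 : Real.cos κ * A.re + (-Real.sin κ) * A.im ≤ 0 := by rw [hAr, hAi]; nlinarith
      have e2 : Real.cos κ * B.re + (-Real.sin κ) * B.im ≤ 0 := by rw [hBr, hBi]; nlinarith
      rcases hf w hw with h | h | h | h
      · exact seg_lin h (by simp) e1
      · exact seg_lin h (by simp) e2
      · exact seg_lin h e1 hcon
      · exact seg_lin h e2 hcon) hrW
    simp at this
    nlinarith
  obtain ⟨ω₁, h₁, ρ₁, hρ₁, hω₁, hl₁⟩ := line_exists h0 h1 ha hp hm
  obtain ⟨ω', h₂, ρ₂, hρ₂, hω', hl'⟩ := line_exists h0 h1 hb (x := C.re) (y := -C.im) (by linarith) (by linarith)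
  have hl₂ : ∀ z : ℂ, ll (-ω') h₂ z * ρ₂ =
      (-C.im - b * Real.cos κ) * z.re + (C.re + b * Real.sin κ) * z.im +
        b * (-Real.sin κ * C.im + Real.cos κ * C.re) := by
    intro z
    rw [ll_conj, hl']
    simp only [Complex.conj_re, Complex.conj_im]
    ring
  have hCre : 0 < C.re := by
    have : 0 < Real.cos κ * C.re := by linarith
    exact pos_of_mul_pos_right this hc.le
  -- values
  have z1 : ∀ w, w ∈ segment ℝ A C → ll ω₁ h₁ w = 0 := by
    intro w hw
    have hA0 : (C.im - a * Real.cos κ) * A.re - (C.re + a * Real.sin κ) * A.im +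
      a * (Real.sin κ * C.im + Real.cos κ * C.re) = 0 := by rw [hAr, hAi]; ring
    have hC0 : (C.im - a * Real.cos κ) * C.re - (C.re + a * Real.sin κ) * C.im +
      a * (Real.sin κ * C.im + Real.cos κ * C.re) = 0 := by ring
    have e : ll ω₁ h₁ w * ρ₁ = 0 := by
      rw [hl₁]
      obtain ⟨s, t, hs', ht', hst, rfl⟩ := hw
      simp only [Complex.add_re, Complex.add_im, Complex.real_smul, Complex.re_ofReal_mul, Complex.im_ofReal_mul]
      have hs2 : s = 1 - t := by linarith
      subst hs2
      linear_combination (1 - t) * hA0 + t * hC0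
    exact (mul_eq_zero.1 e).resolve_right hρ₁.ne'
  have z2 : ∀ w, w ∈ segment ℝ B C → ll (-ω') h₂ w = 0 := by
    intro w hw
    have hA0 : (-C.im - b * Real.cos κ) * B.re + (C.re + b * Real.sin κ) * B.im +
        b * (-Real.sin κ * C.im + Real.cos κ * C.re) = 0 := by rw [hBr, hBi]; ring
    have hC0 : (-C.im - b * Real.cos κ) * C.re + (C.re + b * Real.sin κ) * C.im +
        b * (-Real.sin κ * C.im + Real.cos κ * C.re) = 0 := by ring
    have e : ll (-ω') h₂ w * ρ₂ = 0 := by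
      rw [hl₂]
      obtain ⟨s, t, hs', ht', hst, rfl⟩ := hw
      simp only [Complex.add_re, Complex.add_im, Complex.real_smul, Complex.re_ofReal_mul, Complex.im_ofReal_mul]
      have hs2 : s = 1 - t := by linarith
      subst hs2
      linear_combination (1 - t) * hA0 + t * hC0
    exact (mul_eq_zero.1 e).resolve_right hρ₂.ne'
  have p1 : ∀ z ∈ W, 0 < ll ω₁ h₁ z := by
    intro z hz
    have := lin_max hW hbd (p := -(C.im - a * Real.cos κ)) (q := C.re + a * Real.sin κ)
      (M := a * (Real.sin κ * C.im + Real.cos κ * C.re)) (by positivity) (by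
      intro w hw
      have e0 : -(C.im - a * Real.cos κ) * (0:ℂ).re + (C.re + a * Real.sin κ) * (0:ℂ).im ≤
         a * (Real.sin κ * C.im + Real.cos κ * C.re) := by
        simp only [Complex.zero_re, Complex.zero_im]; nlinarith
      have e1 : -(C.im - a * Real.cos κ) * A.re + (C.re + a * Real.sin κ) * A.im ≤
         a * (Real.sin κ * C.im + Real.cos κ * C.re) := by rw [hAr, hAi]; nlinarith
      have e2 : -(C.im - a * Real.cos κ) * B.re + (C.re + a * Real.sin κ) * B.im ≤
         a * (Real.sin κ * C.im + Real.cos κ * C.re) := by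
        rw [hBr, hBi]; nlinarith [mul_pos ha hp, mul_pos hb hm, mul_pos (mul_pos ha hb) hsc]
      have e3 : -(C.im - a * Real.cos κ) * C.re + (C.re + a * Real.sin κ) * C.im ≤
         a * (Real.sin κ * C.im + Real.cos κ * C.re) := by nlinarith
      rcases hf w hw with h | h | h | h
      · exact seg_lin h e0 e1
      · exact seg_lin h e0 e2
      · exact seg_lin h e1 e3
      · exact seg_lin h e2 e3) hz
    have e := hl₁ z
    exact pos_of_mul_pos_left (b := ρ₁) (by rw [e]; linarith) hρ₁.le
  have p2 : ∀ z ∈ W, 0 < ll (-ω') h₂ z := by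
    intro z hz
    have := lin_max hW hbd (p := -(-C.im - b * Real.cos κ)) (q := -(C.re + b * Real.sin κ))
      (M := b * (-Real.sin κ * C.im + Real.cos κ * C.re))
      (by have : 0 < C.re + b * Real.sin κ := by positivity
          nlinarith [sq_nonneg (-(-C.im - b * Real.cos κ))]) (by
      intro w hw
      have e0 : -(-C.im - b * Real.cos κ) * (0:ℂ).re + -(C.re + b * Real.sin κ) * (0:ℂ).im ≤
         b * (-Real.sin κ * C.im + Real.cos κ * C.re) := by
        simp only [Complex.zero_re, Complex.zero_im]; nlinarith
      have e1 : -(-C.im - b * Real.cos κ) * A.re + -(C.re + b * Real.sin κ) * A.im ≤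
         b * (-Real.sin κ * C.im + Real.cos κ * C.re) := by
        rw [hAr, hAi]; nlinarith [mul_pos ha hp, mul_pos hb hm, mul_pos (mul_pos ha hb) hsc]
      have e2 : -(-C.im - b * Real.cos κ) * B.re + -(C.re + b * Real.sin κ) * B.im ≤
         b * (-Real.sin κ * C.im + Real.cos κ * C.re) := by rw [hBr, hBi]; nlinarith
      have e3 : -(-C.im - b * Real.cos κ) * C.re + -(C.re + b * Real.sin κ) * C.im ≤
         b * (-Real.sin κ * C.im + Real.cos κ * C.re) := by nlinarith
      rcases hf w hw with h | h | h | h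
      · exact seg_lin h e0 e1
      · exact seg_lin h e0 e2
      · exact seg_lin h e1 e3
      · exact seg_lin h e2 e3) hz
    have e := hl₂ z
    exact pos_of_mul_pos_left (b := ρ₂) (by rw [e]; linarith) hρ₂.le
  -- W misses the wedge
  have hQ : ∀ z ∈ W, ¬ (Real.cos κ * z.re + Real.sin κ * z.im < 0 ∧ Real.cos κ * z.re - Real.sin κ * z.im < 0) := by
    intro z hz hzQ
    set Q : Set ℂ := {z | Real.cos κ * z.re + Real.sin κ * z.im < 0 ∧ Real.cos κ * z.re - Real.sin κ * z.im < 0} with hQd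
    have hconv : Convex ℝ Q := by
      intro x hx y hy s t hs' ht' hst
      obtain ⟨hx1, hx2⟩ := hx
      obtain ⟨hy1, hy2⟩ := hy
      have hs2 : s = 1 - t := by linarith
      subst hs2
      simp only [hQd, mem_ofPred_eq, Complex.add_re, Complex.add_im, Complex.real_smul, Complex.re_ofReal_mul, Complex.im_ofReal_mul]
      rcases eq_or_lt_of_le ht' with h | h
      · subst h; constructor <;> linarith
      · constructor
        · nlinarith [mul_nonneg hs' (neg_nonneg.2 hx1.le), mul_pos h (neg_pos.2 hy1)]
        · nlinarith [mul_nonneg hs' (neg_nonneg.2 hx2.le), mul_pos h (neg_pos.2 hy2)]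
    obtain ⟨δ, hδ, hδW⟩ := hneg
    have hδQ : (-δ : ℂ) ∈ Q := by
      simp only [hQd, mem_ofPred_eq, Complex.neg_re, Complex.neg_im, Complex.ofReal_re, Complex.ofReal_im]
      have := mul_pos hc hδ
      constructor <;> linarith
    have hex : ∃ w, w ∈ Q ∧ w ∈ frontier W := by
      by_contra hcon
      push Not at hcon
      have hsub : Q ⊆ W := by
        refine IsPreconnected.subset_left_of_subset_union (v := (closure W)ᶜ) hW isClosed_closure.isOpen_compl ?_ ?_
          ⟨z, hzQ, hz⟩ hconv.isPreconnected
        · exact disjoint_compl_right.mono_left subset_closure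
        · intro w hw
          by_cases h : w ∈ closure W
          · left
            by_contra h'
            exact hcon w hw (by rw [hW.frontier_eq]; exact ⟨h, h'⟩)
          · exact Or.inr h
      exact hδW (hsub hδQ)
    obtain ⟨w, hwQ, hwf⟩ := hex
    obtain ⟨q1, q2⟩ := hwQ
    have eA : -Real.cos κ * A.re + -Real.sin κ * A.im ≤ 0 := by rw [hAr, hAi]; nlinarith
    have eB : -Real.cos κ * B.re + Real.sin κ * B.im ≤ 0 := by rw [hBr, hBi]; nlinarith
    rcases hf w hwf with h | h | h | h
    · have := seg_lin h (p := -Real.cos κ) (q := -Real.sin κ) (M := 0) (by simp) eA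
      linarith
    · have := seg_lin h (p := -Real.cos κ) (q := Real.sin κ) (M := 0) (by simp) eB
      linarith
    · have := seg_lin h (p := -Real.cos κ) (q := -Real.sin κ) (M := 0) eA (by linarith)
      linarith
    · have := seg_lin h (p := -Real.cos κ) (q := Real.sin κ) (M := 0) eB (by linarith)
      linarith
  have hsec : W ⊆ sec κ := by
    intro z hz
    have hor : 0 < Real.cos κ * z.re + Real.sin κ * z.im ∨ 0 < Real.cos κ * z.re - Real.sin κ * z.im := by
      by_contra hcon
      push Not at hcon
      have hcc : Continuous (fun t : ℝ => z + t) := by fun_prop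
      have he : ∀ᶠ t : ℝ in nhds (0:ℝ), z + (t : ℂ) ∈ W :=
        hcc.continuousAt.preimage_mem_nhds (by simpa using hW.mem_nhds hz)
      obtain ⟨δ, hδ, hd⟩ := Metric.eventually_nhds_iff.1 he
      have hh := hd (y := -(δ / 2)) (by rw [Real.dist_eq, sub_zero, abs_neg, abs_of_pos (by positivity)]; linarith)
      refine hQ _ hh ?_
      simp only [Complex.add_re, Complex.add_im, Complex.ofReal_re, Complex.ofReal_im]
      constructor <;> nlinarith [mul_pos hc hδ]
    have er := Complex.norm_mul_cos_arg z
    have ei := Complex.norm_mul_sin_arg z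
    have e1 : Real.cos κ * z.re + Real.sin κ * z.im = ‖z‖ * Real.cos (z.arg - κ) := by
      rw [Real.cos_sub]; linear_combination -Real.cos κ * er - Real.sin κ * ei
    have e2 : Real.cos κ * z.re - Real.sin κ * z.im = ‖z‖ * Real.cos (z.arg + κ) := by
      rw [Real.cos_add]; linear_combination -Real.cos κ * er + Real.sin κ * ei
    have hg := Complex.neg_pi_lt_arg z
    have hl := Complex.arg_le_pi z
    have harg : z.arg ∈ Ioo (-(π / 2 + κ)) (π / 2 + κ) := by
      rcases hor with h | h
      · rw [e1] at h
        have hcp : 0 < Real.cos (z.arg - κ) := pos_of_mul_pos_right h (norm_nonneg _)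
        constructor
        · by_contra hcon; push Not at hcon
          have := Real.cos_nonpos_of_pi_div_two_le_of_le (x := z.arg - κ + 2 * π) (by linarith) (by linarith)
          rw [Real.cos_add_two_pi] at this; linarith
        · by_contra hcon; push Not at hcon
          have := Real.cos_nonpos_of_pi_div_two_le_of_le (x := z.arg - κ) (by linarith) (by linarith)
          linarith
      · rw [e2] at h
        have hcp : 0 < Real.cos (z.arg + κ) := pos_of_mul_pos_right h (norm_nonneg _)
        constructor
        · by_contra hcon; push Not at hcon
          have := Real.cos_nonpos_of_pi_div_two_le_of_le (x := -(z.arg + κ)) (by linarith) (by linarith)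
          rw [Real.cos_neg] at this; linarith
        · by_contra hcon; push Not at hcon
          have := Real.cos_nonpos_of_pi_div_two_le_of_le (x := z.arg + κ) (by linarith) (by linarith)
          linarith
    refine ⟨?_, harg⟩
    rw [Complex.mem_slitPlane_iff_arg]
    refine ⟨fun h => by rw [h] at harg; linarith [harg.2], ?_⟩
    rintro rfl
    simp at hor
  refine ⟨ω₁, h₁, -ω', h₂, hω₁, ⟨by linarith [hω'.2], by linarith [hω'.1]⟩, fun z hz => ⟨hsec hz, p1 z hz, p2 z hz⟩, ?_⟩
  intro z hz w hw
  have hll : ∀ ω h, ll ω h w = 0 → ll ω h z ≤ dist z w := by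
    intro ω h hw0
    have := dir_le ω (z - w)
    rw [dist_eq_norm]
    unfold ll at hw0 ⊢
    simp only [Complex.sub_re, Complex.sub_im] at this
    linarith
  have hzs := (hsec hz).2
  set σ := z.arg with hσ
  set τ := σ - aa κ σ with hτ
  have hτm : -κ ≤ τ ∧ τ ≤ κ := by
    rcases le_total σ κ with h | h
    · rcases le_total (-κ) σ with h' | h'
      · rw [hτ, aa_mid h' h]; constructor <;> linarith
      · rw [hτ, aa_left h0 h']; constructor <;> linarith
    · rw [hτ, aa_right h0 h]; constructor <;> linarith
  have hdl : dl κ z = Real.cos τ * z.re + Real.sin τ * z.im := by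
    have er := Complex.norm_mul_cos_arg z
    have ei := Complex.norm_mul_sin_arg z
    unfold dl
    rw [← hσ, show aa κ σ = σ - τ by rw [hτ]; ring, Real.cos_sub]
    linear_combination Real.cos τ * er + Real.sin τ * ei
  have hcor : Real.cos τ * w.re + Real.sin τ * w.im ≤ 0 → dl κ z ≤ dist z w := by
    intro h
    have := dir_le τ (z - w)
    rw [dist_eq_norm, hdl]
    simp only [Complex.sub_re, Complex.sub_im] at this
    linarith
  rcases hf w hw with h | h | h | h
  · refine (min_le_left _ _).trans (hcor (seg_lin h (by simp) ?_))
    have e : Real.cos τ * A.re + Real.sin τ * A.im = -(a * Real.sin (κ - τ)) := by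
      rw [hAr, hAi, Real.sin_sub κ τ]; ring
    have := Real.sin_nonneg_of_nonneg_of_le_pi (x := κ - τ) (by linarith) (by linarith)
    rw [e]; nlinarith
  · refine (min_le_left _ _).trans (hcor (seg_lin h (by simp) ?_))
    have e : Real.cos τ * B.re + Real.sin τ * B.im = -(b * Real.sin (κ + τ)) := by
      rw [hBr, hBi, Real.sin_add κ τ]; ring
    have := Real.sin_nonneg_of_nonneg_of_le_pi (x := κ + τ) (by linarith) (by linarith)
    rw [e]; nlinarith
  · exact (min_le_right _ _).trans ((min_le_left _ _).trans (hll _ _ (z1 w h)))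
  · exact (min_le_right _ _).trans ((min_le_right _ _).trans (hll _ _ (z2 w h)))

end HQ
end

section
namespace HQ

lemma rot_exists {P Q : ℂ} {κ : ℝ} (hP : P ≠ 0) (hQ : Q ≠ 0) (h0 : 0 < κ) (h1 : κ < π / 2)
    (hang : InnerProductGeometry.angle P Q = π - 2 * κ) :
    ∃ (f : ℂ ≃ₗᵢ[ℝ] ℂ) (a b : ℝ), 0 < a ∧ 0 < b ∧ f P = ⟨-(a * Real.sin κ), a * Real.cos κ⟩ ∧
      f Q = ⟨-(b * Real.sin κ), -(b * Real.cos κ)⟩ := by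
  have main : ∀ P Q : ℂ, P ≠ 0 → Q ≠ 0 → (Q / P).arg = π - 2 * κ →
      ∃ (f : ℂ ≃ₗᵢ[ℝ] ℂ) (a b : ℝ), 0 < a ∧ 0 < b ∧ f P = ⟨-(a * Real.sin κ), a * Real.cos κ⟩ ∧
      f Q = ⟨-(b * Real.sin κ), -(b * Real.cos κ)⟩ := by
    intro P Q hP hQ harg
    have hPn : 0 < ‖P‖ := norm_pos_iff.2 hP
    have hQn : 0 < ‖Q‖ := norm_pos_iff.2 hQ
    set θ : ℝ := π / 2 + κ - P.arg with hθ
    have eP : (‖P‖ : ℂ) * Complex.exp (P.arg * Complex.I) = P := Complex.norm_mul_exp_arg_mul_I P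
    have eR : (‖Q / P‖ : ℂ) * Complex.exp ((Q / P).arg * Complex.I) = Q / P := Complex.norm_mul_exp_arg_mul_I _
    have f1 : Complex.exp (θ * Complex.I) * P = ‖P‖ * Complex.exp ((π / 2 + κ : ℝ) * Complex.I) := by
      conv_lhs => rw [← eP]
      rw [mul_left_comm, ← Complex.exp_add, ← add_mul]
      congr 3
      rw [hθ]; push_cast; ring
    have f2 : Complex.exp (θ * Complex.I) * Q = ‖Q‖ * Complex.exp ((3 * π / 2 - κ : ℝ) * Complex.I) := by
      have : Q = P * (Q / P) := by field_simp
      conv_lhs => rw [this, ← mul_assoc, f1, ← eR, harg]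
      rw [norm_div]
      have hPc : (‖P‖ : ℂ) ≠ 0 := by exact_mod_cast hPn.ne'
      rw [show (‖P‖ : ℂ) * Complex.exp ((π / 2 + κ : ℝ) * Complex.I) * (((‖Q‖ / ‖P‖ : ℝ) : ℂ) *
        Complex.exp (((π - 2 * κ : ℝ) : ℂ) * Complex.I)) = (‖P‖ : ℂ) * ((‖Q‖ / ‖P‖ : ℝ) : ℂ) *
        (Complex.exp ((π / 2 + κ : ℝ) * Complex.I) * Complex.exp (((π - 2 * κ : ℝ) : ℂ) * Complex.I)) by ring,
        ← Complex.exp_add, ← add_mul]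
      congr 1
      · push_cast; field_simp
      · congr 2; push_cast; ring
    refine ⟨rotation (Circle.exp θ), ‖P‖, ‖Q‖, hPn, hQn, ?_, ?_⟩
    · rw [rotation_apply, Circle.coe_exp, f1, Complex.exp_mul_I, ← Complex.ofReal_cos, ← Complex.ofReal_sin,
        show π / 2 + κ = κ + π / 2 by ring, Real.cos_add_pi_div_two, Real.sin_add_pi_div_two]
      apply Complex.ext <;> simp [-Complex.ofReal_cos, -Complex.ofReal_sin]
    · have c1 : Real.cos (3 * π / 2 - κ) = - Real.sin κ := by
        rw [show 3 * π / 2 - κ = π - (κ - π / 2) by ring, Real.cos_pi_sub, Real.cos_sub_pi_div_two]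
      have c2 : Real.sin (3 * π / 2 - κ) = - Real.cos κ := by
        rw [show 3 * π / 2 - κ = π - (κ - π / 2) by ring, Real.sin_pi_sub, Real.sin_sub_pi_div_two]
      rw [rotation_apply, Circle.coe_exp, f2, Complex.exp_mul_I, ← Complex.ofReal_cos, ← Complex.ofReal_sin, c1, c2]
      apply Complex.ext <;> simp [-Complex.ofReal_cos, -Complex.ofReal_sin]
  rw [InnerProductGeometry.angle_comm, Complex.angle_eq_abs_arg hQ hP] at hang
  rcases abs_choice (Q / P).arg with h | h
  · exact main P Q hP hQ (by rw [← h, hang])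
  · have hne : (Q / P).arg ≠ π := by
      intro h'; rw [h'] at h; rw [h', abs_of_pos Real.pi_pos] at hang; linarith
    obtain ⟨f, a, b, ha, hb, e1, e2⟩ := main ((starRingEnd ℂ) P) ((starRingEnd ℂ) Q) (by simpa using hP) (by simpa using hQ)
      (by rw [← map_div₀, Complex.arg_conj, if_neg hne, ← h, hang])
    exact ⟨Complex.conjLIE.trans f, a, b, ha, hb, by simpa using e1, by simpa using e2⟩

lemma dom_open (κ ω₁ h₁ ω₂ h₂ : ℝ) : IsOpen (dom κ ω₁ h₁ ω₂ h₂) :=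
  (sec_open κ).inter ((isOpen_lt continuous_const (ll_cont ω₁ h₁)).inter (isOpen_lt continuous_const (ll_cont ω₂ h₂)))

theorem hardy_region {κ α lam ν : ℝ} {g g' : ℝ → ℝ} (H : HalfProfile κ α lam ν g g') (hα1 : α ≤ 1)
    {a b : ℝ} (ha : 0 < a) (hb : 0 < b) {A B C : ℂ}
    (hA : A = ⟨-(a * Real.sin κ), a * Real.cos κ⟩) (hB : B = ⟨-(b * Real.sin κ), -(b * Real.cos κ)⟩)
    {W : Set ℂ} (hW : IsOpen W) (hbd : Bornology.IsBounded W) (hfne : (frontier W).Nonempty)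
    (hf : ∀ w ∈ frontier W, w ∈ segment ℝ 0 A ∨ w ∈ segment ℝ 0 B ∨ w ∈ segment ℝ A C ∨ w ∈ segment ℝ B C)
    (hpos : ∃ r : ℝ, 0 < r ∧ (r : ℂ) ∈ W) (hneg : ∃ r : ℝ, 0 < r ∧ (-r : ℂ) ∉ W)
    {v : ℂ → ℝ} (hv : ContDiff ℝ 1 v) (hcs : HasCompactSupport v) (hvW : tsupport v ⊆ W) :
    α * (1 - α) * (∫ z, v z ^ 2 / Metric.infDist z (frontier W) ^ 2) ≤
      ∫ z, (fderiv ℝ v z 1 ^ 2 + fderiv ℝ v z Complex.I ^ 2) := by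
  obtain ⟨ω₁, h₁, ω₂, h₂, hω₁, hω₂, hsub, hd⟩ := geo H.κpos H.κlt ha hb hA hB hW hbd hf hpos hneg
  have hvD := hvW.trans hsub
  refine le_trans ?_ (hardy_corner H hα1 hω₁ hω₂ hv hcs hvD)
  have hU := dom_open κ ω₁ h₁ ω₂ h₂
  have hmpos : ∀ z ∈ dom κ ω₁ h₁ ω₂ h₂, 0 < min (dl κ z) (min (ll ω₁ h₁ z) (ll ω₂ h₂ z)) := fun z hz =>
    lt_min (dl_pos H.κpos hz.1) (lt_min hz.2.1 hz.2.2)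
  have cdl : ContinuousOn (dl κ) (dom κ ω₁ h₁ ω₂ h₂) := by
    have : ContinuousOn (fun z : ℂ => aa κ z.arg) (dom κ ω₁ h₁ ω₂ h₂) :=
      (aa_cont κ).comp_continuousOn (arg_contOn.mono fun z hz => hz.1.1)
    exact continuous_norm.continuousOn.mul (Real.continuous_cos.comp_continuousOn this)
  have cm : ContinuousOn (fun z => min (dl κ z) (min (ll ω₁ h₁ z) (ll ω₂ h₂ z))) (dom κ ω₁ h₁ ω₂ h₂) :=
    cdl.inf ((ll_cont _ _).continuousOn.inf (ll_cont _ _).continuousOn)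
  have i3 : Integrable (fun z => v z ^ 2 / min (dl κ z) (min (ll ω₁ h₁ z) (ll ω₂ h₂ z)) ^ 2) := by
    have := integrable_mul_of_tsupport (P := fun z => 1 / min (dl κ z) (min (ll ω₁ h₁ z) (ll ω₂ h₂ z)) ^ 2) hU
      hv.continuous hv.continuous hvD
      (continuousOn_const.div (cm.pow 2) (fun z hz => (pow_pos (hmpos z hz) 2).ne')) hcs
    refine this.congr (Filter.Eventually.of_forall fun z => ?_)
    simp only; ring
  refine mul_le_mul_of_nonneg_left ?_ (mul_nonneg H.αpos.le (by linarith))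
  refine integral_mono_of_nonneg (Filter.Eventually.of_forall fun z => by positivity) i3
    (Filter.Eventually.of_forall fun z => ?_)
  simp only
  by_cases hz : z ∈ tsupport v
  · have hp := hmpos z (hvD hz)
    have hle : min (dl κ z) (min (ll ω₁ h₁ z) (ll ω₂ h₂ z)) ≤ Metric.infDist z (frontier W) :=
      (Metric.le_infDist hfne).2 fun w hw => hd z (hvW hz) w hw
    gcongr
  · rw [image_eq_zero_of_notMem_tsupport hz]; simp

/-- Transport to a Euclidean plane. -/
theorem transport (e : ℂ ≃ₗᵢ[ℝ] EuclideanSpace ℝ (Fin 2)) (O : EuclideanSpace ℝ (Fin 2))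
    {Ω : Set (EuclideanSpace ℝ (Fin 2))} {c : ℝ} {u : EuclideanSpace ℝ (Fin 2) → ℝ}
    (hu : ContDiff ℝ 1 u) (hcs : HasCompactSupport u) (hsupp : tsupport u ⊆ Ω)
    (hmain : ∀ W : Set ℂ, W = (fun z => e z + O) ⁻¹' Ω → frontier W = (fun z => e z + O) ⁻¹' frontier Ω →
      ∀ v : ℂ → ℝ, ContDiff ℝ 1 v → HasCompactSupport v → tsupport v ⊆ W →
      c * (∫ z, v z ^ 2 / Metric.infDist z (frontier W) ^ 2) ≤
      ∫ z, (fderiv ℝ v z 1 ^ 2 + fderiv ℝ v z Complex.I ^ 2)) :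
    c * ∫ x in Ω, (u x) ^ 2 / (Metric.infDist x (frontier Ω)) ^ 2 ≤ ∫ x in Ω, ‖gradient u x‖ ^ 2 := by
  let ψ : ℂ ≃ᵢ EuclideanSpace ℝ (Fin 2) := e.toIsometryEquiv.trans (IsometryEquiv.addRight O)
  have hψ : ∀ z, ψ z = e z + O := fun z => rfl
  have hψ' : (fun z => e z + O) = ψ := rfl
  have hfr : frontier (ψ ⁻¹' Ω) = ψ ⁻¹' frontier Ω := (ψ.toHomeomorph.preimage_frontier Ω).symm
  have hmp : MeasurePreserving ψ := (measurePreserving_add_right volume O).comp e.measurePreserving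
  have hme : MeasurableEmbedding ψ := ψ.toHomeomorph.measurableEmbedding
  have hv : ContDiff ℝ 1 (u ∘ ψ) := hu.comp (e.contDiff.add contDiff_const)
  have hvc : HasCompactSupport (u ∘ ψ) := hcs.comp_homeomorph ψ.toHomeomorph
  have hvs : tsupport (u ∘ ψ) ⊆ ψ ⁻¹' Ω := by
    have := tsupport_comp_eq_preimage u ψ.toHomeomorph
    have h2 : tsupport (u ∘ ψ) = ψ ⁻¹' tsupport u := this
    rw [h2]; exact preimage_mono hsupp
  have key := hmain (ψ ⁻¹' Ω) rfl hfr (u ∘ ψ) hv hvc hvs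
  have e1 : ∫ x in Ω, (u x) ^ 2 / (Metric.infDist x (frontier Ω)) ^ 2 =
      ∫ z, (u ∘ ψ) z ^ 2 / Metric.infDist z (frontier (ψ ⁻¹' Ω)) ^ 2 := by
    rw [MeasureTheory.setIntegral_eq_integral_of_forall_compl_eq_zero, ← hmp.integral_comp hme]
    · congr 1
      ext z
      have : Metric.infDist (ψ z) (frontier Ω) = Metric.infDist z (frontier (ψ ⁻¹' Ω)) := by
        rw [hfr, ← Metric.infDist_image ψ.isometry, Set.image_preimage_eq _ ψ.surjective]
      rw [this]; rfl
    · intro x hx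
      rw [image_eq_zero_of_notMem_tsupport (fun h => hx (hsupp h))]; simp
  have e2 : ∫ x in Ω, ‖gradient u x‖ ^ 2 = ∫ z, (fderiv ℝ (u ∘ ψ) z 1 ^ 2 + fderiv ℝ (u ∘ ψ) z Complex.I ^ 2) := by
    rw [MeasureTheory.setIntegral_eq_integral_of_forall_compl_eq_zero, ← hmp.integral_comp hme]
    · congr 1
      ext z
      have hd : HasFDerivAt (u ∘ ψ) ((fderiv ℝ u (ψ z)).comp (e : ℂ →L[ℝ] EuclideanSpace ℝ (Fin 2))) z := by
        have h1 : HasFDerivAt ψ (e : ℂ →L[ℝ] EuclideanSpace ℝ (Fin 2)) z :=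
          (e.toContinuousLinearEquiv.hasFDerivAt).add_const O
        exact ((hu.differentiable (by norm_num)) (ψ z)).hasFDerivAt.comp z h1
      rw [hd.fderiv]
      have hin : ∀ w : ℂ, fderiv ℝ u (ψ z) (e w) = inner ℝ (e.symm (gradient u (ψ z))) w := by
        intro w
        rw [← inner_gradient_left, ← e.symm.inner_map_map]
        simp
      have a1 : ((fderiv ℝ u (ψ z)).comp (e : ℂ →L[ℝ] EuclideanSpace ℝ (Fin 2))) 1 = (e.symm (gradient u (ψ z))).re := by
        refine (hin 1).trans ?_
        rw [Complex.inner]; simp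
      have a2 : ((fderiv ℝ u (ψ z)).comp (e : ℂ →L[ℝ] EuclideanSpace ℝ (Fin 2))) Complex.I = (e.symm (gradient u (ψ z))).im := by
        refine (hin Complex.I).trans ?_
        rw [Complex.inner]; simp
      rw [a1, a2, ← e.symm.norm_map, ← Complex.normSq_eq_norm_sq, Complex.normSq_apply]
      ring
    · intro x hx
      have : fderiv ℝ u x = 0 := by
        have : x ∉ tsupport (fderiv ℝ u) := fun h => hx (hsupp (tsupport_fderiv_subset ℝ h))
        exact image_eq_zero_of_notMem_tsupport this
      unfold gradient
      rw [this]; simp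
  rw [e1, e2]
  exact key

end HQ
end

namespace HQ

theorem hardy_points {κ α lam ν : ℝ} {g g' : ℝ → ℝ} (H : HalfProfile κ α lam ν g g') (hα1 : α ≤ 1)
    {Ω : Set E2} {O A B C : E2} (hΩ : IsOpen Ω) (hbd : Bornology.IsBounded Ω) (hfne : (frontier Ω).Nonempty)
    (hf : ∀ w ∈ frontier Ω, w ∈ segment ℝ O A ∨ w ∈ segment ℝ O B ∨ w ∈ segment ℝ A C ∨ w ∈ segment ℝ B C)
    (hAO : A ≠ O) (hBO : B ≠ O) (hang : EuclideanGeometry.angle A O B = π - 2 * κ)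
    {ε : ℝ} (hε : 0 < ε) (hball : Metric.ball O ε ∩ Ω = Metric.ball O ε \ wedge O A B)
    {u : E2 → ℝ} (hu : ContDiff ℝ 1 u) (hcs : HasCompactSupport u) (hsupp : tsupport u ⊆ Ω) :
    α * (1 - α) * ∫ x in Ω, (u x) ^ 2 / (Metric.infDist x (frontier Ω)) ^ 2 ≤ ∫ x in Ω, ‖gradient u x‖ ^ 2 := by
  have h0 := H.κpos
  have h1 := H.κlt
  have hs : 0 < Real.sin κ := Real.sin_pos_of_pos_of_lt_pi h0 (by linarith [Real.pi_pos])
  let e0 : ℂ ≃ₗᵢ[ℝ] E2 := Complex.orthonormalBasisOneI.repr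
  have hang' : InnerProductGeometry.angle (e0.symm (A - O)) (e0.symm (B - O)) = π - 2 * κ := by
    rw [← hang]
    exact LinearIsometry.angle_map e0.symm.toLinearIsometry (A - O) (B - O)
  obtain ⟨f, a, b, ha, hb, eA, eB⟩ := rot_exists (by simpa [sub_eq_zero] using hAO) (by simpa [sub_eq_zero] using hBO) h0 h1 hang'
  let e : ℂ ≃ₗᵢ[ℝ] E2 := f.symm.trans e0
  have eA' : e.symm (A - O) = ⟨-(a * Real.sin κ), a * Real.cos κ⟩ := eA
  have eB' : e.symm (B - O) = ⟨-(b * Real.sin κ), -(b * Real.cos κ)⟩ := eB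
  have hseg : ∀ (X Y : E2) (w : ℂ), e w + O ∈ segment ℝ X Y → w ∈ segment ℝ (e.symm (X - O)) (e.symm (Y - O)) := by
    rintro X Y w ⟨s, t, hs', ht', hst, h⟩
    refine ⟨s, t, hs', ht', hst, ?_⟩
    apply e.injective
    simp only [map_add, map_smul, LinearIsometryEquiv.apply_symm_apply]
    rw [← add_right_cancel_iff (a := O), ← h, smul_sub, smul_sub]
    have : O = s • O + t • O := by rw [← add_smul, hst, one_smul]
    nth_rewrite 3 [this]
    abel
  have hiso : Isometry (fun z => e z + O) := (e.toIsometryEquiv.trans (IsometryEquiv.addRight O)).isometry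
  have hsurj : Function.Surjective (fun z => e z + O) := (e.toIsometryEquiv.trans (IsometryEquiv.addRight O)).surjective
  refine transport e O hu hcs hsupp ?_
  intro W hW hfW v hv hvc hvW
  have hball' : ∀ r : ℝ, |r| < ε → ((r : ℂ) ∈ W ↔ e r + O ∉ wedge O A B) := by
    intro r hr
    have hm : e r + O ∈ Metric.ball O ε := by
      rw [Metric.mem_ball, dist_eq_norm, add_sub_cancel_right, e.norm_map, Complex.norm_real]
      exact hr
    have := Set.ext_iff.1 hball (e r + O)
    simp only [mem_inter_iff, mem_sdiff, hm, true_and] at this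
    rw [hW]
    exact this
  have hεr : |ε / 2| < ε := by rw [abs_of_pos (by positivity)]; linarith
  have hεr' : |-(ε / 2)| < ε := by rw [abs_neg]; exact hεr
  refine hardy_region H hα1 ha hb eA' eB' (C := e.symm (C - O)) (hW ▸ hΩ.preimage hiso.continuous)
    (hW ▸ hiso.antilipschitz.isBounded_preimage hbd) (by rw [hfW]; exact hfne.preimage hsurj) ?_ ?_ ?_ hv hvc hvW
  · intro w hw
    rw [hfW] at hw
    have hO : e.symm (O - O) = 0 := by simp
    rcases hf _ hw with h | h | h | h
    · left; have := hseg _ _ _ h; rwa [hO] at this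
    · right; left; have := hseg _ _ _ h; rwa [hO] at this
    · right; right; left; exact hseg _ _ _ h
    · right; right; right; exact hseg _ _ _ h
  · refine ⟨ε / 2, by positivity, (hball' _ hεr).2 ?_⟩
    rintro ⟨s, t, hs', ht', h⟩
    have h2 : ((ε / 2 : ℝ) : ℂ) = s • e.symm (A - O) + t • e.symm (B - O) := by
      apply e.injective
      simp only [map_add, map_smul, LinearIsometryEquiv.apply_symm_apply]
      rw [← add_right_cancel_iff (a := O), h]; abel
    have h3 := congrArg Complex.re h2
    rw [eA', eB'] at h3
    simp only [Complex.add_re, Complex.real_smul, Complex.re_ofReal_mul, Complex.ofReal_re] at h3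
    have : 0 ≤ s * (a * Real.sin κ) := by positivity
    have : 0 ≤ t * (b * Real.sin κ) := by positivity
    linarith
  · refine ⟨ε / 2, by positivity, ?_⟩
    have := (hball' _ hεr').not
    rw [not_not] at this
    rw [← Complex.ofReal_neg, this]
    refine ⟨ε / 2 / (2 * (a * Real.sin κ)), ε / 2 / (2 * (b * Real.sin κ)), by positivity, by positivity, ?_⟩
    have h2 : ((-(ε / 2) : ℝ) : ℂ) = (ε / 2 / (2 * (a * Real.sin κ))) • e.symm (A - O) +
        (ε / 2 / (2 * (b * Real.sin κ))) • e.symm (B - O) := by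
      rw [eA', eB']
      apply Complex.ext
      · simp only [Complex.add_re, Complex.real_smul, Complex.re_ofReal_mul, Complex.ofReal_re]
        field_simp; ring
      · simp only [Complex.add_im, Complex.real_smul, Complex.im_ofReal_mul, Complex.ofReal_im]
        field_simp; ring
    rw [h2]
    simp only [map_add, map_smul, LinearIsometryEquiv.apply_symm_apply]
    abel

lemma profile_exists {β βcr c : ℝ} (hβ : π < β) (hβ2 : β < 2 * π) (hβcr : isBetaCr βcr) (hc : isHardyConst βcr β c) :
    ∃ α lam ν g g', HalfProfile ((β - π) / 2) α lam ν g g' ∧ α ≤ 1 ∧ c ≤ α * (1 - α) := by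
  have hpi := Real.pi_pos
  have hc4 : 0 < c ∧ c ≤ 1 / 4 := by
    rcases hc with ⟨_, rfl⟩ | ⟨_, h, _⟩
    · norm_num
    · exact h
  rcases lt_or_ge ((β - π) / 2) (π / 4) with hk | hk
  · obtain ⟨lam, ν, g, g', H⟩ := halfProfile_small (κ := (β - π) / 2) (by linarith) hk
    exact ⟨1 / 2, lam, ν, g, g', H, by norm_num, by linarith [hc4.2]⟩
  · set s := √(1 - 4 * c) with hs
    have hs0 : 0 ≤ s := Real.sqrt_nonneg _
    have hs2 : s ^ 2 = 1 - 4 * c := Real.sq_sqrt (by linarith [hc4.2])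
    have hs1 : s < 1 := by nlinarith [hc4.1]
    have hα : (1 + s) / 2 * (1 - (1 + s) / 2) = c := by nlinarith
    have hK : √c * Real.tan (√c * ((β - π) / 2)) ≤
        2 * (Real.Gamma (((1 + s) / 2 + 1) / 2) / Real.Gamma ((1 + s) / 2 / 2)) ^ 2 := by
      rw [show ((1 + s) / 2 + 1) / 2 = (3 + s) / 4 by ring, show (1 + s) / 2 / 2 = (1 + s) / 4 by ring]
      rcases hc with ⟨hle, hc⟩ | ⟨_, _, h⟩
      · have hs' : s = 0 := by rw [hs, hc]; norm_num
        have hq : √c = 1 / 2 := by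
          rw [hc, show (1 / 4 : ℝ) = (1 / 2) ^ 2 by norm_num, Real.sqrt_sq (by norm_num)]
        rw [hs', hq, add_zero, add_zero]
        obtain ⟨⟨hb1, hb2⟩, hb3⟩ := hβcr
        have : Real.tan (1 / 2 * ((β - π) / 2)) ≤ Real.tan ((βcr - π) / 4) := by
          rw [show 1 / 2 * ((β - π) / 2) = (β - π) / 4 by ring]
          rcases eq_or_lt_of_le hle with h | h
          · rw [h]
          · exact (Real.tan_lt_tan_of_lt_of_lt_pi_div_two (by linarith) (by linarith) (by linarith)).le
        linarith
      · exact h.le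
    obtain ⟨lam, ν, g, g', H⟩ := halfProfile_large hk (by linarith) hc4.1 (by linarith : (1:ℝ) / 2 ≤ (1 + s) / 2)
      (by linarith) hα hK
    exact ⟨(1 + s) / 2, lam, ν, g, g', H, by linarith, hα.ge⟩

end HQ

/-- The Hardy inequality with constant `c_β` holds on any non-convex quadrilateral with
reflex interior angle `β`. -/
theorem hardy_inequality_nonconvex_quadrilateral
    (Ω : Set E2) (β βcr cβ : ℝ)
    (hΩ : IsNonconvexQuadrilateral Ω β)
    (hβcr : isBetaCr βcr)
    (hcβ : isHardyConst βcr β cβ)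
    (u : E2 → ℝ) (hu : ContDiff ℝ (⊤ : ℕ∞) u) (hcs : HasCompactSupport u)
    (hsupp : tsupport u ⊆ Ω) :
    cβ * ∫ x in Ω, (u x) ^ 2 / (Metric.infDist x (frontier Ω)) ^ 2 ≤
      ∫ x in Ω, ‖gradient u x‖ ^ 2 := by

  obtain ⟨hop, hbd, hne, hβ, hβ2, v, hinj, hfr, -, -, i₀, ⟨hang, ε, hε, hball⟩, -⟩ := hΩ
  obtain ⟨α, lam, ν, g, g', H, hα1, hcα⟩ := HQ.profile_exists hβ hβ2 hβcr hcβ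
  have hu1 : ContDiff ℝ 1 u := hu.of_le (by exact_mod_cast le_top)
  have key := HQ.hardy_points H hα1 (O := v i₀) (A := v (i₀ - 1)) (B := v (i₀ + 1)) (C := v (i₀ + 2)) hop hbd
    ⟨v 0, by rw [hfr]; exact mem_iUnion.2 ⟨0, left_mem_segment ℝ _ _⟩⟩ (by
      intro w hw
      rw [hfr] at hw
      obtain ⟨i, hi⟩ := mem_iUnion.1 hw
      have hcase : i = i₀ ∨ i = i₀ + 1 ∨ i = i₀ + 2 ∨ i = i₀ - 1 := by
        clear * - ; revert i i₀; decide
      rcases hcase with rfl | rfl | rfl | rfl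
      · right; left; exact hi
      · right; right; right
        rwa [show i₀ + 1 + 1 = i₀ + 2 by clear * - ; revert i₀; decide] at hi
      · right; right; left
        rw [segment_symm]
        rwa [show i₀ + 2 + 1 = i₀ - 1 by clear * - ; revert i₀; decide] at hi
      · left
        rw [segment_symm]
        rwa [sub_add_cancel] at hi)
    (fun h => by
      have := hinj h
      clear * - this; revert i₀; decide)
    (fun h => by
      have := hinj h
      clear * - this; revert i₀; decide)
    (by rw [hang]; ring) hε hball hu1 hcs hsupp
  refine le_trans (mul_le_mul_of_nonneg_right hcα ?_) key
  exact integral_nonneg fun x => by positivity
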